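/- arXiv:2402.02575 — 2 statements merged into one kernel-verified Lean document; each statement's English description precedes it below -/
import Mathlib

section
/- For every ε > 0 there exists an fiid labelling f : X → (V → Fin 5) of the 6-regular tree T_6 (where 0, 1, 2, 3 are colors and 4 is 'red') such that: (1) for every vertex v, μ({x : f(x)(v) = 4}) < ε; (2) for μ-a.e. x, every connected component of the subgraph of G induced on the set B_1(f(x)⁻¹(4)) = {v : f(x)(v) = 4, or some neighbour u of v has f(x)(u) = 4} is finite; and (3) for μ-a.e. x, every vertex v with f(x)(v) ≠ 4 satisfies f(x)(u) ≠ f(x)(v) for every neighbour u of v. -/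
open MeasureTheory

/-!
The labelling is a limit of fiid labellings by the four colours, holes, and red vertices of levels
`0, 1, 2, …`, starting from the labelling by holes alone. No coloured vertex has a neighbour of its
own colour, any two red vertices are at distance at least `4`, and any two of level `k` at distance
at least `C (k + 1) (k + 2)`, where `C` is a large constant.

At stage `j`, give a labelling the weight two for each hole and one for each red vertex of level
`j`, and perform moves that change the labels near one vertex and lower the weight. Moves centred
far apart can be performed simultaneously, so by mass transport each round lowers the expected
weight at a vertex by a fixed multiple of the probability that a move is available, and after
finitely many rounds this probability is as small as we please.

A hole can be shifted along non-backtracking paths, called rays. Suppose that there is no move at a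
hole. As a vertex has six neighbours and there are only four colours, its rays can always be
extended, for otherwise the hole could be shifted to the end of the ray and coloured. Moreover every
position on a ray is close to a red vertex, for otherwise the hole shifted there could be filled
with red of level `j`. Red vertices of lower levels are too sparse to account for more than half of
the positions on a long ray, so the others are close to red of level `j`. Rays of different such
holes are disjoint, since otherwise one hole could be shifted onto the other one's ray and the two
merged. By mass transport the holes are then far rarer than the red vertices of level `j`, so the
probability of a hole decays fast enough for the changes between successive stages to be summable.
By Borel–Cantelli the limit exists almost surely and has no holes. Its red vertices of level `k`
have density at most `2 / (C (k + 1) (k + 2))`, which telescopes to a total of `2 / C`, and the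
`1`-ball around the red set splits into the finite `1`-balls around its vertices.
-/

open scoped ENNReal

/-! ### Regular trees -/

section Tree

variable {V : Type*} {G : SimpleGraph V}

lemma eq_of_adj_of_dist_add_one (hG : G.IsTree) {r w a b : V} (ha : G.Adj a w) (hb : G.Adj b w)
    (hda : G.dist r a + 1 = G.dist r w) (hdb : G.dist r b + 1 = G.dist r w) : a = b := by
  obtain ⟨p, -, hp⟩ := hG.connected.exists_path_of_dist r a
  obtain ⟨q, -, hq⟩ := hG.connected.exists_path_of_dist r b
  have hp' : (p.concat ha).IsPath :=
    SimpleGraph.Walk.isPath_of_length_eq_dist _ (by rw [SimpleGraph.Walk.length_concat, hp, hda])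
  have hq' : (q.concat hb).IsPath :=
    SimpleGraph.Walk.isPath_of_length_eq_dist _ (by rw [SimpleGraph.Walk.length_concat, hq, hdb])
  have heq : p.concat ha = q.concat hb :=
    congrArg Subtype.val ((hG.isAcyclic.subsingleton_path r w).elim ⟨_, hp'⟩ ⟨_, hq'⟩)
  simpa using congrArg SimpleGraph.Walk.penultimate heq

lemma exists_adj_dist_add_one (hG : G.IsTree) {r w : V} (hne : r ≠ w) :
    ∃ a, G.Adj a w ∧ G.dist r a + 1 = G.dist r w := by
  obtain ⟨p, -, hp⟩ := hG.connected.exists_path_of_dist r w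
  have hadj := p.adj_penultimate fun hn => hne hn.eq
  have hle : G.dist r p.penultimate ≤ p.length - 1 := by
    simpa using SimpleGraph.dist_le p.dropLast
  have hpos := hG.connected.pos_dist_of_ne hne
  exact ⟨p.penultimate, hadj, by
    rcases hG.dist_eq_dist_add_one_of_adj r hadj with h | h <;> omega⟩

lemma exists_parent (hG : G.IsTree) (r : V) : ∃ parent : V → V, parent r = r ∧
    (∀ w, w ≠ r → G.Adj (parent w) w ∧ G.dist r (parent w) + 1 = G.dist r w) ∧
    ∀ a w, G.Adj a w → (w ≠ r ∧ parent w = a) ∨ (a ≠ r ∧ parent a = w) := by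
  classical
  choose! parent hparent using fun w (hw : w ≠ r) => exists_adj_dist_add_one hG hw.symm
  have parent_eq : ∀ a w, G.Adj a w → G.dist r w = G.dist r a + 1 → w ≠ r ∧ parent w = a := by
    intro a w ha hd
    have hw : w ≠ r := by rintro rfl; simp at hd
    exact ⟨hw, eq_of_adj_of_dist_add_one hG (hparent w hw).1 ha (hparent w hw).2 hd.symm⟩
  refine ⟨Function.update parent r r, by simp, fun w hw => ?_, fun a w haw => ?_⟩
  · simpa [hw] using hparent w hw
  · rcases hG.dist_eq_dist_add_one_of_adj r haw with h | h
    · obtain ⟨ha, hpa⟩ := parent_eq w a haw.symm h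
      exact .inr ⟨ha, by rwa [Function.update_of_ne ha]⟩
    · obtain ⟨hw, hpw⟩ := parent_eq a w haw h
      exact .inl ⟨hw, by rwa [Function.update_of_ne hw]⟩

/-- `p 0, …, p n` is a walk in `G` that never immediately returns along the edge it has just
used. Only the values of `p` up to `n` matter. -/
structure IsNonBacktracking (G : SimpleGraph V) (p : ℕ → V) (n : ℕ) : Prop where
  adj : ∀ i < n, G.Adj (p i) (p (i + 1))
  ne : ∀ i, i + 2 ≤ n → p (i + 2) ≠ p i

namespace IsNonBacktracking

variable {p : ℕ → V} {n i k : ℕ}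

lemma dist_add (hG : G.IsTree) (hp : IsNonBacktracking G p n) (i k : ℕ) (hk : i + k ≤ n) :
    G.dist (p i) (p (i + k)) = k := by
  induction k using Nat.twoStepInduction with
  | zero => simp
  | one => exact SimpleGraph.dist_eq_one_iff_adj.mpr (hp.adj i (by omega))
  | more k ih₀ ih₁ =>
    have h₀ := ih₀ (by omega)
    have h₁ := ih₁ (by omega)
    have a₁ := hp.adj (i + k) (by omega)
    have a₂ := hp.adj (i + k + 1) (by omega)
    rw [← add_assoc] at h₁
    change G.dist (p i) (p (i + k + 1 + 1)) = k + 2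
    rcases hG.dist_eq_dist_add_one_of_adj (p i) a₂ with h₂ | h₂
    · exact absurd (eq_of_adj_of_dist_add_one hG a₂.symm a₁ h₂.symm (by rw [h₀, h₁]))
        (hp.ne (i + k) (by omega))
    · rw [h₂, h₁]

lemma dist_eq (hG : G.IsTree) (hp : IsNonBacktracking G p n) (hik : i ≤ k) (hk : k ≤ n) :
    G.dist (p i) (p k) = k - i := by
  simpa [Nat.add_sub_cancel' hik] using hp.dist_add hG i (k - i) (by omega)

lemma injective (hG : G.IsTree) (hp : IsNonBacktracking G p n) (hi : i ≤ n) (hk : k ≤ n)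
    (h : p i = p k) : i = k := by
  wlog hik : i ≤ k generalizing i k
  · exact (this hk hi h.symm (by omega)).symm
  · have := hp.dist_eq hG hik hk
    rw [h, SimpleGraph.dist_self] at this
    omega

end IsNonBacktracking

lemma exists_isNonBacktracking (hG : G.IsTree) (u v : V) :
    ∃ p : ℕ → V, IsNonBacktracking G p (G.dist u v) ∧ p 0 = u ∧ p (G.dist u v) = v := by
  obtain ⟨w, hw, hl⟩ := hG.connected.exists_path_of_dist u v
  refine ⟨w.getVert, ⟨fun i hi => w.adj_getVert_succ (by omega), fun i hi he => ?_⟩,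
    by simp, by rw [← hl]; simp⟩
  have := hw.getVert_injOn (by simp; omega) (by simp; omega) he
  omega

lemma dist_map_of_locally_injective (hG : G.IsTree) {φ : V → V}
    (hadj : ∀ ⦃a b⦄, G.Adj a b → G.Adj (φ a) (φ b))
    (hinj : ∀ w, Set.InjOn φ (G.neighborSet w)) (a b : V) :
    G.dist (φ a) (φ b) = G.dist a b := by
  obtain ⟨p, hp, rfl, hb⟩ := exists_isNonBacktracking hG a b
  have hφp : IsNonBacktracking G (φ ∘ p) (G.dist (p 0) b) :=
    ⟨fun i hi => hadj (hp.adj i hi), fun i hi he => hp.ne i hi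
      (hinj (p (i + 1)) (hp.adj (i + 1) (by omega)) (hp.adj i (by omega)).symm he)⟩
  simpa [hb] using hφp.dist_eq hG (Nat.zero_le _) le_rfl

lemma dist_iso (hG : G.IsTree) (φ : G ≃g G) (u v : V) : G.dist (φ u) (φ v) = G.dist u v :=
  dist_map_of_locally_injective hG (fun _ _ h => φ.map_adj_iff.mpr h)
    (fun _ => φ.injective.injOn) u v

/-- A covering map of a tree by itself is an automorphism. -/
lemma exists_iso_of_bijOn_neighborSet (hG : G.IsTree) (φ : V → V)
    (hφ : ∀ w, Set.BijOn φ (G.neighborSet w) (G.neighborSet (φ w))) :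
    ∃ ψ : G ≃g G, ⇑ψ = φ := by
  have hdist := dist_map_of_locally_injective hG (fun a _ h => (hφ a).mapsTo h)
    fun w => (hφ w).injOn
  have hinj : φ.Injective := fun a b hab => by
    rw [← hG.connected.dist_eq_zero_iff, ← hdist, hab, SimpleGraph.dist_self]
  have hsurj : φ.Surjective := fun y => by
    obtain ⟨a⟩ := hG.connected.nonempty
    have hreach : Relation.ReflTransGen G.Adj (φ a) y :=
      (SimpleGraph.reachable_iff_reflTransGen _ _).mp (hG.connected.preconnected _ _)
    induction hreach with
    | refl => exact ⟨a, rfl⟩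
    | tail _ hbc ih =>
      obtain ⟨b, rfl⟩ := ih
      obtain ⟨c, -, hc⟩ := (hφ b).surjOn hbc
      exact ⟨c, hc⟩
  refine ⟨⟨Equiv.ofBijective φ ⟨hinj, hsurj⟩, fun {a b} => ?_⟩, rfl⟩
  change G.Adj (φ a) (φ b) ↔ G.Adj a b
  rw [← SimpleGraph.dist_eq_one_iff_adj, hdist, SimpleGraph.dist_eq_one_iff_adj]

end Tree

/-- `G` is the `d`-regular tree. Stating the degrees through `Set.encard` makes the
neighbourhoods finite. -/
structure IsRegularTree {V : Type*} (G : SimpleGraph V) (d : ℕ) : Prop where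
  isTree : G.IsTree
  encard_neighborSet : ∀ v, (G.neighborSet v).encard = d

open Classical in
/-- The closed ball of radius `r` around `v`, as a `Finset`; it is `∅` if that ball is infinite. -/
noncomputable def closedBall {V : Type*} (G : SimpleGraph V) (v : V) (r : ℕ) : Finset V :=
  if h : {w | G.dist v w ≤ r}.Finite then h.toFinset else ∅

lemma exists_bijOn_eqOn {α : Type*} {s t T : Set α} {τ : α → α} (hs : s.Finite)
    (hst : s.encard = t.encard) (hT : T ⊆ s) (hmaps : Set.MapsTo τ T t) (hinj : Set.InjOn τ T) :
    ∃ e : α → α, Set.BijOn e s t ∧ Set.EqOn e τ T := by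
  classical
  rcases isEmpty_or_nonempty α with hα | hα
  · exact ⟨τ, by simp [Set.eq_empty_of_isEmpty], fun _ _ => rfl⟩
  have hdiff : (s \ T).encard = (t \ τ '' T).encard := by
    rw [← ENat.add_left_injective_of_ne_top (hs.subset hT).encard_lt_top.ne |>.eq_iff,
      Set.encard_sdiff_add_encard_of_subset hT, hst, ← hinj.encard_image,
      Set.encard_sdiff_add_encard_of_subset hmaps.image_subset]
  obtain ⟨e, he⟩ := hs.sdiff.exists_bijOn_of_encard_eq hdiff
  have hin : Set.EqOn (T.piecewise τ e) τ T := Set.piecewise_eqOn T τ e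
  have hout : Set.EqOn (T.piecewise τ e) e (s \ T) :=
    (Set.piecewise_eqOn_compl T τ e).mono fun _ h => h.2
  have hbT : Set.BijOn (T.piecewise τ e) T (τ '' T) := hinj.bijOn_image.congr hin.symm
  have hbs : Set.BijOn (T.piecewise τ e) (s \ T) (t \ τ '' T) := he.congr hout.symm
  refine ⟨T.piecewise τ e, ?_, hin⟩
  have hunion := hbT.union hbs <| (Set.injOn_union Set.disjoint_sdiff_right).mpr
    ⟨hbT.injOn, hbs.injOn, fun a ha b hb hab => (hbs.mapsTo hb).2 (hab ▸ hbT.mapsTo ha)⟩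
  rwa [Set.union_sdiff_cancel hT, Set.union_sdiff_cancel hmaps.image_subset] at hunion

namespace IsRegularTree

variable {V : Type*} {G : SimpleGraph V} {d : ℕ}

lemma finite_neighborSet (hG : IsRegularTree G d) (v : V) : (G.neighborSet v).Finite :=
  Set.finite_of_encard_eq_coe (hG.encard_neighborSet v)

lemma ncard_neighborSet (hG : IsRegularTree G d) (v : V) : (G.neighborSet v).ncard = d := by
  rw [Set.ncard, hG.encard_neighborSet, ENat.toNat_natCast]

lemma dist_triangle (hG : IsRegularTree G d) (a b c : V) :
    G.dist a c ≤ G.dist a b + G.dist b c :=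
  hG.isTree.connected.dist_triangle

section Balls

variable {v w : V} {r : ℕ}

lemma finite_and_ncard_dist_le (hG : IsRegularTree G d) (v : V) (r : ℕ) :
    {w | G.dist v w ≤ r}.Finite ∧ {w | G.dist v w ≤ r}.ncard ≤ (d + 1) ^ r := by
  classical
  induction r with
  | zero => simp [hG.isTree.connected.dist_eq_zero_iff]
  | succ r ih =>
    obtain ⟨hfin, hcard⟩ := ih
    have hsub : {w | G.dist v w ≤ r + 1} ⊆
        (hfin.toFinset.biUnion fun w => insert w (hG.finite_neighborSet w).toFinset :
          Finset V) := by
      intro w hw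
      rw [Finset.mem_coe, Finset.mem_biUnion]
      by_cases hvw : v = w
      · exact ⟨v, by simp, by simp [hvw]⟩
      · obtain ⟨a, ha, hdist⟩ := exists_adj_dist_add_one hG.isTree hvw
        refine ⟨a, ?_, by simp [ha]⟩
        simp only [Set.Finite.mem_toFinset, Set.mem_ofPred_eq] at hw ⊢
        omega
    refine ⟨(Finset.finite_toSet _).subset hsub, ?_⟩
    calc _ ≤ _ := Set.ncard_le_ncard hsub (Finset.finite_toSet _)
      _ ≤ hfin.toFinset.card * (d + 1) := by
        rw [Set.ncard_coe_finset]
        refine Finset.card_biUnion_le_card_mul _ _ _ fun w _ => (Finset.card_insert_le _ _).trans ?_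
        rw [← Set.ncard_eq_toFinset_card _ (hG.finite_neighborSet w), hG.ncard_neighborSet]
      _ ≤ (d + 1) ^ (r + 1) := by
        rw [← Set.ncard_eq_toFinset_card _ hfin, pow_succ]
        gcongr

@[simp] lemma mem_closedBall (hG : IsRegularTree G d) : w ∈ closedBall G v r ↔ G.dist v w ≤ r := by
  rw [closedBall, dif_pos (hG.finite_and_ncard_dist_le v r).1, Set.Finite.mem_toFinset,
    Set.mem_ofPred_eq]

lemma card_closedBall_le (hG : IsRegularTree G d) (v : V) (r : ℕ) :
    (closedBall G v r).card ≤ (d + 1) ^ r := by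
  have h := hG.finite_and_ncard_dist_le v r
  rw [closedBall, dif_pos h.1, ← Set.ncard_eq_toFinset_card _ h.1]
  exact h.2

lemma exists_adj_dist_eq_add_one (hG : IsRegularTree G d) (hd : 2 ≤ d) (v w : V) :
    ∃ a, G.Adj w a ∧ G.dist v a = G.dist v w + 1 := by
  by_contra! hc
  have hcloser : ∀ a, G.Adj w a → G.dist v a + 1 = G.dist v w := fun a ha =>
    ((hG.isTree.dist_eq_dist_add_one_of_adj v ha).resolve_right (hc a ha)).symm
  have hle : (G.neighborSet w).encard ≤ 1 := Set.encard_le_one_iff.mpr fun a b ha hb =>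
    eq_of_adj_of_dist_add_one hG.isTree ha.symm hb.symm (hcloser a ha) (hcloser b hb)
  rw [hG.encard_neighborSet] at hle
  norm_cast at hle
  omega

lemma exists_dist_eq (hG : IsRegularTree G d) (hd : 2 ≤ d) (v : V) (r : ℕ) :
    ∃ w, G.dist v w = r := by
  induction r with
  | zero => exact ⟨v, SimpleGraph.dist_self⟩
  | succ r ih =>
    obtain ⟨w, rfl⟩ := ih
    obtain ⟨a, -, ha⟩ := hG.exists_adj_dist_eq_add_one hd v w
    exact ⟨a, ha⟩

lemma lt_card_closedBall (hG : IsRegularTree G d) (hd : 2 ≤ d) (v : V) (r : ℕ) :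
    r < (closedBall G v r).card := by
  choose f hf using hG.exists_dist_eq hd v
  have hmaps : Set.MapsTo f (Finset.range (r + 1)) (closedBall G v r) := fun i hi => by
    rw [Finset.mem_coe, hG.mem_closedBall, hf]
    exact Nat.lt_succ_iff.mp (Finset.mem_range.mp hi)
  simpa using Finset.card_le_card_of_injOn f hmaps
    (Function.LeftInverse.injective hf).injOn

end Balls

/-! ### Extending partial automorphisms -/

lemma exists_bijOn_neighborSet (hG : IsRegularTree G d) (a b : V) (τ : V → V) (T : Set V) :
    ∃ e : V → V, Set.BijOn e (G.neighborSet a) (G.neighborSet b) ∧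
      (T ⊆ G.neighborSet a → Set.MapsTo τ T (G.neighborSet b) → Set.InjOn τ T →
        Set.EqOn e τ T) := by
  have hcard : (G.neighborSet a).encard = (G.neighborSet b).encard := by
    rw [hG.encard_neighborSet, hG.encard_neighborSet]
  by_cases h : T ⊆ G.neighborSet a ∧ Set.MapsTo τ T (G.neighborSet b) ∧ Set.InjOn τ T
  · obtain ⟨e, he, heT⟩ :=
      exists_bijOn_eqOn (hG.finite_neighborSet a) hcard h.1 h.2.1 h.2.2
    exact ⟨e, he, fun _ _ _ => heT⟩
  · have : Nonempty V := ⟨a⟩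
    obtain ⟨e, he⟩ := (hG.finite_neighborSet a).exists_bijOn_of_encard_eq hcard
    exact ⟨e, he, fun h₁ h₂ h₃ => absurd ⟨h₁, h₂, h₃⟩ h⟩

lemma exists_eq_of_parent (r y : V) (parent : V → V) (hr : parent r = r)
    (hparent : ∀ w, w ≠ r → G.dist r (parent w) < G.dist r w) (F : V → V → V → V) :
    ∃ φ : V → V, φ r = y ∧ ∀ w, w ≠ r → φ w = F w (φ (parent w)) (φ (parent (parent w))) := by
  classical
  have hparent₂ : ∀ w, w ≠ r → G.dist r (parent (parent w)) < G.dist r w := by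
    intro w hw
    by_cases h : parent w = r
    · simpa [h, hr] using hparent w hw
    · exact (hparent _ h).trans (hparent w hw)
  let step (w : V) (rec : ∀ a, G.dist r a < G.dist r w → V) : V :=
    if h : w = r then y else F w (rec _ (hparent w h)) (rec _ (hparent₂ w h))
  refine ⟨(measure (G.dist r)).wf.fix step, ?_, fun w hw => ?_⟩
  · rw [WellFounded.fix_eq]; exact dif_pos rfl
  · rw [WellFounded.fix_eq]; exact dif_neg hw

lemma exists_bijOn_neighborSet_extending (hG : IsRegularTree G d) {S : Set V} {σ parent : V → V}
    (hparent : ∀ a ∈ S, parent a ∈ S)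
    (hS : ∀ ⦃a c⦄, c ∈ S → a ∉ S → G.Adj a c → c = parent a)
    (hσ : ∀ ⦃a b⦄, a ∈ S → b ∈ S → G.Adj a b → G.Adj (σ a) (σ b)) (hσi : Set.InjOn σ S) :
    ∃ E : V → V → V → V → V,
      (∀ a b q, Set.BijOn (E a b q) (G.neighborSet a) (G.neighborSet b)) ∧
      (∀ a ∈ S, Set.EqOn (E a (σ a) (σ (parent a))) σ (G.neighborSet a ∩ S)) ∧
      ∀ a ∉ S, ∀ b q, G.Adj a (parent a) → G.Adj b q → E a b q (parent a) = q := by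
  classical
  choose e he heT using hG.exists_bijOn_neighborSet
  let T a : Set V := G.neighborSet a ∩ insert (parent a) S
  have hT : ∀ a, T a ⊆ G.neighborSet a := fun a => Set.inter_subset_left
  refine ⟨fun a b q => e a b (Function.update σ (parent a) q) (T a), fun a b q => he _ _ _ _,
    fun a ha => ?_, fun a ha b q hadj hbq => ?_⟩
  · have hTS : T a ⊆ S := fun c hc => hc.2.elim (fun h => h ▸ hparent a ha) id
    simp only [Function.update_eq_self]
    exact (heT a (σ a) σ (T a) (hT a) (fun c hc => hσ ha (hTS hc) hc.1) (hσi.mono hTS)).mono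
      (Set.inter_subset_inter_right _ (Set.subset_insert _ _))
  · have hTa : ∀ c ∈ T a, c = parent a := fun c hc => hc.2.elim id fun hcS => hS hcS ha hc.1
    have h := heT a b (Function.update σ (parent a) q) (T a) (hT a)
      (fun c hc => by simpa [hTa c hc] using hbq)
      (fun c hc c' hc' _ => (hTa c hc).trans (hTa c' hc').symm)
    simpa using h ⟨hadj, .inl rfl⟩

/-- A partial automorphism `σ` is extended outwards from `r`: the bijections between the
neighbourhoods of `a` and `φ a` are chosen compatibly with `σ` and with the already defined value
of `φ` at the parent of `a`. -/
theorem exists_iso_eqOn (hG : IsRegularTree G d) {r : V} {S : Set V} {σ : V → V} (hr : r ∈ S)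
    (hS : ∀ ⦃a w⦄, w ∈ S → G.Adj a w → G.dist r a + 1 = G.dist r w → a ∈ S)
    (hσ : ∀ ⦃a b⦄, a ∈ S → b ∈ S → G.Adj a b → G.Adj (σ a) (σ b)) (hσi : Set.InjOn σ S) :
    ∃ ψ : G ≃g G, Set.EqOn ψ σ S := by
  obtain ⟨parent, hpr, hparent, hadj⟩ := exists_parent hG.isTree r
  have hSparent : ∀ a ∈ S, parent a ∈ S := fun a ha => by
    by_cases har : a = r
    · rwa [har, hpr]
    · exact hS ha (hparent a har).1 (hparent a har).2
  obtain ⟨E, hE, hEin, hEout⟩ := hG.exists_bijOn_neighborSet_extending hSparent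
    (fun a c hc ha hac => (hadj a c hac).elim (fun h => absurd (h.2 ▸ hSparent c hc) ha)
      fun h => h.2.symm) hσ hσi
  obtain ⟨φ, hφr, hφ⟩ := exists_eq_of_parent r (σ r) parent hpr
    (fun w hw => Nat.lt_of_succ_le (hparent w hw).2.le) fun w b q => E (parent w) b q w
  have hφS : ∀ w ∈ S, φ w = σ w := fun w hw => by
    induction hn : G.dist r w using Nat.strong_induction_on generalizing w with
    | _ n ih =>
      subst hn
      by_cases hwr : w = r
      · rw [hwr, hφr]
      have hparent_lt := (hparent w hwr).2.le
      have hparent₂ : φ (parent (parent w)) = σ (parent (parent w)) := by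
        by_cases h : parent w = r
        · rw [h, hpr, hφr]
        · have := (hparent _ h).2.le
          exact ih _ (by omega) _ (hSparent _ (hSparent w hw)) rfl
      rw [hφ w hwr, ih _ hparent_lt _ (hSparent w hw) rfl, hparent₂]
      exact hEin _ (hSparent w hw) ⟨(hparent w hwr).1, hw⟩
  have hEφ : ∀ a c, G.Adj a c → E a (φ a) (φ (parent a)) c = φ c := fun a c hac => by
    rcases hadj a c hac with ⟨hc, rfl⟩ | ⟨ha, rfl⟩
    · exact (hφ c hc).symm
    · by_cases haS : a ∈ S
      · rw [hφS a haS, hφS _ (hSparent a haS)]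
        exact hEin a haS ⟨hac, hSparent a haS⟩
      · refine hEout a haS _ _ hac ?_
        rw [hφ a ha]
        exact SimpleGraph.Adj.symm ((hE _ _ _).mapsTo hac.symm)
  obtain ⟨ψ, hψ⟩ := exists_iso_of_bijOn_neighborSet hG.isTree φ fun a =>
    (hE _ _ _).congr fun c hc => hEφ a c hc
  exact ⟨ψ, fun w hw => (congrFun hψ w).trans (hφS w hw)⟩

theorem exists_iso_swap (hG : IsRegularTree G d) (u v : V) :
    ∃ ψ : G ≃g G, ψ u = v ∧ ψ v = u := by
  obtain ⟨p, hp, h0, hn⟩ := exists_isNonBacktracking hG.isTree u v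
  set n := G.dist u v
  have hdist : ∀ i ≤ n, G.dist u (p i) = i := fun i hi => by
    simpa [h0] using hp.dist_eq hG.isTree (Nat.zero_le i) hi
  have hreach : ∀ w ∈ p '' Set.Iic n, G.dist u w ≤ n ∧ p (G.dist u w) = w := by
    rintro _ ⟨i, hi, rfl⟩
    rw [hdist i hi]
    exact ⟨hi, rfl⟩
  have hclosed : ∀ ⦃a w⦄, w ∈ p '' Set.Iic n → G.Adj a w → G.dist u a + 1 = G.dist u w →
      a ∈ p '' Set.Iic n := by
    intro a w hw haw hd
    obtain ⟨hle, hpw⟩ := hreach w hw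
    have ha := hp.adj (G.dist u a) (by omega)
    rw [hd, hpw] at ha
    exact ⟨G.dist u a, by simp only [Set.mem_Iic]; omega, eq_of_adj_of_dist_add_one hG.isTree ha haw
      (by rw [hdist _ (by omega), hd]) hd⟩
  have hadj : ∀ ⦃a b⦄, a ∈ p '' Set.Iic n → b ∈ p '' Set.Iic n → G.Adj a b →
      G.Adj (p (n - G.dist u a)) (p (n - G.dist u b)) := by
    intro a b ha hb hab
    wlog h : G.dist u b = G.dist u a + 1 generalizing a b
    · exact (this hb ha hab.symm
        ((hG.isTree.dist_eq_dist_add_one_of_adj u hab).resolve_right h)).symm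
    have hle := (hreach b hb).1
    have hstep := hp.adj (n - G.dist u b) (by omega)
    rw [show n - G.dist u b + 1 = n - G.dist u a by omega] at hstep
    exact hstep.symm
  have hinj : Set.InjOn (fun w => p (n - G.dist u w)) (p '' Set.Iic n) := by
    intro a ha b hb hab
    obtain ⟨ha, hpa⟩ := hreach a ha
    obtain ⟨hb, hpb⟩ := hreach b hb
    have := hp.injective hG.isTree (Nat.sub_le _ _) (Nat.sub_le _ _) hab
    rw [← hpa, ← hpb, show G.dist u a = G.dist u b by omega]
  obtain ⟨ψ, hψ⟩ :=
    hG.exists_iso_eqOn (S := p '' Set.Iic n) ⟨0, Nat.zero_le _, h0⟩ hclosed hadj hinj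
  have hu : ψ u = p (n - G.dist u u) := hψ ⟨0, Nat.zero_le _, h0⟩
  have hv : ψ v = p (n - n) := hψ ⟨n, Set.self_mem_Iic, hn⟩
  exact ⟨ψ, by rw [hu, SimpleGraph.dist_self, Nat.sub_zero, hn], by rw [hv, Nat.sub_self, h0]⟩

end IsRegularTree

/-! ### Random seeds and mass transport -/

section Seed

variable {V Ω : Type*} {G : SimpleGraph V}

/-- `f` commutes with the automorphisms of `G`, written without inverses on the side of `f`. -/
def Equivariant {A : Type*} (G : SimpleGraph V) (f : (V → Ω) → V → A) : Prop :=
  ∀ (φ : G ≃g G) (x : V → Ω) (v : V), f (x ∘ φ.symm) (φ v) = f x v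

lemma Equivariant.map_comp_symm {A : Type*} {f : (V → Ω) → V → A} (hf : Equivariant G f)
    (φ : G ≃g G) (x : V → Ω) : f (x ∘ φ.symm) = f x ∘ φ.symm := by
  ext w
  simpa using hf φ x (φ.symm w)

lemma equivariant_of_imp {S : (V → Ω) → V → Prop}
    (h : ∀ (φ : G ≃g G) x v, S x v → S (x ∘ φ.symm) (φ v)) : Equivariant G S := fun φ x v => by
  refine propext ⟨fun hS => ?_, h φ x v⟩
  simpa [Function.comp_assoc, Function.comp_def] using h φ.symm _ _ hS

variable [MeasurableSpace Ω]

/-- The properties of an i.i.d. seed that the construction uses: its law is invariant under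
relabelling by automorphisms, and finitely many seeds can be told apart, up to small probability,
from finitely many of their bits. -/
structure IsSeparatingSeed (G : SimpleGraph V) (μ : Measure (V → Ω)) : Prop where
  measurePreserving : ∀ φ : G ≃g G, MeasurePreserving (fun x : V → Ω => x ∘ φ.symm) μ μ
  exists_separating : ∀ (s : Finset V) (η : ℝ≥0∞), η ≠ 0 →
    ∃ (n : ℕ) (κ : Ω → Fin n), Measurable κ ∧ μ {x | ¬ Set.InjOn (κ ∘ x) s} ≤ η

section InfinitePi

variable {ν : Measure Ω} [IsProbabilityMeasure ν]

lemma measurePreserving_comp_infinitePi (e : V ≃ V) :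
    MeasurePreserving (fun x : V → Ω => x ∘ e.symm) (Measure.infinitePi fun _ => ν)
      (Measure.infinitePi fun _ => ν) := by
  refine ⟨by fun_prop, ?_⟩
  convert Measure.infinitePi_map_piCongrLeft (X := fun _ : V => Ω) (μ := fun _ => ν) e using 2
  ext x u
  have h := MeasurableEquiv.piCongrLeft_apply_apply (β := fun _ : V => Ω) e x (e.symm u)
  rw [e.apply_symm_apply] at h
  exact h.symm

lemma infinitePi_collision_le {n : ℕ} {κ : Ω → Fin (n + 1)} (hκ : Measurable κ)
    (hν : ∀ q, ν (κ ⁻¹' {q}) ≤ (n + 1 : ℝ≥0∞)⁻¹) {a b : V} (hab : a ≠ b) :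
    (Measure.infinitePi fun _ : V => ν) {x | κ (x a) = κ (x b)} ≤ (n + 1 : ℝ≥0∞)⁻¹ := by
  classical
  have hsub : {x : V → Ω | κ (x a) = κ (x b)} ⊆
      ⋃ q, Set.pi (({a, b} : Finset V) : Set V) fun _ => κ ⁻¹' {q} := fun x hx => by
    simpa [eq_comm] using hx
  calc _ ≤ _ := measure_mono hsub
    _ ≤ ∑ q : Fin (n + 1), _ := measure_iUnion_fintype_le _ _
    _ ≤ ∑ _q : Fin (n + 1), (n + 1 : ℝ≥0∞)⁻¹ * (n + 1 : ℝ≥0∞)⁻¹ := by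
      refine Finset.sum_le_sum fun q _ => ?_
      rw [Measure.infinitePi_pi _ fun _ _ => hκ (measurableSet_singleton q), Finset.prod_pair hab]
      gcongr <;> exact hν q
    _ = (n + 1 : ℝ≥0∞)⁻¹ := by
      rw [Finset.sum_const, Finset.card_univ, Fintype.card_fin, nsmul_eq_mul, ← mul_assoc]
      push_cast
      rw [ENNReal.mul_inv_cancel (by simp) (by finiteness), one_mul]

theorem isSeparatingSeed_infinitePi (G : SimpleGraph V)
    (hν : ∀ n : ℕ, ∃ κ : Ω → Fin (n + 1), Measurable κ ∧
      ∀ q, ν (κ ⁻¹' {q}) ≤ (n + 1 : ℝ≥0∞)⁻¹) :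
    IsSeparatingSeed G (Measure.infinitePi fun _ : V => ν) := by
  classical
  refine ⟨fun φ => measurePreserving_comp_infinitePi φ.toEquiv, fun s η hη => ?_⟩
  obtain ⟨n, hn⟩ := ENNReal.exists_inv_nat_lt
    (ENNReal.div_ne_zero.mpr ⟨hη, ENNReal.natCast_ne_top s.offDiag.card⟩)
  obtain ⟨κ, hκ, hκν⟩ := hν n
  refine ⟨n + 1, κ, hκ, ?_⟩
  have hsub : {x : V → Ω | ¬ Set.InjOn (κ ∘ x) s} ⊆
      ⋃ p ∈ s.offDiag, {x | κ (x p.1) = κ (x p.2)} := fun x hx => by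
    simp only [Set.InjOn, Set.mem_ofPred_eq, not_forall] at hx
    obtain ⟨a, ha, b, hb, hab, hne⟩ := hx
    exact Set.mem_biUnion (x := (a, b)) (Finset.mem_offDiag.mpr ⟨ha, hb, hne⟩) hab
  calc _ ≤ _ := measure_mono hsub
    _ ≤ ∑ p ∈ s.offDiag, _ := measure_biUnion_finset_le _ _
    _ ≤ s.offDiag.card • (n + 1 : ℝ≥0∞)⁻¹ := Finset.sum_le_card_nsmul _ _ _ fun p hp =>
      infinitePi_collision_le hκ hκν (Finset.mem_offDiag.mp hp).2.2
    _ ≤ s.offDiag.card • (η / s.offDiag.card) := by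
      gcongr
      exact (ENNReal.inv_le_inv.mpr le_self_add).trans hn.le
    _ ≤ η := by rw [nsmul_eq_mul]; exact ENNReal.mul_div_le

end InfinitePi

lemma exists_quantiser_unitInterval (n : ℕ) : ∃ κ : ℝ → Fin (n + 1), Measurable κ ∧
    ∀ q, volume.restrict (Set.Icc (0 : ℝ) 1) (κ ⁻¹' {q}) ≤ (n + 1 : ℝ≥0∞)⁻¹ := by
  have hn : (0 : ℝ) < n + 1 := by positivity
  let κ (t : ℝ) : Fin (n + 1) := Fin.clamp ⌊(n + 1) * t⌋₊ n
  have hκ : Measurable κ :=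
    (measurable_of_countable fun k => Fin.clamp k n).comp
      (Nat.measurable_floor.comp (measurable_const_mul _))
  refine ⟨κ, hκ, fun q => ?_⟩
  rw [Measure.restrict_apply (hκ (measurableSet_singleton q))]
  have hsub : κ ⁻¹' {q} ∩ Set.Icc 0 1 ⊆ Set.Icc ((q : ℝ) / (n + 1)) ((q + 1) / (n + 1)) := by
    rintro t ⟨rfl, ht₀, ht₁⟩
    have hpos : 0 ≤ (n + 1) * t := by positivity
    have hlow := Nat.floor_le hpos
    have hupp := Nat.lt_floor_add_one ((n + 1) * t)
    rw [Set.mem_Icc, div_le_iff₀ hn, le_div_iff₀ hn]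
    rcases le_total ⌊(n + 1) * t⌋₊ n with h | h
    · simp only [κ, Fin.coe_clamp, min_eq_left h]
      constructor <;> linarith
    · have : (n : ℝ) ≤ ⌊(n + 1) * t⌋₊ := by exact_mod_cast h
      simp only [κ, Fin.coe_clamp, min_eq_right h]
      constructor <;> nlinarith
  refine (measure_mono hsub).trans_eq ?_
  rw [Real.volume_Icc, ← sub_div, add_sub_cancel_left, one_div, ENNReal.ofReal_inv_of_pos hn,
    ENNReal.ofReal_add n.cast_nonneg zero_le_one, ENNReal.ofReal_natCast, ENNReal.ofReal_one]

theorem isSeparatingSeed_of_map_eq_pi (G : SimpleGraph V) {μ : Measure (V → ℝ)}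
    (hμ : ∀ s : Finset V, Measure.map (fun (x : V → ℝ) (v : s) => x v) μ
      = Measure.pi (fun _ : s => volume.restrict (Set.Icc (0 : ℝ) 1))) :
    IsSeparatingSeed G μ := by
  have : IsProbabilityMeasure (volume.restrict (Set.Icc (0 : ℝ) 1)) := ⟨by simp⟩
  rw [IsProjectiveLimit.unique (ν := Measure.infinitePi fun _ : V => _) hμ
    (Measure.isProjectiveLimit_infinitePi _)]
  exact isSeparatingSeed_infinitePi G exists_quantiser_unitInterval

namespace IsSeparatingSeed

variable {μ : Measure (V → Ω)} {d : ℕ}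

lemma lintegral_swap (hμ : IsSeparatingSeed G μ) (hG : IsRegularTree G d)
    {F : (V → Ω) → V → V → ℝ≥0∞} (hF : ∀ u v, Measurable fun x => F x u v)
    (hF' : ∀ (φ : G ≃g G) x u v, F (x ∘ φ.symm) (φ u) (φ v) = F x u v) (u v : V) :
    ∫⁻ x, F x u v ∂μ = ∫⁻ x, F x v u ∂μ := by
  obtain ⟨φ, hu, hv⟩ := hG.exists_iso_swap u v
  rw [← (hμ.measurePreserving φ).lintegral_comp (hF v u)]
  congr 1 with x
  rw [← hF' φ x u v, hu, hv]

lemma setLIntegral_swap (hμ : IsSeparatingSeed G μ) (hG : IsRegularTree G d)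
    {S : (V → Ω) → V → Prop} (hS : ∀ v, MeasurableSet {x | S x v}) (hS' : Equivariant G S)
    {F : (V → Ω) → V → ℝ≥0∞} (hF : ∀ v, Measurable fun x => F x v) (hF' : Equivariant G F)
    (u v : V) : ∫⁻ x in {x | S x u}, F x v ∂μ = ∫⁻ x in {x | S x v}, F x u ∂μ := by
  have h := hμ.lintegral_swap hG (F := fun x a b => {x | S x a}.indicator (fun x => F x b) x)
    (fun a b => (hF b).indicator (hS a))
    (fun φ x a b => by by_cases h : S x a <;> simp [h, hS' φ x a, hF' φ x b]) u v
  simpa only [lintegral_indicator (hS _)] using h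

lemma measure_swap (hμ : IsSeparatingSeed G μ) (hG : IsRegularTree G d)
    {E : (V → Ω) → V → V → Prop} (hE : ∀ u v, MeasurableSet {x | E x u v})
    (hE' : ∀ (φ : G ≃g G) x u v, E (x ∘ φ.symm) (φ u) (φ v) = E x u v) (u v : V) :
    μ {x | E x u v} = μ {x | E x v u} := by
  have h := hμ.lintegral_swap hG (F := fun x a b => {x | E x a b}.indicator 1 x)
    (fun a b => measurable_one.indicator (hE a b))
    (fun φ x a b => by by_cases h : E x a b <;> simp [h, hE' φ x a b]) u v
  simpa only [lintegral_indicator_one (hE _ _)] using h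

lemma measure_eq (hμ : IsSeparatingSeed G μ) (hG : IsRegularTree G d)
    {S : (V → Ω) → V → Prop} (hS : ∀ v, MeasurableSet {x | S x v}) (hS' : Equivariant G S)
    (u v : V) : μ {x | S x u} = μ {x | S x v} :=
  hμ.measure_swap hG (E := fun x a _ => S x a) (fun a _ => hS a) (fun φ x a _ => hS' φ x a) u v

/-- Mass transport: `F x v` is sent from `v` to the centre `u` of the unique patch containing
`v`. -/
theorem setLIntegral_exists_dist_le (hμ : IsSeparatingSeed G μ) (hG : IsRegularTree G d)
    {S : (V → Ω) → V → Prop} (hS : ∀ v, MeasurableSet {x | S x v}) (hS' : Equivariant G S)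
    {r : ℕ} (hsep : ∀ x u v, S x u → S x v → G.dist u v ≤ 2 * r → u = v)
    {F : (V → Ω) → V → ℝ≥0∞} (hF : ∀ v, Measurable fun x => F x v) (hF' : Equivariant G F)
    (o : V) : ∫⁻ x in {x | ∃ v ∈ closedBall G o r, S x v}, F x o ∂μ =
      ∫⁻ x in {x | S x o}, ∑ v ∈ closedBall G o r, F x v ∂μ := by
  have hunion : {x | ∃ v ∈ closedBall G o r, S x v} =
      ⋃ v ∈ closedBall G o r, {x | S x v} := by
    ext x; simp
  have hdisj : Set.PairwiseDisjoint (closedBall G o r : Set V) fun v => {x | S x v} := by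
    intro u hu v hv huv
    rw [Finset.mem_coe, hG.mem_closedBall] at hu hv
    have hd := hG.dist_triangle u o v
    rw [G.dist_comm] at hu
    exact Set.disjoint_left.mpr fun x hxu hxv => huv (hsep x u v hxu hxv (by omega))
  rw [hunion, lintegral_biUnion_finset hdisj fun v _ => hS v, lintegral_finsetSum _ fun v _ => hF v]
  exact Finset.sum_congr rfl fun v _ => hμ.setLIntegral_swap hG hS hS' hF hF' v o

end IsSeparatingSeed

end Seed

/-! ### Local search by a factor of i.i.d. -/

section LocalSearch

variable {V Ω : Type*} {G : SimpleGraph V} {d : ℕ}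

/-- `ℓ` has labels below `J`, and the labels of distinct vertices at distance `k` are related by
`P k`. -/
structure IsValid (G : SimpleGraph V) (P : ℕ → ℕ → ℕ → Prop) (J : ℕ) (ℓ : V → ℕ) : Prop where
  compat : ∀ u v, u ≠ v → P (G.dist u v) (ℓ u) (ℓ v)
  lt : ∀ v, ℓ v < J

/-- A factor of the seed `x : V → Ω` whose values are all valid labellings. -/
structure IsValidFactor [MeasurableSpace Ω] (G : SimpleGraph V) (P : ℕ → ℕ → ℕ → Prop) (J : ℕ)
    (f : (V → Ω) → V → ℕ) : Prop where
  measurable : Measurable f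
  equivariant : Equivariant G f
  valid : ∀ x, IsValid G P J (f x)

open Classical in
/-- The labelling that is `a` on the ball of radius `r` around `v` and `ℓ` elsewhere. -/
noncomputable def patch (G : SimpleGraph V) (r : ℕ) (v : V) (a ℓ : V → ℕ) : V → ℕ :=
  (closedBall G v r : Set V).piecewise a ℓ

lemma patch_of_mem {r : ℕ} {v w : V} (hw : w ∈ closedBall G v r) (a ℓ : V → ℕ) :
    patch G r v a ℓ w = a w := by
  simp [patch, hw]

lemma patch_of_notMem {r : ℕ} {v w : V} (hw : w ∉ closedBall G v r) (a ℓ : V → ℕ) :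
    patch G r v a ℓ w = ℓ w := by
  simp [patch, hw]

/-- The data of a local search among the labellings that are valid for `compat` and `alphabet`:
a move changes at most `budget` labels, inside one ball of radius `radius`, and lowers the total
`weight` of that ball. Labels further apart than `range` do not interact. -/
structure LocalSearch where
  compat : ℕ → ℕ → ℕ → Prop
  alphabet : ℕ
  range : ℕ
  weight : ℕ → ℕ
  radius : ℕ
  budget : ℕ
  compat_of_range_le : ∀ k a b, a < alphabet → b < alphabet → range ≤ k → compat k a b

namespace LocalSearch

variable (s : LocalSearch)

/-- `ℓ'` is obtained from `ℓ` by a move of the search `s` around `v`. -/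
structure IsMove (G : SimpleGraph V) (ℓ : V → ℕ) (v : V) (ℓ' : V → ℕ) : Prop where
  valid : IsValid G s.compat s.alphabet ℓ'
  eq_of_notMem : ∀ w ∉ closedBall G v s.radius, ℓ' w = ℓ w
  card_le : ({w ∈ closedBall G v s.radius | ℓ w ≠ ℓ' w}).card ≤ s.budget
  weight_lt : ∑ w ∈ closedBall G v s.radius, s.weight (ℓ' w) <
    ∑ w ∈ closedBall G v s.radius, s.weight (ℓ w)

/-- Some move of the search `s` around `v` is available. -/
def IsImprovable (G : SimpleGraph V) (ℓ : V → ℕ) (v : V) : Prop := ∃ ℓ', s.IsMove G ℓ v ℓ'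

variable {s}

section Equivariance

variable (φ : G ≃g G)

lemma mem_closedBall_iso (hG : IsRegularTree G d) {v w : V} {r : ℕ} :
    w ∈ closedBall G (φ v) r ↔ φ.symm w ∈ closedBall G v r := by
  rw [hG.mem_closedBall, hG.mem_closedBall, ← dist_iso hG.isTree φ v, φ.apply_symm_apply]

lemma map_closedBall (hG : IsRegularTree G d) (v : V) (r : ℕ) :
    (closedBall G v r).map φ.toEquiv.toEmbedding = closedBall G (φ v) r := by
  ext w
  rw [Finset.mem_map_equiv, mem_closedBall_iso φ hG]
  rfl

lemma patch_comp_symm (hG : IsRegularTree G d) (r : ℕ) (v : V) (a ℓ : V → ℕ) :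
    patch G r v a ℓ ∘ φ.symm = patch G r (φ v) (a ∘ φ.symm) (ℓ ∘ φ.symm) := by
  ext w
  by_cases hw : w ∈ closedBall G (φ v) r
  · rw [patch_of_mem hw, Function.comp_apply, patch_of_mem ((mem_closedBall_iso φ hG).mp hw),
      Function.comp_apply]
  · rw [patch_of_notMem hw, Function.comp_apply,
      patch_of_notMem (mt (mem_closedBall_iso φ hG).mpr hw), Function.comp_apply]

lemma IsMove.comp_symm (hG : IsRegularTree G d) {ℓ ℓ' : V → ℕ} {v : V} (h : s.IsMove G ℓ v ℓ') :
    s.IsMove G (ℓ ∘ φ.symm) (φ v) (ℓ' ∘ φ.symm) where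
  valid := ⟨fun u w huw => by
    simpa only [dist_iso hG.isTree, Function.comp_apply] using
      h.valid.compat _ _ (φ.symm.injective.ne huw),
    fun w => h.valid.lt _⟩
  eq_of_notMem w hw := h.eq_of_notMem _ fun hw' => hw ((mem_closedBall_iso φ hG).mpr hw')
  card_le := by
    rw [← map_closedBall φ hG, Finset.filter_map, Finset.card_map]
    simpa [Function.comp_def] using h.card_le
  weight_lt := by
    rw [← map_closedBall φ hG]
    simpa using h.weight_lt

lemma equivariant_isImprovable (hG : IsRegularTree G d) : Equivariant G (s.IsImprovable G) :=
  equivariant_of_imp fun φ _ _ ⟨_, h⟩ => ⟨_, h.comp_symm φ hG⟩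

end Equivariance

lemma isImprovable_iff_exists_finsupp {ℓ : V → ℕ} {v : V} :
    s.IsImprovable G ℓ v ↔ ∃ a : V →₀ ℕ, s.IsMove G ℓ v (patch G s.radius v a ℓ) := by
  classical
  refine ⟨fun ⟨ℓ', h⟩ => ?_, fun ⟨_, h⟩ => ⟨_, h⟩⟩
  refine ⟨Finsupp.indicator (closedBall G v s.radius) fun w _ => ℓ' w, ?_⟩
  convert h
  ext w
  by_cases hw : w ∈ closedBall G v s.radius
  · rw [patch_of_mem hw, Finsupp.indicator_of_mem hw]
  · rw [patch_of_notMem hw, h.eq_of_notMem w hw]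

section Measurability

lemma measurable_patch {X : Type*} [MeasurableSpace X] {a ℓ : X → V → ℕ} (ha : Measurable a)
    (hℓ : Measurable ℓ) (r : ℕ) (v : V) : Measurable fun x => patch G r v (a x) (ℓ x) := by
  refine measurable_pi_lambda _ fun w => ?_
  by_cases hw : w ∈ closedBall G v r
  · simpa only [patch_of_mem hw] using ha.eval
  · simpa only [patch_of_notMem hw] using hℓ.eval

variable [Countable V]

lemma measurableSet_isValid (P : ℕ → ℕ → ℕ → Prop) (J : ℕ) :
    MeasurableSet {ℓ : V → ℕ | IsValid G P J ℓ} := by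
  have h : {ℓ | IsValid G P J ℓ} =
      (⋂ (u) (v) (_ : u ≠ v), {ℓ | P (G.dist u v) (ℓ u) (ℓ v)}) ∩ ⋂ v, {ℓ | ℓ v < J} := by
    ext ℓ
    simp only [Set.mem_inter_iff, Set.mem_iInter, Set.mem_ofPred_eq]
    exact ⟨fun h => ⟨h.1, h.2⟩, fun h => ⟨h.1, h.2⟩⟩
  rw [h]
  refine .inter (.iInter fun u => .iInter fun v => .iInter fun _ => ?_)
    (.iInter fun v => measurableSet_lt (measurable_pi_apply v) measurable_const)
  have hpair : Measurable fun ℓ : V → ℕ => (ℓ u, ℓ v) := by fun_prop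
  exact hpair (MeasurableSet.of_discrete (s := {p : ℕ × ℕ | P (G.dist u v) p.1 p.2}))

lemma measurableSet_isMove (v : V) :
    MeasurableSet {p : (V → ℕ) × (V → ℕ) | s.IsMove G p.1 v p.2} := by
  have h : {p : (V → ℕ) × (V → ℕ) | s.IsMove G p.1 v p.2} =
      {p | IsValid G s.compat s.alphabet p.2} ∩
      (⋂ w ∉ closedBall G v s.radius, {p | p.2 w = p.1 w}) ∩
      {p | (∑ w ∈ closedBall G v s.radius, if p.1 w ≠ p.2 w then 1 else 0) ≤ s.budget} ∩
      {p | ∑ w ∈ closedBall G v s.radius, s.weight (p.2 w) <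
        ∑ w ∈ closedBall G v s.radius, s.weight (p.1 w)} := by
    ext p
    simp only [← Finset.card_filter, Set.mem_inter_iff, Set.mem_iInter, Set.mem_ofPred_eq]
    exact ⟨fun h => ⟨⟨⟨h.1, h.2⟩, h.3⟩, h.4⟩, fun h => ⟨h.1.1.1, h.1.1.2, h.1.2, h.2⟩⟩
  have heq (w : V) : MeasurableSet {p : (V → ℕ) × (V → ℕ) | p.2 w = p.1 w} :=
    measurableSet_eq_fun (by fun_prop) (by fun_prop)
  rw [h]
  refine (((measurable_snd (measurableSet_isValid _ _)).inter
    (.iInter fun w => .iInter fun _ => heq w)).inter (measurableSet_le ?_ measurable_const)).inter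
    (measurableSet_lt ?_ ?_)
  · exact Finset.measurable_sum _ fun w _ => .ite
      (measurableSet_eq_fun (by fun_prop) (by fun_prop)).compl measurable_const measurable_const
  all_goals exact Finset.measurable_sum _ fun w _ => Measurable.of_discrete.comp (by fun_prop)

lemma measurableSet_isImprovable (v : V) : MeasurableSet {ℓ : V → ℕ | s.IsImprovable G ℓ v} := by
  simp only [isImprovable_iff_exists_finsupp, Set.ofPred_exists]
  exact .iUnion fun a => measurable_id.prodMk
    (measurable_patch measurable_const measurable_id _ v) (measurableSet_isMove v)

end Measurability

section Rounds

variable [MeasurableSpace Ω]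

/-- A simultaneous round of moves: a seed is read through the finitely valued `hash`, the moves
are centred at vertices with hash `centre`, and they propose the label `newLabel k` at vertices
with hash `k`. -/
structure Round (Ω : Type*) [MeasurableSpace Ω] where
  size : ℕ
  hash : Ω → Fin size
  measurable_hash : Measurable hash
  centre : Fin size
  newLabel : Fin size → ℕ

/-- The labels proposed by `ρ`. -/
def Round.proposal (ρ : Round Ω) (x : V → Ω) (v : V) : ℕ := ρ.newLabel (ρ.hash (x v))

variable (s) in
/-- The round `ρ` performs a move around `v`. Hashes are distinct in a large ball around `v`, so
that such vertices are far apart and their moves do not interfere. -/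
structure IsSelected (G : SimpleGraph V) (ρ : Round Ω) (f : (V → Ω) → V → ℕ) (x : V → Ω)
    (v : V) : Prop where
  hash_eq : ρ.hash (x v) = ρ.centre
  injOn : Set.InjOn (ρ.hash ∘ x) (closedBall G v (2 * s.radius + s.range))
  isMove : s.IsMove G (f x) v (patch G s.radius v (ρ.proposal x) (f x))

open Classical in
variable (s) in
/-- The result of applying the round `ρ` to `f`. -/
noncomputable def update (G : SimpleGraph V) (ρ : Round Ω) (f : (V → Ω) → V → ℕ) (x : V → Ω)
    (w : V) : ℕ :=
  if ∃ v ∈ closedBall G w s.radius, s.IsSelected G ρ f x v then ρ.proposal x w else f x w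

variable {ρ : Round Ω} {f : (V → Ω) → V → ℕ} {x : V → Ω} {u v w : V}

lemma measurable_proposal : Measurable fun x : V → Ω => ρ.proposal x :=
  measurable_pi_lambda _ fun w => Measurable.of_discrete.comp <|
    ρ.measurable_hash.comp (measurable_pi_apply w)

lemma measurableSet_isSelected [Countable V] (hf : Measurable f) (v : V) :
    MeasurableSet {x | s.IsSelected G ρ f x v} := by
  have h : {x | s.IsSelected G ρ f x v} =
      {x | ρ.hash (x v) = ρ.centre} ∩
      {x | Set.InjOn (ρ.hash ∘ x) (closedBall G v (2 * s.radius + s.range))} ∩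
      {x | s.IsMove G (f x) v (patch G s.radius v (ρ.proposal x) (f x))} := by
    ext x
    exact ⟨fun h => ⟨⟨h.1, h.2⟩, h.3⟩, fun h => ⟨h.1.1, h.1.2, h.2⟩⟩
  have hhash (w : V) : Measurable fun x : V → Ω => ρ.hash (x w) :=
    ρ.measurable_hash.comp (measurable_pi_apply w)
  rw [h]
  refine ((measurableSet_eq_fun (hhash v) measurable_const).inter ?_).inter
    ((hf.prodMk (measurable_patch measurable_proposal hf _ v)) (measurableSet_isMove v))
  simp only [Set.InjOn, Set.ofPred_forall]
  refine .iInter fun a => .iInter fun _ => .iInter fun b => .iInter fun _ => ?_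
  exact (measurableSet_eq_fun (hhash a) (hhash b)).imp (.const _)

lemma equivariant_isSelected (hG : IsRegularTree G d) (hf : Equivariant G f) :
    Equivariant G (s.IsSelected G ρ f) := by
  refine equivariant_of_imp fun φ x v h => ⟨?_, fun a ha b hb hab => ?_, ?_⟩
  · simpa using h.hash_eq
  · rw [Finset.mem_coe, mem_closedBall_iso φ hG] at ha hb
    exact φ.symm.injective (h.injOn ha hb hab)
  · rw [hf.map_comp_symm]
    have hmove := h.isMove.comp_symm φ hG
    rw [patch_comp_symm φ hG] at hmove
    exact hmove

lemma measurable_update [Countable V] (hf : Measurable f) : Measurable (s.update G ρ f) := by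
  refine measurable_pi_lambda _ fun w => .ite ?_ measurable_proposal.eval hf.eval
  simp only [Set.ofPred_exists, Set.ofPred_and]
  exact .iUnion fun v => .inter (.const _) (measurableSet_isSelected hf v)

lemma equivariant_exists_isSelected (hG : IsRegularTree G d) (hf : Equivariant G f) :
    Equivariant G fun x w => ∃ v ∈ closedBall G w s.radius, s.IsSelected G ρ f x v :=
  equivariant_of_imp fun φ x w ⟨v, hv, h⟩ => ⟨φ v,
    (mem_closedBall_iso φ hG).mpr (by rwa [φ.symm_apply_apply]),
    (equivariant_isSelected hG hf φ x v).mpr h⟩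

lemma equivariant_update (hG : IsRegularTree G d) (hf : Equivariant G f) :
    Equivariant G (s.update G ρ f) := fun φ x w => by
  classical
  exact if_congr (Iff.of_eq (equivariant_exists_isSelected hG hf φ x w))
    (by simp [Round.proposal]) (hf φ x w)

lemma update_eq_of_isSelected (hv : s.IsSelected G ρ f x v) (hw : v ∈ closedBall G w s.radius) :
    s.update G ρ f x w = ρ.proposal x w := if_pos ⟨v, hw, hv⟩

lemma update_eq_of_not_exists
    (hw : ¬ ∃ v ∈ closedBall G w s.radius, s.IsSelected G ρ f x v) :
    s.update G ρ f x w = f x w := if_neg hw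

lemma IsSelected.eq_of_dist_le (hG : IsRegularTree G d) (hu : s.IsSelected G ρ f x u)
    (hv : s.IsSelected G ρ f x v) (huv : G.dist u v ≤ 2 * s.radius + s.range) : u = v :=
  hu.injOn (by simp [hG.mem_closedBall]) (by simpa [hG.mem_closedBall] using huv)
    (hu.hash_eq.trans hv.hash_eq.symm)

lemma update_eq_patch (hG : IsRegularTree G d) (hv : s.IsSelected G ρ f x v)
    (hw : v ∈ closedBall G w s.radius ∨
      ¬ ∃ v ∈ closedBall G w s.radius, s.IsSelected G ρ f x v) :
    s.update G ρ f x w = patch G s.radius v (ρ.proposal x) (f x) w := by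
  rcases hw with hw | hw
  · rw [update_eq_of_isSelected hv hw, patch_of_mem]
    rwa [hG.mem_closedBall, G.dist_comm, ← hG.mem_closedBall]
  · rw [update_eq_of_not_exists hw, patch_of_notMem]
    refine fun hw' => hw ⟨v, ?_, hv⟩
    rwa [hG.mem_closedBall, G.dist_comm, ← hG.mem_closedBall]

lemma IsSelected.update_eq_patch_of_mem (hG : IsRegularTree G d) (hv : s.IsSelected G ρ f x v)
    (hw : w ∈ closedBall G v s.radius) :
    s.update G ρ f x w = patch G s.radius v (ρ.proposal x) (f x) w :=
  update_eq_patch hG hv <| .inl <| by rwa [hG.mem_closedBall, G.dist_comm, ← hG.mem_closedBall]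

lemma IsSelected.card_le (hG : IsRegularTree G d) (hv : s.IsSelected G ρ f x v) :
    ({w ∈ closedBall G v s.radius | f x w ≠ s.update G ρ f x w}).card ≤ s.budget :=
  (congrArg Finset.card (Finset.filter_congr fun w hw => by
    rw [hv.update_eq_patch_of_mem hG hw])).trans_le hv.isMove.card_le

lemma IsSelected.weight_lt (hG : IsRegularTree G d) (hv : s.IsSelected G ρ f x v) :
    ∑ w ∈ closedBall G v s.radius, s.weight (s.update G ρ f x w) <
      ∑ w ∈ closedBall G v s.radius, s.weight (f x w) :=
  (Finset.sum_congr rfl fun w hw => by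
    rw [hv.update_eq_patch_of_mem hG hw]).trans_lt hv.isMove.weight_lt

lemma isValid_update (hG : IsRegularTree G d) (hf : IsValid G s.compat s.alphabet (f x)) :
    IsValid G s.compat s.alphabet (s.update G ρ f x) := by
  have hlt (w : V) : s.update G ρ f x w < s.alphabet := by
    by_cases hw : ∃ v ∈ closedBall G w s.radius, s.IsSelected G ρ f x v
    · obtain ⟨v, hvw, hv⟩ := hw
      exact update_eq_patch hG hv (.inl hvw) ▸ hv.isMove.valid.lt w
    · exact update_eq_of_not_exists hw ▸ hf.lt w
  refine ⟨fun w w' hne => ?_, hlt⟩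
  by_cases hw : ∃ v ∈ closedBall G w s.radius, s.IsSelected G ρ f x v <;>
    by_cases hw' : ∃ v ∈ closedBall G w' s.radius, s.IsSelected G ρ f x v
  · obtain ⟨v, hvw, hv⟩ := hw
    obtain ⟨v', hvw', hv'⟩ := hw'
    rcases eq_or_ne v v' with rfl | hvv
    · rw [update_eq_patch hG hv (.inl hvw), update_eq_patch hG hv (.inl hvw')]
      exact hv.isMove.valid.compat w w' hne
    · refine s.compat_of_range_le _ _ _ (hlt w) (hlt w') ?_
      by_contra! hlt
      refine hvv (hv.eq_of_dist_le hG hv' ?_)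
      have h₁ := hG.dist_triangle v w v'
      have h₂ := hG.dist_triangle w w' v'
      rw [hG.mem_closedBall] at hvw hvw'
      rw [G.dist_comm] at hvw
      omega
  · obtain ⟨v, hvw, hv⟩ := hw
    rw [update_eq_patch hG hv (.inl hvw), update_eq_patch hG hv (.inr hw')]
    exact hv.isMove.valid.compat w w' hne
  · obtain ⟨v', hvw', hv'⟩ := hw'
    rw [update_eq_patch hG hv' (.inr hw), update_eq_patch hG hv' (.inl hvw')]
    exact hv'.isMove.valid.compat w w' hne
  · rw [update_eq_of_not_exists hw, update_eq_of_not_exists hw']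
    exact hf.compat w w' hne

theorem isValidFactor_update [Countable V] (hG : IsRegularTree G d)
    (hf : IsValidFactor G s.compat s.alphabet f) :
    IsValidFactor G s.compat s.alphabet (s.update G ρ f) :=
  ⟨measurable_update hf.measurable, equivariant_update hG hf.equivariant,
    fun x => isValid_update hG (hf.valid x)⟩

end Rounds

section Improvement

variable [MeasurableSpace Ω] {μ : Measure (V → Ω)} {ρ : Round Ω}
  {f : (V → Ω) → V → ℕ} {η : ℝ≥0∞}

lemma exists_isSelected {n : ℕ} {κ : Ω → Fin n} (hκ : Measurable κ) {x : V → Ω} {o : V}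
    (hinj : Set.InjOn (κ ∘ x) (closedBall G o (2 * s.radius + s.range)))
    (hG : IsRegularTree G d) (himp : s.IsImprovable G (f x) o) :
    ∃ (q : Fin n) (π : Fin n → Fin s.alphabet),
      s.IsSelected G ⟨n, κ, hκ, q, fun k => π k⟩ f x o := by
  have : Nonempty V := ⟨o⟩
  obtain ⟨ℓ', hℓ'⟩ := himp
  let B : Set V := closedBall G o (2 * s.radius + s.range)
  let π (k : Fin n) : Fin s.alphabet := ⟨_, hℓ'.valid.lt (Function.invFunOn (κ ∘ x) B k)⟩
  have hπ : ∀ w ∈ B, (π (κ (x w)) : ℕ) = ℓ' w := fun w hw =>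
    congrArg ℓ' (hinj.leftInvOn_invFunOn hw)
  refine ⟨κ (x o), π, rfl, hinj, ?_⟩
  convert hℓ'
  ext w
  by_cases hw : w ∈ closedBall G o s.radius
  · rw [patch_of_mem hw]
    refine hπ w ?_
    rw [hG.mem_closedBall] at hw
    simp only [B, Finset.mem_coe, hG.mem_closedBall]
    omega
  · rw [patch_of_notMem hw, hℓ'.eq_of_notMem w hw]

lemma lintegral_weight_ne_top [IsFiniteMeasure μ] (hf : IsValidFactor G s.compat s.alphabet f)
    (o : V) : ∫⁻ x, s.weight (f x o) ∂μ ≠ ∞ := by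
  have hle (x : V → Ω) : s.weight (f x o) ≤ (Finset.range s.alphabet).sup s.weight :=
    Finset.le_sup (Finset.mem_range.mpr ((hf.valid x).lt o))
  exact (lintegral_mono fun x => Nat.cast_le.mpr (hle x)).trans_lt
    (by simp [lintegral_const, ENNReal.mul_lt_top]) |>.ne

lemma exists_le_measure_isSelected (hμ : IsSeparatingSeed G μ) (hG : IsRegularTree G d)
    (s : LocalSearch) (o : V) (hη : η ≠ 0) :
    ∃ δ : ℝ≥0∞, δ ≠ 0 ∧ ∀ f : (V → Ω) → V → ℕ, η < μ {x | s.IsImprovable G (f x) o} →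
      ∃ ρ : Round Ω, δ ≤ μ {x | s.IsSelected G ρ f x o} := by
  have hη' : η / 2 ≠ 0 := (ENNReal.half_pos hη).ne'
  obtain ⟨n, κ, hκ, hinj⟩ :=
    hμ.exists_separating (closedBall G o (2 * s.radius + s.range)) (η / 2) hη'
  let ρ (t : Fin n × (Fin n → Fin s.alphabet)) : Round Ω := ⟨n, κ, hκ, t.1, fun k => t.2 k⟩
  refine ⟨η / 2 / Fintype.card (Fin n × (Fin n → Fin s.alphabet)),
    ENNReal.div_ne_zero.mpr ⟨hη', ENNReal.natCast_ne_top _⟩, fun f hf => ?_⟩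
  by_contra! hδ
  refine hf.not_ge ?_
  have hsub : {x | s.IsImprovable G (f x) o} ⊆
      {x | ¬ Set.InjOn (κ ∘ x) (closedBall G o (2 * s.radius + s.range))} ∪
        ⋃ t, {x | s.IsSelected G (ρ t) f x o} := fun x hx => by
    by_cases hi : Set.InjOn (κ ∘ x) (closedBall G o (2 * s.radius + s.range))
    · obtain ⟨q, π, h⟩ := exists_isSelected hκ hi hG hx
      exact .inr (Set.mem_iUnion.mpr ⟨(q, π), h⟩)
    · exact .inl hi
  calc μ {x | s.IsImprovable G (f x) o} ≤ _ := measure_mono hsub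
    _ ≤ _ := measure_union_le _ _
    _ ≤ η / 2 + ∑ t, μ {x | s.IsSelected G (ρ t) f x o} :=
      add_le_add hinj (measure_iUnion_fintype_le _ _)
    _ ≤ η / 2 + Fintype.card _ • (η / 2 / Fintype.card (Fin n × (Fin n → Fin s.alphabet))) := by
      gcongr
      exact Finset.sum_le_card_nsmul _ _ _ fun t _ => (hδ (ρ t)).le
    _ ≤ η / 2 + η / 2 := by
      rw [nsmul_eq_mul]
      gcongr
      exact ENNReal.mul_div_le
    _ = η := ENNReal.add_halves η

variable [Countable V]

lemma measure_ne_update_le (hμ : IsSeparatingSeed G μ) (hG : IsRegularTree G d)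
    (hf : IsValidFactor G s.compat s.alphabet f) (o : V) :
    μ {x | f x o ≠ s.update G ρ f x o} ≤ s.budget * μ {x | s.IsSelected G ρ f x o} := by
  classical
  set g := s.update G ρ f with hg
  have hg' := isValidFactor_update (ρ := ρ) hG hf
  have hne (v : V) : MeasurableSet {x | f x v ≠ g x v} :=
    (measurableSet_eq_fun hf.measurable.eval hg'.measurable.eval).compl
  let F (x : V → Ω) (v : V) : ℝ≥0∞ := if f x v ≠ g x v then 1 else 0
  have hF' : Equivariant G F := fun φ x v => by
    simp only [F, hf.equivariant φ x v, hg, hg'.equivariant φ x v]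
  calc μ {x | f x o ≠ g x o}
      = ∫⁻ x in {x | ∃ v ∈ closedBall G o s.radius, s.IsSelected G ρ f x v}, F x o ∂μ := by
        have hind : (fun x => F x o) = {x | f x o ≠ g x o}.indicator 1 := by
          ext x; simp [F, Set.indicator]
        rw [hind, lintegral_indicator_one (hne o), Measure.restrict_apply (hne o),
          Set.inter_eq_left.mpr]
        exact fun _ hx => by_contra fun hx' => hx (update_eq_of_not_exists hx').symm
    _ = ∫⁻ x in {x | s.IsSelected G ρ f x o}, ∑ v ∈ closedBall G o s.radius, F x v ∂μ :=
        hμ.setLIntegral_exists_dist_le hG (measurableSet_isSelected hf.measurable)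
          (equivariant_isSelected hG hf.equivariant)
          (fun _ u v hu hv h => hu.eq_of_dist_le hG hv (h.trans (Nat.le_add_right _ _)))
          (fun v => .ite (hne v) measurable_const measurable_const) hF' o
    _ ≤ ∫⁻ _ in {x | s.IsSelected G ρ f x o}, s.budget ∂μ := by
        refine setLIntegral_mono measurable_const fun x hx => ?_
        rw [Finset.sum_boole]
        exact_mod_cast hx.card_le hG
    _ = s.budget * μ {x | s.IsSelected G ρ f x o} := setLIntegral_const _ _

lemma lintegral_weight_update_add_le (hμ : IsSeparatingSeed G μ) (hG : IsRegularTree G d)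
    (hf : IsValidFactor G s.compat s.alphabet f) (o : V) :
    ∫⁻ x, s.weight (s.update G ρ f x o) ∂μ + μ {x | s.IsSelected G ρ f x o} ≤
      ∫⁻ x, s.weight (f x o) ∂μ := by
  set g := s.update G ρ f with hg
  set S := {x | s.IsSelected G ρ f x o}
  set N := {x | ∃ v ∈ closedBall G o s.radius, s.IsSelected G ρ f x v} with hN
  have hSm (v : V) := measurableSet_isSelected (s := s) (G := G) (ρ := ρ) hf.measurable v
  have hNm : MeasurableSet N := by
    simp only [hN, Set.ofPred_exists, Set.ofPred_and]
    exact .iUnion fun v => .inter (.const _) (hSm v)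
  have htransport {h : (V → Ω) → V → ℕ} (hh : IsValidFactor G s.compat s.alphabet h) :
      ∫⁻ x in N, s.weight (h x o) ∂μ =
        ∫⁻ x in S, ∑ v ∈ closedBall G o s.radius, (s.weight (h x v) : ℝ≥0∞) ∂μ :=
    hμ.setLIntegral_exists_dist_le (F := fun x v => (s.weight (h x v) : ℝ≥0∞)) hG hSm
      (equivariant_isSelected hG hf.equivariant)
      (fun _ u v hu hv huv => hu.eq_of_dist_le hG hv (huv.trans (Nat.le_add_right _ _)))
      (fun v => (Measurable.of_discrete (f := fun a => (s.weight a : ℝ≥0∞))).comp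
        (hh.measurable.eval (a := v)))
      (fun φ x v => by simp only [hh.equivariant φ x v]) o
  have hoff : ∫⁻ x in Nᶜ, s.weight (g x o) ∂μ = ∫⁻ x in Nᶜ, s.weight (f x o) ∂μ :=
    setLIntegral_congr_fun hNm.compl fun x hx => by simp only [hg, update_eq_of_not_exists hx]
  have hon : ∫⁻ x in N, s.weight (g x o) ∂μ + μ S ≤ ∫⁻ x in N, s.weight (f x o) ∂μ := by
    rw [htransport hf, htransport (isValidFactor_update hG hf), ← setLIntegral_one,
      ← lintegral_add_right _ measurable_const]
    refine setLIntegral_mono' (hSm o) fun x hx => ?_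
    exact_mod_cast hx.weight_lt hG
  rw [← lintegral_add_compl _ hNm, ← lintegral_add_compl (fun x => (s.weight (f x o) : ℝ≥0∞)) hNm,
    hoff, add_right_comm]
  gcongr

variable (s) in
/-- Improving `f` to `g` has cost at most `s.budget` changes at `o` per unit of weight. -/
structure IsImprovement (G : SimpleGraph V) (μ : Measure (V → Ω)) (o : V)
    (f g : (V → Ω) → V → ℕ) : Prop where
  isValidFactor : IsValidFactor G s.compat s.alphabet g
  weight_le : ∫⁻ x, s.weight (g x o) ∂μ ≤ ∫⁻ x, s.weight (f x o) ∂μ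
  measure_ne_add_le : μ {x | f x o ≠ g x o} + s.budget * ∫⁻ x, s.weight (g x o) ∂μ ≤
    s.budget * ∫⁻ x, s.weight (f x o) ∂μ

lemma IsImprovement.update {g : (V → Ω) → V → ℕ} {o : V} (h : s.IsImprovement G μ o f g)
    (hμ : IsSeparatingSeed G μ) (hG : IsRegularTree G d) (ρ : Round Ω) :
    s.IsImprovement G μ o f (s.update G ρ g) where
  isValidFactor := isValidFactor_update hG h.isValidFactor
  weight_le := (le_self_add.trans
    (lintegral_weight_update_add_le hμ hG h.isValidFactor o (ρ := ρ))).trans h.weight_le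
  measure_ne_add_le := by
    have hne := measure_ne_update_le hμ hG h.isValidFactor o (ρ := ρ)
    have hwt := lintegral_weight_update_add_le hμ hG h.isValidFactor o (ρ := ρ)
    set g' := s.update G ρ g
    have hsub : {x | f x o ≠ g' x o} ⊆ {x | f x o ≠ g x o} ∪ {x | g x o ≠ g' x o} := fun x hx => by
      by_contra! hx'
      simp only [Set.mem_union, Set.mem_ofPred_eq, not_or, not_not] at hx'
      exact hx (hx'.1.trans hx'.2)
    calc μ {x | f x o ≠ g' x o} + s.budget * ∫⁻ x, s.weight (g' x o) ∂μ
        ≤ (μ {x | f x o ≠ g x o} + s.budget * μ {x | s.IsSelected G ρ g x o}) +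
            s.budget * ∫⁻ x, s.weight (g' x o) ∂μ := by
          gcongr
          exact (measure_mono hsub).trans ((measure_union_le _ _).trans (by gcongr))
      _ = μ {x | f x o ≠ g x o} + s.budget *
            (∫⁻ x, s.weight (g' x o) ∂μ + μ {x | s.IsSelected G ρ g x o}) := by ring
      _ ≤ μ {x | f x o ≠ g x o} + s.budget * ∫⁻ x, s.weight (g x o) ∂μ := by gcongr
      _ ≤ _ := h.measure_ne_add_le

/-- Every effective round lowers the expected weight by a fixed amount, so only finitely many
rounds can be effective. -/
theorem exists_isImprovement_measure_isImprovable_le [IsFiniteMeasure μ]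
    (hμ : IsSeparatingSeed G μ) (hG : IsRegularTree G d)
    (hf : IsValidFactor G s.compat s.alphabet f) (o : V) (hη : η ≠ 0) :
    ∃ g, s.IsImprovement G μ o f g ∧ μ {x | s.IsImprovable G (g x) o} ≤ η := by
  obtain ⟨δ, hδ, hsel⟩ := exists_le_measure_isSelected hμ hG s o hη
  by_contra! hbad
  have hround (N : ℕ) : ∃ g, s.IsImprovement G μ o f g ∧
      ∫⁻ x, s.weight (g x o) ∂μ + N * δ ≤ ∫⁻ x, s.weight (f x o) ∂μ := by
    induction N with
    | zero => exact ⟨f, ⟨hf, le_rfl, by simp⟩, by simp⟩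
    | succ N ih =>
      obtain ⟨g, hg, hN⟩ := ih
      obtain ⟨ρ, hρ⟩ := hsel g (hbad g hg)
      refine ⟨_, hg.update hμ hG ρ, le_trans ?_ hN⟩
      calc ∫⁻ x, s.weight (s.update G ρ g x o) ∂μ + (N + 1 : ℕ) * δ
          = (∫⁻ x, s.weight (s.update G ρ g x o) ∂μ + δ) + N * δ := by push_cast; ring
        _ ≤ ∫⁻ x, s.weight (g x o) ∂μ + N * δ := by
          gcongr
          exact le_trans (by gcongr) (lintegral_weight_update_add_le hμ hG hg.isValidFactor o)
  obtain ⟨N, hN⟩ := ENNReal.exists_nat_mul_gt hδ (lintegral_weight_ne_top (μ := μ) hf o)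
  obtain ⟨g, -, hg⟩ := hround N
  exact hN.not_ge (le_add_self.trans hg)

end Improvement

end LocalSearch

end LocalSearch

/-! ### Colours, holes and red levels -/

section Colouring

variable {V : Type*} {G : SimpleGraph V} {C J j L : ℕ} {ℓ : V → ℕ} {p : ℕ → V} {n t : ℕ}

/-- The distance that two red vertices of level `k` have to keep. -/
def levelGap (C k : ℕ) : ℕ := C * (k + 1) * (k + 2)

lemma levelGap_mono (C : ℕ) : Monotone (levelGap C) := fun k j h => by
  unfold levelGap
  gcongr

/-- The constraint on the labels `a` and `b` of two vertices at distance `k`. The labels `0` to `3`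
are the colours, `4` marks a hole, which is yet to be filled, and `i + 5` is red of level `i`. -/
structure LevelCompat (C k a b : ℕ) : Prop where
  color_ne : k = 1 → a < 4 → a ≠ b
  levelGap_le : ∀ i, a = i + 5 → b = i + 5 → levelGap C i ≤ k
  four_le : 5 ≤ a → 5 ≤ b → 4 ≤ k

lemma LevelCompat.symm {k a b : ℕ} (h : LevelCompat C k a b) : LevelCompat C k b a where
  color_ne hk hb hba := h.color_ne hk (hba ▸ hb) hba.symm
  levelGap_le i hb ha := h.levelGap_le i ha hb
  four_le hb ha := h.four_le ha hb

lemma IsValid.ne_of_adj (hv : IsValid G (LevelCompat C) J ℓ) {u w : V} (huw : G.Adj u w)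
    (hu : ℓ u < 4) : ℓ u ≠ ℓ w :=
  (hv.compat u w huw.ne).color_ne (SimpleGraph.dist_eq_one_iff_adj.mpr huw) hu

lemma IsValid.update [DecidableEq V] {P : ℕ → ℕ → ℕ → Prop} (hP : ∀ k a b, P k a b → P k b a)
    (hv : IsValid G P J ℓ) {x : V} {c : ℕ} (hc : c < J)
    (h : ∀ w ≠ x, P (G.dist x w) c (ℓ w)) : IsValid G P J (Function.update ℓ x c) where
  compat u w huw := by
    obtain rfl | hu := eq_or_ne u x
    · simpa [huw.symm] using h w huw.symm
    obtain rfl | hw := eq_or_ne w x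
    · simpa [huw, G.dist_comm] using hP _ _ _ (h u huw)
    · simpa [hu, hw] using hv.compat u w huw
  lt w := by
    obtain rfl | hw := eq_or_ne w x
    · simpa using hc
    · simpa [hw] using hv.lt w

/-- The local search that fills holes by colours and by red of the new level `j`, at the price of
one newly red vertex for a hole. Its moves shift labels along paths of length at most
`2 * L + 2`. -/
def stageSearch (C j L : ℕ) : LocalSearch where
  compat := LevelCompat C
  alphabet := j + 6
  range := levelGap C j + 4
  weight a := if a = 4 then 2 else if a = j + 5 then 1 else 0
  radius := 2 * L + 2
  budget := 2 * L + 3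
  compat_of_range_le k a _ _ _ hk :=
    { color_ne := by omega
      levelGap_le := fun i _ _ => by
        have := levelGap_mono C (show i ≤ j by omega)
        omega
      four_le := by omega }

lemma LocalSearch.isImprovable_of_path {s : LocalSearch} {d : ℕ} (hG : IsRegularTree G d)
    (hp : IsNonBacktracking G p n) (hn : n ≤ s.radius) (hn' : n + 1 ≤ s.budget) {ℓ' : V → ℕ}
    (hv : IsValid G s.compat s.alphabet ℓ') (hoff : ∀ w, (∀ i ≤ n, w ≠ p i) → ℓ' w = ℓ w)
    (hlt : ∑ i ∈ Finset.range (n + 1), s.weight (ℓ' (p i)) <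
      ∑ i ∈ Finset.range (n + 1), s.weight (ℓ (p i))) : s.IsImprovable G ℓ (p 0) := by
  classical
  set T := (Finset.range (n + 1)).image p with hT
  have hTball : T ⊆ closedBall G (p 0) s.radius := by
    simp only [hT, Finset.image_subset_iff, Finset.mem_range, hG.mem_closedBall]
    intro i hi
    rw [hp.dist_eq hG.isTree i.zero_le (by omega)]
    omega
  have hoffT : ∀ w ∉ T, ℓ' w = ℓ w := fun w hw => hoff w fun i hi hwi =>
    hw (Finset.mem_image.mpr ⟨i, by simpa using hi, hwi.symm⟩)
  have hsum (F : V → ℕ) : ∑ w ∈ T, F w = ∑ i ∈ Finset.range (n + 1), F (p i) :=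
    Finset.sum_image fun i hi k hk => hp.injective hG.isTree (by simpa using hi) (by simpa using hk)
  refine ⟨ℓ', hv, fun w hw => hoffT w fun hw' => hw (hTball hw'), ?_, ?_⟩
  · calc _ ≤ T.card := Finset.card_le_card fun w hw => by
          by_contra hwT
          exact (Finset.mem_filter.mp hw).2 (hoffT w hwT).symm
      _ ≤ n + 1 := Finset.card_image_le.trans (by simp)
      _ ≤ s.budget := hn'
  · rw [← Finset.sum_sdiff hTball, ← Finset.sum_sdiff hTball (f := fun w => s.weight (ℓ w)),
      hsum, hsum, Finset.sum_congr rfl fun w hw => by rw [hoffT w (Finset.mem_sdiff.mp hw).2]]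
    exact Nat.add_lt_add_left hlt _

/-! ### Shifting labels along a path -/

/-- The index next to `i` in the direction of `t`. -/
def toward (t i : ℕ) : ℕ := if i < t then i + 1 else i - 1

open Classical in
/-- The labelling obtained from `ℓ` by turning `p t` into a hole and giving every other vertex of
the path `p 0, …, p n` the label of its neighbour in the direction of `p t`. -/
noncomputable def shift (G : SimpleGraph V) (ℓ : V → ℕ) (p : ℕ → V) (n t : ℕ) (w : V) : ℕ :=
  if G.dist (p 0) w ≤ n ∧ p (G.dist (p 0) w) = w then
    if G.dist (p 0) w = t then 4 else ℓ (p (toward t (G.dist (p 0) w)))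
  else ℓ w

/-- The labels along the path `p 0, …, p n` can be shifted towards `p t`: this moves colours only,
and the new label of a vertex does not occur among its neighbours off the path. -/
structure IsShiftable (G : SimpleGraph V) (ℓ : V → ℕ) (p : ℕ → V) (n t : ℕ) : Prop where
  isNonBacktracking : IsNonBacktracking G p n
  le : t ≤ n
  lt_four : ∀ i ≤ n, i ≠ t → ℓ (p (toward t i)) < 4
  mem_path : ∀ i ≤ n, i ≠ t → ∀ w, G.Adj (p i) w → ℓ w = ℓ (p (toward t i)) → ∃ k ≤ n, w = p k

lemma shift_of_notMem {w : V} (hw : ∀ k ≤ n, w ≠ p k) : shift G ℓ p n t w = ℓ w :=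
  if_neg fun h => hw _ h.1 h.2.symm

lemma IsNonBacktracking.eq_add_one_or_of_adj (hG : G.IsTree) (hp : IsNonBacktracking G p n)
    {i k : ℕ} (hi : i ≤ n) (hk : k ≤ n) (hadj : G.Adj (p i) (p k)) : k = i + 1 ∨ i = k + 1 := by
  have hdist := SimpleGraph.dist_eq_one_iff_adj.mpr hadj
  rcases le_total i k with h | h
  · rw [hp.dist_eq hG h hk] at hdist
    omega
  · rw [SimpleGraph.dist_comm, hp.dist_eq hG h hi] at hdist
    omega

namespace IsShiftable

lemma shift_target (hG : G.IsTree) (hp : IsShiftable G ℓ p n t) : shift G ℓ p n t (p t) = 4 := by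
  have h := hp.isNonBacktracking.dist_eq hG t.zero_le hp.le
  simp [shift, h, hp.le]

lemma shift_of_ne (hG : G.IsTree) (hp : IsShiftable G ℓ p n t) {i : ℕ} (hi : i ≤ n) (hit : i ≠ t) :
    shift G ℓ p n t (p i) = ℓ (p (toward t i)) := by
  have h := hp.isNonBacktracking.dist_eq hG i.zero_le hi
  simp [shift, h, hi, hit]

lemma shift_lt_four (hG : G.IsTree) (hp : IsShiftable G ℓ p n t) {i : ℕ} (hi : i ≤ n)
    (hit : i ≠ t) : shift G ℓ p n t (p i) < 4 := by
  rw [hp.shift_of_ne hG hi hit]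
  exact hp.lt_four i hi hit

lemma shift_eq_of_five_le (hG : G.IsTree) (hp : IsShiftable G ℓ p n t) {w : V}
    (hw : 5 ≤ shift G ℓ p n t w) : shift G ℓ p n t w = ℓ w := by
  refine shift_of_notMem ?_
  rintro i hi rfl
  obtain rfl | hit := eq_or_ne i t
  · rw [hp.shift_target hG] at hw
    omega
  · have := hp.shift_lt_four hG hi hit
    omega

lemma adj_toward (hp : IsShiftable G ℓ p n t) {i : ℕ} (hi : i + 1 ≤ n) (hit : i ≠ t)
    (hit' : i + 1 ≠ t) : G.Adj (p (toward t i)) (p (toward t (i + 1))) := by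
  have hle := hp.le
  unfold toward
  split_ifs
  · exact hp.isNonBacktracking.adj (i + 1) (by omega)
  · omega
  · omega
  · obtain ⟨i, rfl⟩ := Nat.exists_eq_add_of_lt (show 0 < i by omega)
    exact hp.isNonBacktracking.adj _ (by omega)

lemma shift_ne_of_adj (hG : G.IsTree) (hv : IsValid G (LevelCompat C) J ℓ)
    (hp : IsShiftable G ℓ p n t) {i : ℕ} (hi : i ≤ n) (hit : i ≠ t) {w : V} (hw : G.Adj (p i) w) :
    shift G ℓ p n t (p i) ≠ shift G ℓ p n t w := by
  intro h
  by_cases hwp : ∃ k ≤ n, w = p k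
  · obtain ⟨k, hk, rfl⟩ := hwp
    obtain rfl | hkt := eq_or_ne k t
    · have := hp.shift_lt_four hG hi hit
      rw [h, hp.shift_target hG] at this
      exact lt_irrefl _ this
    rw [hp.shift_of_ne hG hi hit, hp.shift_of_ne hG hk hkt] at h
    rcases hp.isNonBacktracking.eq_add_one_or_of_adj hG hi hk hw with rfl | rfl
    · exact hv.ne_of_adj (hp.adj_toward hk hit hkt) (hp.lt_four i hi hit) h
    · exact hv.ne_of_adj (hp.adj_toward hi hkt hit) (hp.lt_four k hk hkt) h.symm
  · rw [shift_of_notMem fun k hk hwk => hwp ⟨k, hk, hwk⟩, hp.shift_of_ne hG hi hit] at h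
    exact hwp (hp.mem_path i hi hit w hw h.symm)

lemma shift_ne_of_lt_four (hG : G.IsTree) (hv : IsValid G (LevelCompat C) J ℓ)
    (hp : IsShiftable G ℓ p n t) {u w : V} (huw : G.Adj u w) (hu : shift G ℓ p n t u < 4) :
    shift G ℓ p n t u ≠ shift G ℓ p n t w := by
  by_cases hup : ∃ i ≤ n, u = p i
  · obtain ⟨i, hi, rfl⟩ := hup
    refine hp.shift_ne_of_adj hG hv hi ?_ huw
    rintro rfl
    rw [hp.shift_target hG] at hu
    exact lt_irrefl _ hu
  · by_cases hwp : ∃ i ≤ n, w = p i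
    · obtain ⟨i, hi, rfl⟩ := hwp
      obtain rfl | hit := eq_or_ne i t
      · rw [hp.shift_target hG]
        exact hu.ne
      · exact (hp.shift_ne_of_adj hG hv hi hit huw.symm).symm
    · rw [shift_of_notMem fun k hk h => hup ⟨k, hk, h⟩] at hu ⊢
      rw [shift_of_notMem fun k hk h => hwp ⟨k, hk, h⟩]
      exact hv.ne_of_adj huw hu

lemma isValid_shift (hG : G.IsTree) (hv : IsValid G (LevelCompat C) J ℓ) (hJ : 4 < J)
    (hp : IsShiftable G ℓ p n t) : IsValid G (LevelCompat C) J (shift G ℓ p n t) where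
  compat u w huw :=
    { color_ne := fun h hu =>
        hp.shift_ne_of_lt_four hG hv (SimpleGraph.dist_eq_one_iff_adj.mp h) hu
      levelGap_le := fun k hu hw => by
        rw [hp.shift_eq_of_five_le hG (by omega)] at hu hw
        exact (hv.compat u w huw).levelGap_le k hu hw
      four_le := fun hu hw => by
        rw [hp.shift_eq_of_five_le hG hu] at hu
        rw [hp.shift_eq_of_five_le hG hw] at hw
        exact (hv.compat u w huw).four_le hu hw }
  lt w := by
    by_cases h : 5 ≤ shift G ℓ p n t w
    · rw [hp.shift_eq_of_five_le hG h]
      exact hv.lt w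
    · omega

lemma isImprovable_of_update [DecidableEq V] {d : ℕ} (hG : IsRegularTree G d)
    (hp : IsShiftable G ℓ p n t) (hn : n ≤ 2 * L + 2) {c : ℕ}
    (hv : IsValid G (LevelCompat C) (j + 6) (Function.update (shift G ℓ p n t) (p t) c))
    (hc : (stageSearch C j L).weight c <
      ∑ i ∈ Finset.range (n + 1), (stageSearch C j L).weight (ℓ (p i))) :
    (stageSearch C j L).IsImprovable G ℓ (p 0) := by
  refine LocalSearch.isImprovable_of_path hG hp.isNonBacktracking hn (Nat.succ_le_succ hn) hv
    (fun w hw => ?_) ?_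
  · rw [Function.update_of_ne (hw t hp.le), shift_of_notMem hw]
  · rwa [Finset.sum_eq_single_of_mem t (by simpa [Nat.lt_succ_iff] using hp.le),
      Function.update_self]
    intro i hi hit
    have hi : i ≤ n := by simpa [Nat.lt_succ_iff] using hi
    have hlt := hp.shift_lt_four hG.isTree hi hit
    rw [Function.update_of_ne fun h => hit (hp.isNonBacktracking.injective hG.isTree hi hp.le h)]
    simp only [stageSearch]
    rw [if_neg (by omega), if_neg (by omega)]

end IsShiftable

end Colouring

/-! ### Rays of holes that cannot be filled -/

section Rays

variable {V : Type*} {G : SimpleGraph V} {C J j L : ℕ} {ℓ : V → ℕ} {p q : ℕ → V} {m n : ℕ}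

/-- A path `p 0, …, p n` along which a hole at `p 0` can be moved, shifting the colours back. -/
structure IsRay (G : SimpleGraph V) (ℓ : V → ℕ) (p : ℕ → V) (n : ℕ) : Prop where
  isNonBacktracking : IsNonBacktracking G p n
  lt_four : ∀ i < n, ℓ (p (i + 1)) < 4
  mem_path : ∀ i < n, ∀ w, G.Adj (p i) w → ℓ w = ℓ (p (i + 1)) → ∃ k ≤ i + 1, w = p k

/-- Some vertex of red level `k` lies within distance `r` of `w`. -/
def IsNearLevel (G : SimpleGraph V) (r k : ℕ) (ℓ : V → ℕ) (w : V) : Prop :=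
  ∃ u, ℓ u = k + 5 ∧ G.dist w u ≤ r

lemma exists_mem_forall_eq_of_card_lt {α β : Type*} {N : Finset α} {K : Finset β}
    {f : α → β} (hcard : N.card < 2 * K.card) (hK : ∀ c ∈ K, ∃ w ∈ N, f w = c) :
    ∃ w ∈ N, f w ∈ K ∧ ∀ u ∈ N, f u = f w → u = w := by
  classical
  obtain ⟨c, hc, hlt⟩ := Finset.exists_card_fiber_lt_of_card_lt_mul (f := f)
    (show N.card < K.card * 2 by omega)
  obtain ⟨w, hw, rfl⟩ := hK c hc
  refine ⟨w, hw, hc, fun u hu huw => ?_⟩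
  exact Finset.card_le_one.mp (Nat.lt_succ_iff.mp hlt) u (by simp [hu, huw]) w (by simp [hw])

namespace IsRay

lemma mono (hp : IsRay G ℓ p n) (hmn : m ≤ n) : IsRay G ℓ p m where
  isNonBacktracking :=
    ⟨fun i hi => hp.isNonBacktracking.adj i (by omega),
      fun i hi => hp.isNonBacktracking.ne i (by omega)⟩
  lt_four i hi := hp.lt_four i (by omega)
  mem_path i hi := hp.mem_path i (by omega)

lemma congr (hp : IsRay G ℓ p n) (h : ∀ i ≤ n, p i = q i) : IsRay G ℓ q n where
  isNonBacktracking :=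
    { adj := fun i hi => by
        rw [← h i hi.le, ← h (i + 1) hi]
        exact hp.isNonBacktracking.adj i hi
      ne := fun i hi => by
        rw [← h i (by omega), ← h (i + 2) hi]
        exact hp.isNonBacktracking.ne i hi }
  lt_four i hi := by
    rw [← h (i + 1) hi]
    exact hp.lt_four i hi
  mem_path i hi w hw hℓ := by
    rw [← h i hi.le] at hw
    rw [← h (i + 1) hi] at hℓ
    obtain ⟨k, hk, rfl⟩ := hp.mem_path i hi w hw hℓ
    exact ⟨k, hk, h k (by omega)⟩

lemma isShiftable (hp : IsRay G ℓ p n) : IsShiftable G ℓ p n n where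
  isNonBacktracking := hp.isNonBacktracking
  le := le_rfl
  lt_four i hi hin := by
    rw [toward, if_pos (by omega)]
    exact hp.lt_four i (by omega)
  mem_path i hi hin w hw h := by
    rw [toward, if_pos (by omega)] at h
    obtain ⟨k, hk, rfl⟩ := hp.mem_path i (by omega) w hw h
    exact ⟨k, by omega, rfl⟩

lemma comp_symm (hp : IsRay G ℓ p n) (φ : G ≃g G) : IsRay G (ℓ ∘ φ.symm) (φ ∘ p) n where
  isNonBacktracking :=
    ⟨fun i hi => φ.map_adj_iff.mpr (hp.isNonBacktracking.adj i hi),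
      fun i hi => φ.injective.ne (hp.isNonBacktracking.ne i hi)⟩
  lt_four i hi := by simpa using hp.lt_four i hi
  mem_path i hi w hw h := by
    have hw' : G.Adj (p i) (φ.symm w) := by
      rw [← φ.map_adj_iff]
      simpa using hw
    obtain ⟨k, hk, hwk⟩ := hp.mem_path i hi (φ.symm w) hw' (by simpa using h)
    exact ⟨k, hk, by simp [← hwk]⟩

lemma snoc (hp : IsRay G ℓ p n) {w : V} (hadj : G.Adj (p n) w) (hoff : ∀ k ≤ n, w ≠ p k)
    (hw : ℓ w < 4) (huniq : ∀ u, G.Adj (p n) u → ℓ u = ℓ w → (∀ k ≤ n, u ≠ p k) → u = w) :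
    IsRay G ℓ (fun i => if i ≤ n then p i else w) (n + 1) where
  isNonBacktracking :=
    { adj := fun i hi => by
        obtain hi | rfl := Nat.lt_succ_iff_lt_or_eq.mp hi
        · simpa [hi.le, Nat.succ_le_iff.mpr hi] using hp.isNonBacktracking.adj i hi
        · simpa using hadj
      ne := fun i hi => by
        obtain hi' | hi' := Nat.lt_or_ge n (i + 2)
        · simpa [show ¬ i + 2 ≤ n by omega, show i ≤ n by omega] using hoff i (by omega)
        · simpa [hi', show i ≤ n by omega] using hp.isNonBacktracking.ne i hi' }
  lt_four i hi := by
    obtain hi | rfl := Nat.lt_succ_iff_lt_or_eq.mp hi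
    · simpa [Nat.succ_le_iff.mpr hi] using hp.lt_four i hi
    · simpa using hw
  mem_path i hi u hu h := by
    obtain hi | rfl := Nat.lt_succ_iff_lt_or_eq.mp hi
    · obtain ⟨k, hk, rfl⟩ := hp.mem_path i hi u (by simpa [hi.le] using hu)
        (by simpa [Nat.succ_le_iff.mpr hi] using h)
      exact ⟨k, hk, by simp [show k ≤ n by omega]⟩
    · by_cases hup : ∃ k ≤ i, u = p k
      · obtain ⟨k, hk, rfl⟩ := hup
        exact ⟨k, by omega, by simp [hk]⟩
      · refine ⟨i + 1, le_rfl, ?_⟩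
        simpa using huniq u (by simpa using hu) (by simpa using h)
          fun k hk huk => hup ⟨k, hk, huk⟩

lemma isImprovable_of_update [DecidableEq V] {d : ℕ} (hG : IsRegularTree G d)
    (hp : IsRay G ℓ p n) (h0 : ℓ (p 0) = 4) (hn : n ≤ 2 * L + 2) {c : ℕ} (hc : c ≠ 4)
    (hv : IsValid G (LevelCompat C) (j + 6) (Function.update (shift G ℓ p n n) (p n) c)) :
    (stageSearch C j L).IsImprovable G ℓ (p 0) := by
  refine hp.isShiftable.isImprovable_of_update hG hn hv ?_
  calc (stageSearch C j L).weight c < 2 := by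
        simp only [stageSearch, if_neg hc]
        split_ifs <;> decide
    _ = (stageSearch C j L).weight (ℓ (p 0)) := by simp [stageSearch, h0]
    _ ≤ _ := Finset.single_le_sum (f := fun i => (stageSearch C j L).weight (ℓ (p i)))
        (fun _ _ => Nat.zero_le _) (by simp)

lemma exists_adj_shift_eq {d : ℕ} (hG : IsRegularTree G d)
    (hv : IsValid G (LevelCompat C) (j + 6) ℓ) (hp : IsRay G ℓ p n) (h0 : ℓ (p 0) = 4)
    (hn : n ≤ 2 * L + 2) (hI : ¬ (stageSearch C j L).IsImprovable G ℓ (p 0)) {c : ℕ} (hc : c < 4) :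
    ∃ w, G.Adj (p n) w ∧ shift G ℓ p n n w = c := by
  classical
  by_contra! h
  refine hI (hp.isImprovable_of_update hG h0 hn hc.ne (.update (fun _ _ _ => .symm)
    (hp.isShiftable.isValid_shift hG.isTree hv (by omega)) (by omega) fun w _ => ?_))
  exact ⟨fun hw _ => (h w (SimpleGraph.dist_eq_one_iff_adj.mp hw)).symm, by omega, by omega⟩

/-- A new vertex of red level `j` may be placed at the end of the ray unless another red vertex is
too close. -/
lemma exists_isNearLevel {d : ℕ} (hG : IsRegularTree G d) (hC : 2 ≤ C)
    (hv : IsValid G (LevelCompat C) (j + 6) ℓ) (hp : IsRay G ℓ p n) (h0 : ℓ (p 0) = 4)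
    (hn : n ≤ 2 * L + 2) (hI : ¬ (stageSearch C j L).IsImprovable G ℓ (p 0)) :
    (∃ k < j, IsNearLevel G 3 k ℓ (p n)) ∨ IsNearLevel G (levelGap C j) j ℓ (p n) := by
  classical
  by_contra! h
  have hgap : 3 ≤ levelGap C j := by
    unfold levelGap
    nlinarith [Nat.zero_le (C * j), Nat.zero_le (C * j * j)]
  refine hI (hp.isImprovable_of_update hG h0 hn (c := j + 5) (by omega) (.update
    (fun _ _ _ => .symm) (hp.isShiftable.isValid_shift hG.isTree hv (by omega)) (by omega)
    fun w _ => ⟨by omega, fun k hk hw => ?_, fun _ hw => ?_⟩))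
  · rw [hp.isShiftable.shift_eq_of_five_le hG.isTree (by omega)] at hw
    obtain rfl : j = k := by omega
    by_contra! hlt
    exact h.2 ⟨w, hw, hlt.le⟩
  · rw [hp.isShiftable.shift_eq_of_five_le hG.isTree hw] at hw
    have hwj := hv.lt w
    by_contra! hlt
    obtain ⟨k, hk⟩ := Nat.exists_eq_add_of_le' hw
    obtain hkj | rfl := Nat.lt_or_eq_of_le (show k ≤ j by omega)
    · exact h.1 k hkj ⟨w, hk, by omega⟩
    · exact h.2 ⟨w, hk, by omega⟩

lemma exists_isRay_succ (hG : IsRegularTree G 6) (hv : IsValid G (LevelCompat C) (j + 6) ℓ)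
    (hp : IsRay G ℓ p n) (h0 : ℓ (p 0) = 4) (hn : n ≤ 2 * L + 2)
    (hI : ¬ (stageSearch C j L).IsImprovable G ℓ (p 0)) :
    ∃ q, IsRay G ℓ q (n + 1) ∧ q 0 = p 0 := by
  classical
  set S := shift G ℓ p n n
  set A := (hG.finite_neighborSet (p n)).toFinset with hA
  set B := {w ∈ A | ∃ k ≤ n, w = p k} with hB
  have hAcard : A.card = 6 := by
    rw [hA, ← Set.ncard_eq_toFinset_card _ (hG.finite_neighborSet _), hG.ncard_neighborSet]
  have hBcard : B.card ≤ 1 := by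
    have hB_sub : B ⊆ {p (n - 1)} := fun w hw => by
      obtain ⟨hw, k, hk, rfl⟩ := Finset.mem_filter.mp hw
      have := hp.isNonBacktracking.eq_add_one_or_of_adj hG.isTree le_rfl hk (by simpa [hA] using hw)
      simp [show n - 1 = k by omega]
    simpa using Finset.card_le_card hB_sub
  -- Excluding a single neighbour from `A` and a single colour keeps `5 < 2 * 3`.
  have hcard : (A \ B).card < 2 * (Finset.range 4 \ B.image S).card := by
    have hA' : (A \ B).card + B.card = A.card :=
      Finset.card_sdiff_add_card_eq_card (Finset.filter_subset _ A)
    have hK := Finset.le_card_sdiff (B.image S) (Finset.range 4)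
    have hBS : (B.image S).card ≤ B.card := Finset.card_image_le
    rw [Finset.card_range] at hK
    omega
  have hmem {w : V} : w ∈ A \ B ↔ G.Adj (p n) w ∧ ∀ k ≤ n, w ≠ p k := by
    simp only [hA, hB, Finset.mem_sdiff, Finset.mem_filter, Set.Finite.mem_toFinset,
      SimpleGraph.mem_neighborSet]
    push Not
    exact ⟨fun h => ⟨h.1, h.2 h.1⟩, fun h => ⟨h.1, fun _ => h.2⟩⟩
  obtain ⟨w, hw, hwK, huniq⟩ := exists_mem_forall_eq_of_card_lt hcard (f := ℓ) fun c hc => by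
    obtain ⟨hc4, hcB⟩ := Finset.mem_sdiff.mp hc
    obtain ⟨w, hw, rfl⟩ := hp.exists_adj_shift_eq hG hv h0 hn hI (Finset.mem_range.mp hc4)
    have hwA : w ∈ A \ B := Finset.mem_sdiff.mpr
      ⟨by simpa [hA] using hw, fun hwB => hcB (Finset.mem_image_of_mem S hwB)⟩
    exact ⟨w, hwA, (shift_of_notMem (hmem.mp hwA).2).symm⟩
  obtain ⟨hadj, hoff⟩ := hmem.mp hw
  refine ⟨_, hp.snoc hadj hoff (Finset.mem_range.mp (Finset.mem_sdiff.mp hwK).1)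
    fun u hu huw hu' => huniq u (hmem.mpr ⟨hu, hu'⟩) huw, by simp⟩

end IsRay

lemma exists_isRay (hG : IsRegularTree G 6) (hv : IsValid G (LevelCompat C) (j + 6) ℓ) {v : V}
    (h0 : ℓ v = 4) (hI : ¬ (stageSearch C j L).IsImprovable G ℓ v) (hn : n ≤ 2 * L + 3) :
    ∃ p, IsRay G ℓ p n ∧ p 0 = v := by
  induction n with
  | zero => exact ⟨fun _ => v, ⟨⟨by simp, by omega⟩, by simp, by simp⟩, rfl⟩
  | succ n ih =>
    obtain ⟨p, hp, rfl⟩ := ih (by omega)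
    exact hp.exists_isRay_succ hG hv h0 (by omega) hI

/-! ### Disjointness of rays -/

/-- The path `p 0, …, p m = q n, …, q 0`. -/
def joinPath (p q : ℕ → V) (m n i : ℕ) : V := if i ≤ m then p i else q (m + n - i)

lemma joinPath_of_le {i : ℕ} (hi : i ≤ m) : joinPath p q m n i = p i := if_pos hi

lemma joinPath_of_ge (h : p m = q n) {i : ℕ} (hi : m ≤ i) :
    joinPath p q m n i = q (m + n - i) := by
  obtain rfl | hi := hi.eq_or_lt
  · rw [joinPath_of_le le_rfl, h, Nat.add_sub_cancel_left]
  · exact if_neg hi.not_ge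

lemma IsNonBacktracking.join (hp : IsNonBacktracking G p (m + 1))
    (hq : IsNonBacktracking G q (n + 1)) (h : p (m + 1) = q (n + 1)) (hne : p m ≠ q n) :
    IsNonBacktracking G (joinPath p q (m + 1) (n + 1)) (m + 1 + (n + 1)) where
  adj i hi := by
    obtain hi' | hi' := Nat.lt_or_ge i (m + 1)
    · rw [joinPath_of_le hi'.le, joinPath_of_le hi']
      exact hp.adj i hi'
    · rw [joinPath_of_ge h hi', joinPath_of_ge h (by omega),
        show m + 1 + (n + 1) - i = m + 1 + (n + 1) - (i + 1) + 1 by omega]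
      exact (hq.adj _ (by omega)).symm
  ne i hi := by
    obtain hi' | rfl | hi' := lt_trichotomy i m
    · rw [joinPath_of_le (i := i) (by omega), joinPath_of_le (by omega)]
      exact hp.ne i (by omega)
    · rw [joinPath_of_le (i := i) (by omega), joinPath_of_ge h (by omega),
        show i + 1 + (n + 1) - (i + 2) = n by omega]
      exact hne.symm
    · rw [joinPath_of_ge h (i := i) (by omega), joinPath_of_ge h (by omega),
        show m + 1 + (n + 1) - i = m + 1 + (n + 1) - (i + 2) + 2 by omega]
      exact (hq.ne _ (by omega)).symm

lemma IsRay.isShiftable_joinPath (hp : IsRay G ℓ p (m + 1)) (hq : IsRay G ℓ q (n + 1))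
    (h : p (m + 1) = q (n + 1)) (hne : p m ≠ q n) :
    IsShiftable G ℓ (joinPath p q (m + 1) (n + 1)) (m + 1 + (n + 1)) (m + 1) where
  isNonBacktracking := hp.isNonBacktracking.join hq.isNonBacktracking h hne
  le := by omega
  lt_four i hi hit := by
    obtain hi' | hi' := Nat.lt_or_ge i (m + 1)
    · rw [toward, if_pos hi', joinPath_of_le hi']
      exact hp.lt_four i hi'
    · rw [toward, if_neg hi'.not_gt, joinPath_of_ge h (by omega),
        show m + 1 + (n + 1) - (i - 1) = m + 1 + (n + 1) - i + 1 by omega]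
      exact hq.lt_four _ (by omega)
  mem_path i hi hit w hw hℓ := by
    obtain hi' | hi' := Nat.lt_or_ge i (m + 1)
    · rw [joinPath_of_le hi'.le] at hw
      rw [toward, if_pos hi', joinPath_of_le hi'] at hℓ
      obtain ⟨k, hk, rfl⟩ := hp.mem_path i hi' w hw hℓ
      exact ⟨k, by omega, (joinPath_of_le (by omega)).symm⟩
    · rw [joinPath_of_ge h hi'] at hw
      rw [toward, if_neg hi'.not_gt, joinPath_of_ge h (by omega),
        show m + 1 + (n + 1) - (i - 1) = m + 1 + (n + 1) - i + 1 by omega] at hℓ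
      obtain ⟨k, hk, rfl⟩ := hq.mem_path _ (by omega) w hw hℓ
      refine ⟨m + 1 + (n + 1) - k, by omega, ?_⟩
      rw [joinPath_of_ge h (by omega), show m + 1 + (n + 1) - (m + 1 + (n + 1) - k) = k by omega]

/-- Moving two holes to the same vertex destroys one of them. -/
lemma IsRay.isImprovable_of_meet {d : ℕ} (hG : IsRegularTree G d)
    (hv : IsValid G (LevelCompat C) (j + 6) ℓ) (hp : IsRay G ℓ p (m + 1))
    (hq : IsRay G ℓ q (n + 1)) (hm : m ≤ L) (hn : n ≤ L) (hp0 : ℓ (p 0) = 4) (hq0 : ℓ (q 0) = 4)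
    (h : p (m + 1) = q (n + 1)) (hne : p m ≠ q n) :
    (stageSearch C j L).IsImprovable G ℓ (p 0) := by
  classical
  have hr := hp.isShiftable_joinPath hq h hne
  have hfirst : joinPath p q (m + 1) (n + 1) 0 = p 0 := joinPath_of_le (Nat.zero_le _)
  have hlast : joinPath p q (m + 1) (n + 1) (m + 1 + (n + 1)) = q 0 := by
    rw [joinPath_of_ge h (by omega), Nat.sub_self]
  rw [← hfirst]
  refine hr.isImprovable_of_update hG (by omega) (c := 4) ?_ ?_
  · rw [Function.update_eq_self_iff.mpr (hr.shift_target hG.isTree).symm]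
    exact hr.isValid_shift hG.isTree hv (by omega)
  · rw [Finset.sum_range_succ, hlast, hq0, show m + 1 + (n + 1) = m + n + 1 + 1 by omega,
      Finset.sum_range_succ', hfirst, hp0]
    simp only [stageSearch, if_true]
    omega

lemma IsRay.start_eq_of_end_eq {d : ℕ} (hG : IsRegularTree G d)
    (hv : IsValid G (LevelCompat C) (j + 6) ℓ) (hp : IsRay G ℓ p m) (hq : IsRay G ℓ q n)
    (hm : m ≤ L) (hn : n ≤ L) (hp0 : ℓ (p 0) = 4) (hq0 : ℓ (q 0) = 4)
    (hI : ¬ (stageSearch C j L).IsImprovable G ℓ (p 0)) (h : p m = q n) : p 0 = q 0 := by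
  induction m generalizing n with
  | zero =>
    cases n with
    | zero => exact h
    | succ n =>
      have hlt := hq.lt_four n n.lt_succ_self
      rw [← h, hp0] at hlt
      exact absurd hlt (lt_irrefl 4)
  | succ m ih =>
    cases n with
    | zero =>
      have hlt := hp.lt_four m m.lt_succ_self
      rw [h, hq0] at hlt
      exact absurd hlt (lt_irrefl 4)
    | succ n =>
      by_cases hmn : p m = q n
      · exact ih (hp.mono m.le_succ) (hq.mono n.le_succ) (by omega) (by omega) hmn
      · exact absurd (hp.isImprovable_of_meet hG hv hq (by omega) (by omega) hp0 hq0 h hmn) hI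

/-! ### Rays spend half of their length close to the newest red level -/

lemma card_le_of_separated {A : Finset ℕ} {W c : ℕ} (hW : 0 < W) (hc : 0 < c)
    (hA : A ⊆ Finset.range (L + 1))
    (hsep : ∀ i ∈ A, ∀ k ∈ A, i < k → k < i + W → k < i + c) : A.card ≤ c * (L / W + 1) := by
  have hinj : Set.InjOn (fun i => (i / W, i % c)) (A : Set ℕ) := by
    have key : ∀ i ∈ A, ∀ k ∈ A, i < k → i / W = k / W → i % c ≠ k % c := by
      intro i hi k hk hik hdiv hmod
      have hkW : k < i + W := calc
        k < W * (i / W + 1) := hdiv ▸ Nat.lt_mul_div_succ k hW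
        _ ≤ i + W := by
          rw [mul_add_one]
          gcongr
          exact Nat.mul_div_le i W
      have hlt := hsep i hi k hk hik hkW
      have hdvd : c ∣ k - i := (Nat.modEq_iff_dvd' hik.le).mp hmod
      have := Nat.le_of_dvd (by omega) hdvd
      omega
    intro i hi k hk h
    obtain ⟨hdiv, hmod⟩ := Prod.mk.inj h
    obtain hik | hik | hik := lt_trichotomy i k
    · exact absurd hmod (key i hi k hk hik hdiv)
    · exact hik
    · exact absurd hmod.symm (key k hk i hi hik hdiv.symm)
  have hmaps : Set.MapsTo (fun i => (i / W, i % c)) (A : Set ℕ)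
      (Finset.range (L / W + 1) ×ˢ Finset.range c : Finset (ℕ × ℕ)) := fun i hi => by
    have hiL := Finset.mem_range.mp (hA hi)
    simpa [Nat.mod_lt i hc, Nat.lt_succ_iff] using Nat.div_le_div_right (Nat.lt_succ_iff.mp hiL)
  calc A.card ≤ _ := Finset.card_le_card_of_injOn _ hmaps hinj
    _ = c * (L / W + 1) := by simp [mul_comm]

lemma sum_range_one_div_succ_mul (n : ℕ) :
    ∑ k ∈ Finset.range n, 1 / (((k : ℝ) + 1) * (k + 2)) = 1 - 1 / (n + 1) := by
  induction n with
  | zero => simp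
  | succ n ih =>
    rw [Finset.sum_range_succ, ih]
    push_cast
    field_simp
    ring

lemma mul_sum_range_div_le (c j L : ℕ) :
    c * ∑ k ∈ Finset.range j, L / (c * ((k + 1) * (k + 2))) ≤ L := by
  obtain rfl | hc := c.eq_zero_or_pos
  · simp
  have h : (c : ℝ) * ∑ k ∈ Finset.range j, ((L / (c * ((k + 1) * (k + 2))) : ℕ) : ℝ) ≤ L := calc
    _ ≤ (c : ℝ) * ∑ k ∈ Finset.range j, (L / c : ℝ) * (1 / ((k + 1) * (k + 2))) := by
      gcongr with k
      refine Nat.cast_div_le.trans_eq ?_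
      push_cast
      field_simp
    _ = L * (1 - 1 / (j + 1)) := by
      rw [← Finset.mul_sum, sum_range_one_div_succ_mul]
      field_simp
    _ ≤ L * 1 := by
      gcongr
      exact sub_le_self _ (by positivity)
    _ = L := mul_one _
  exact_mod_cast h

open Classical in
lemma IsRay.card_isNearLevel_le {d : ℕ} (hG : IsRegularTree G d)
    (hv : IsValid G (LevelCompat C) J ℓ) (hp : IsRay G ℓ p L) {k W : ℕ} (hW : 0 < W)
    (hgap : W + 6 ≤ levelGap C k) :
    ({i ∈ Finset.range (L + 1) | IsNearLevel G 3 k ℓ (p i)}).card ≤ 7 * (L / W + 1) := by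
  refine card_le_of_separated hW (by simp) (Finset.filter_subset _ _) fun i hi i' hi' hlt hltW => ?_
  obtain ⟨-, w, hw, hiw⟩ := Finset.mem_filter.mp hi
  obtain ⟨hi', w', hw', hiw'⟩ := Finset.mem_filter.mp hi'
  have hdist := hp.isNonBacktracking.dist_eq hG.isTree hlt.le
    (Nat.lt_succ_iff.mp (Finset.mem_range.mp hi'))
  have h₁ := hG.dist_triangle (p i) w (p i')
  have h₂ := hG.dist_triangle w (p i) w'
  have h₃ := hG.dist_triangle (p i) (p i') w'
  rw [G.dist_comm (u := w) (v := p i')] at h₁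
  rw [G.dist_comm (u := w) (v := p i)] at h₂
  obtain rfl | hne := eq_or_ne w w'
  · omega
  · have := (hv.compat w w' hne).levelGap_le k hw hw'
    omega

open Classical in
lemma IsRay.half_le_card_isNearLevel {d : ℕ} (hG : IsRegularTree G d) (hC : 112 ≤ C)
    (hL : 28 * j ≤ L + 1) (hv : IsValid G (LevelCompat C) (j + 6) ℓ) (hp : IsRay G ℓ p L)
    (h0 : ℓ (p 0) = 4) (hI : ¬ (stageSearch C j L).IsImprovable G ℓ (p 0)) :
    (L + 1) / 2 ≤ ({i ∈ Finset.range (L + 1) | IsNearLevel G (levelGap C j) j ℓ (p i)}).card := by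
  set A := {i ∈ Finset.range (L + 1) | IsNearLevel G (levelGap C j) j ℓ (p i)}
  set B : ℕ → Finset ℕ := fun k => {i ∈ Finset.range (L + 1) | IsNearLevel G 3 k ℓ (p i)}
  have hcover : Finset.range (L + 1) ⊆ A ∪ (Finset.range j).biUnion B := fun i hi => by
    have hiL := Nat.lt_succ_iff.mp (Finset.mem_range.mp hi)
    obtain ⟨k, hk, hnear⟩ | hnear :=
      (hp.mono hiL).exists_isNearLevel hG (by omega) hv h0 (by omega) hI
    · exact Finset.mem_union_right _ (Finset.mem_biUnion.mpr
        ⟨k, Finset.mem_range.mpr hk, Finset.mem_filter.mpr ⟨hi, hnear⟩⟩)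
    · exact Finset.mem_union_left _ (Finset.mem_filter.mpr ⟨hi, hnear⟩)
  have hB (k : ℕ) : (B k).card ≤ 7 * (L / (56 * ((k + 1) * (k + 2))) + 1) := by
    refine hp.card_isNearLevel_le hG hv (by positivity) ?_
    have hgap : 112 * ((k + 1) * (k + 2)) ≤ levelGap C k := by
      rw [levelGap, mul_assoc]
      gcongr
    nlinarith
  have hsum : ((Finset.range j).biUnion B).card ≤
      7 * ∑ k ∈ Finset.range j, L / (56 * ((k + 1) * (k + 2))) + 7 * j := calc
    _ ≤ ∑ k ∈ Finset.range j, (B k).card := Finset.card_biUnion_le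
    _ ≤ ∑ k ∈ Finset.range j, 7 * (L / (56 * ((k + 1) * (k + 2))) + 1) :=
      Finset.sum_le_sum fun k _ => hB k
    _ = _ := by simp [← Finset.mul_sum, Finset.sum_add_distrib, mul_add, mul_comm j]
  have htotal := (Finset.card_le_card hcover).trans (Finset.card_union_le _ _)
  have hsparse := mul_sum_range_div_le 56 j L
  rw [Finset.card_range] at htotal
  omega

/-! ### Vertices reached by rays -/

/-- A hole at `v` can be moved to `w` along a ray of length at most `L`. -/
def Reaches (G : SimpleGraph V) (L : ℕ) (ℓ : V → ℕ) (v w : V) : Prop :=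
  ∃ p, ∃ n ≤ L, IsRay G ℓ p n ∧ p 0 = v ∧ p n = w

lemma Reaches.dist_le (hG : G.IsTree) {v w : V} (h : Reaches G L ℓ v w) : G.dist v w ≤ L := by
  obtain ⟨p, n, hn, hp, rfl, rfl⟩ := h
  rwa [hp.isNonBacktracking.dist_eq hG n.zero_le le_rfl]

lemma Reaches.comp_symm {v w : V} (h : Reaches G L ℓ v w) (φ : G ≃g G) :
    Reaches G L (ℓ ∘ φ.symm) (φ v) (φ w) := by
  obtain ⟨p, n, hn, hp, rfl, rfl⟩ := h
  exact ⟨φ ∘ p, n, hn, hp.comp_symm φ, rfl, rfl⟩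

lemma IsNonBacktracking.eq_of_ends_eq (hG : G.IsTree) (hp : IsNonBacktracking G p n)
    (hq : IsNonBacktracking G q n) (h0 : p 0 = q 0) (hn : p n = q n) : ∀ i ≤ n, p i = q i := by
  intro i hi
  induction hi using Nat.decreasingInduction with
  | self => exact hn
  | of_succ i hi ih =>
    have hdist (k : ℕ) (hk : k ≤ n) : G.dist (p 0) (p k) = k ∧ G.dist (p 0) (q k) = k := by
      have hpk := hp.dist_eq hG k.zero_le hk
      have hqk := hq.dist_eq hG k.zero_le hk
      exact ⟨hpk, h0 ▸ hqk⟩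
    refine eq_of_adj_of_dist_add_one hG (r := p 0) (w := p (i + 1)) (hp.adj i hi)
      (ih ▸ hq.adj i hi) ?_ ?_
    · rw [(hdist i hi.le).1, (hdist _ hi).1]
    · rw [(hdist i hi.le).2, (hdist _ hi).1]

lemma reaches_iff_isRay (hG : G.IsTree) (hp : IsNonBacktracking G p n) :
    Reaches G L ℓ (p 0) (p n) ↔ n ≤ L ∧ IsRay G ℓ p n := by
  refine ⟨fun ⟨q, m, hm, hq, hq0, hqm⟩ => ?_, fun ⟨hn, h⟩ => ⟨p, n, hn, h, rfl, rfl⟩⟩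
  have hmn : m = n := by
    have h := hq.isNonBacktracking.dist_eq hG m.zero_le le_rfl
    rw [hq0, hqm, hp.dist_eq hG n.zero_le le_rfl] at h
    exact h.symm
  subst hmn
  exact ⟨hm, hq.congr (hq.isNonBacktracking.eq_of_ends_eq hG hp hq0 hqm)⟩

lemma measurableSet_isRay [Countable V] (p : ℕ → V) (n : ℕ) :
    MeasurableSet {ℓ : V → ℕ | IsRay G ℓ p n} := by
  have h : {ℓ | IsRay G ℓ p n} = {_ℓ | IsNonBacktracking G p n} ∩
      (⋂ i < n, {ℓ | ℓ (p (i + 1)) < 4}) ∩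
      ⋂ (i < n) (w) (_ : G.Adj (p i) w), {ℓ | ℓ w = ℓ (p (i + 1)) → ∃ k ≤ i + 1, w = p k} := by
    ext ℓ
    simp only [Set.mem_inter_iff, Set.mem_iInter, Set.mem_ofPred_eq]
    exact ⟨fun h => ⟨⟨h.1, h.2⟩, h.3⟩, fun h => ⟨h.1.1, h.1.2, h.2⟩⟩
  have hmeas (u : V) : Measurable fun ℓ : V → ℕ => ℓ u := measurable_pi_apply u
  rw [h]
  refine (MeasurableSet.const _ |>.inter (.iInter fun i => .iInter fun _ => ?_)).inter
    (.iInter fun i => .iInter fun _ => .iInter fun w => .iInter fun _ => ?_)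
  · exact measurableSet_lt (hmeas _) measurable_const
  · exact (measurableSet_eq_fun (hmeas _) (hmeas _)).imp (.const _)

lemma measurableSet_reaches [Countable V] (hG : G.IsTree) (L : ℕ) (v w : V) :
    MeasurableSet {ℓ : V → ℕ | Reaches G L ℓ v w} := by
  obtain ⟨p, hp, rfl, hw⟩ := exists_isNonBacktracking hG v w
  rw [← hw]
  simp only [reaches_iff_isRay hG hp]
  exact (MeasurableSet.const _).inter (measurableSet_isRay p _)

lemma Reaches.unique {d : ℕ} (hG : IsRegularTree G d) (hv : IsValid G (LevelCompat C) (j + 6) ℓ)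
    {u v w : V} (hu : ℓ u = 4) (hv0 : ℓ v = 4) (hI : ¬ (stageSearch C j L).IsImprovable G ℓ u)
    (huw : Reaches G L ℓ u w) (hvw : Reaches G L ℓ v w) : u = v := by
  obtain ⟨p, m, hm, hp, rfl, hpw⟩ := huw
  obtain ⟨q, n, hn, hq, rfl, hqw⟩ := hvw
  exact hp.start_eq_of_end_eq hG hv hq hm hn hu hv0 hI (hpw.trans hqw.symm)

open Classical in
lemma half_le_card_reaches (hG : IsRegularTree G 6) (hC : 112 ≤ C) (hL : 28 * j ≤ L + 1)
    (hv : IsValid G (LevelCompat C) (j + 6) ℓ) {v : V} (h0 : ℓ v = 4)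
    (hI : ¬ (stageSearch C j L).IsImprovable G ℓ v) :
    (L + 1) / 2 ≤ ({w ∈ closedBall G v L |
      Reaches G L ℓ v w ∧ IsNearLevel G (levelGap C j) j ℓ w}).card := by
  obtain ⟨p, hp, rfl⟩ := exists_isRay hG hv h0 hI (n := L) (by omega)
  refine (hp.half_le_card_isNearLevel hG hC hL hv h0 hI).trans
    (Finset.card_le_card_of_injOn p (fun i hi => ?_) fun i hi i' hi' h => ?_)
  · obtain ⟨hi, hnear⟩ := Finset.mem_filter.mp hi
    have hiL := Nat.lt_succ_iff.mp (Finset.mem_range.mp hi)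
    have hreach : Reaches G L ℓ (p 0) (p i) := ⟨p, i, hiL, hp.mono hiL, rfl, rfl⟩
    exact Finset.mem_filter.mpr
      ⟨hG.mem_closedBall.mpr (hreach.dist_le hG.isTree), hreach, hnear⟩
  · have hle {i : ℕ} (hi : i ∈ Finset.range (L + 1)) := Nat.lt_succ_iff.mp (Finset.mem_range.mp hi)
    exact hp.isNonBacktracking.injective hG.isTree (hle (Finset.mem_filter.mp hi).1)
      (hle (Finset.mem_filter.mp hi').1) h

end Rays

/-! ### One stage of the construction -/

section Stage

variable {V Ω : Type*} [MeasurableSpace Ω] {G : SimpleGraph V} {μ : Measure (V → Ω)} {d : ℕ}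

lemma mul_measure_le_sum_measure {X ι : Type*} [MeasurableSpace X] {ν : Measure X} {s : Finset ι}
    {A : ι → X → Prop} [∀ i, DecidablePred (A i)] (hA : ∀ i, MeasurableSet {x | A i x})
    {H : Set X} {c : ℕ}
    (hc : ∀ x ∈ H, c ≤ ({i ∈ s | A i x}).card) : c * ν H ≤ ∑ i ∈ s, ν {x | A i x} := by
  calc c * ν H ≤ c * ν {x | (c : ℝ≥0∞) ≤ ∑ i ∈ s, {x | A i x}.indicator 1 x} := by
        gcongr
        intro x hx
        simp only [Set.mem_ofPred_eq, Set.indicator_apply, Pi.one_apply, Finset.sum_boole]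
        exact_mod_cast hc x hx
    _ ≤ ∫⁻ x, ∑ i ∈ s, {x | A i x}.indicator 1 x ∂ν :=
        mul_meas_ge_le_lintegral (Finset.measurable_fun_sum _ fun i _ =>
          measurable_one.indicator (hA i)) _
    _ = ∑ i ∈ s, ν {x | A i x} := by
        rw [lintegral_finsetSum _ fun i _ => measurable_one.indicator (hA i)]
        simp only [lintegral_indicator_one (hA _)]

namespace IsSeparatingSeed

/-- Mass transport: on `H` the vertex `o` sends mass `1` to at least `c` vertices, and it receives
mass at most `1`, only on `N`. -/
theorem mul_measure_le_of_unique (hμ : IsSeparatingSeed G μ) (hG : IsRegularTree G d)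
    {E : (V → Ω) → V → V → Prop} (hE : ∀ u v, MeasurableSet {x | E x u v})
    (hE' : ∀ (φ : G ≃g G) x u v, E (x ∘ φ.symm) (φ u) (φ v) = E x u v)
    {o : V} (hunique : ∀ x u v, E x u o → E x v o → u = v) {H N : Set (V → Ω)}
    (hN : ∀ x v, E x v o → x ∈ N) {r c : ℕ} [∀ x u, DecidablePred (E x u)]
    (hc : ∀ x ∈ H, c ≤ ({v ∈ closedBall G o r | E x o v}).card) : c * μ H ≤ μ N := by
  calc c * μ H ≤ ∑ v ∈ closedBall G o r, μ {x | E x o v} :=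
        mul_measure_le_sum_measure (A := fun v x => E x o v) (hE o) hc
    _ = ∑ v ∈ closedBall G o r, μ {x | E x v o} :=
        Finset.sum_congr rfl fun v _ => hμ.measure_swap hG hE hE' o v
    _ = μ (⋃ v ∈ closedBall G o r, {x | E x v o}) := by
        refine (measure_biUnion_finset (fun u _ v _ huv => ?_) fun v _ => hE v o).symm
        exact Set.disjoint_left.mpr fun x hu hv => huv (hunique x u v hu hv)
    _ ≤ μ N := measure_mono <| Set.iUnion₂_subset fun v _ x hx => hN x v hx

variable {A : Type*} [MeasurableSpace A] [DiscreteMeasurableSpace A] {f : (V → Ω) → V → A}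

lemma measure_label_eq (hμ : IsSeparatingSeed G μ) (hG : IsRegularTree G d) (hf : Measurable f)
    (hf' : Equivariant G f) (P : A → Prop) (u v : V) :
    μ {x | P (f x u)} = μ {x | P (f x v)} :=
  hμ.measure_eq hG (S := fun x w => P (f x w))
    (fun w => hf.eval (a := w) (.of_discrete (s := {a | P a})))
    (fun φ x w => by simp only [hf' φ x w]) u v

lemma measure_exists_dist_le (hμ : IsSeparatingSeed G μ) (hG : IsRegularTree G d)
    (hf : Measurable f) (hf' : Equivariant G f) (P : A → Prop) (o : V) (r : ℕ) :
    μ {x | ∃ u, P (f x u) ∧ G.dist o u ≤ r} ≤ (d + 1) ^ r * μ {x | P (f x o)} := by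
  have hsub : {x | ∃ u, P (f x u) ∧ G.dist o u ≤ r} ⊆
      ⋃ u ∈ closedBall G o r, {x | P (f x u)} := fun x ⟨u, hu, hd⟩ =>
    Set.mem_biUnion (hG.mem_closedBall.mpr hd) hu
  calc μ {x | ∃ u, P (f x u) ∧ G.dist o u ≤ r} ≤ _ := measure_mono hsub
    _ ≤ ∑ u ∈ closedBall G o r, μ {x | P (f x u)} := measure_biUnion_finset_le _ _
    _ = (closedBall G o r).card * μ {x | P (f x o)} := by
        simp only [fun u => hμ.measure_label_eq hG hf hf' P u o, Finset.sum_const, nsmul_eq_mul]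
    _ ≤ (d + 1) ^ r * μ {x | P (f x o)} := by
        gcongr
        exact_mod_cast hG.card_closedBall_le o r

end IsSeparatingSeed

variable {C j L : ℕ} {f g : (V → Ω) → V → ℕ}

/-- The vertex `v` is an unimprovable hole, and `w` lies on one of its rays, near red of the newest
level: the pairs between which holes are charged to newly red vertices. -/
structure IsCharged (G : SimpleGraph V) (C j L : ℕ) (ℓ : V → ℕ) (v w : V) : Prop where
  eq_four : ℓ v = 4
  not_isImprovable : ¬ (stageSearch C j L).IsImprovable G ℓ v
  reaches : Reaches G L ℓ v w
  isNearLevel : IsNearLevel G (levelGap C j) j ℓ w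

lemma isCharged_comp_symm_iff (hG : IsRegularTree G d) (φ : G ≃g G) {ℓ : V → ℕ} {v w : V} :
    IsCharged G C j L (ℓ ∘ φ.symm) (φ v) (φ w) ↔ IsCharged G C j L ℓ v w := by
  have himp (φ : G ≃g G) (ℓ : V → ℕ) (v w : V) (h : IsCharged G C j L ℓ v w) :
      IsCharged G C j L (ℓ ∘ φ.symm) (φ v) (φ w) := by
    obtain ⟨u, hu, hd⟩ := h.isNearLevel
    exact ⟨by simpa using h.eq_four,
      fun hI => h.not_isImprovable
        ((LocalSearch.equivariant_isImprovable hG φ ℓ v).mp hI),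
      h.reaches.comp_symm φ, φ u, by simpa using hu, by rwa [dist_iso hG.isTree]⟩
  exact ⟨fun h => by simpa [Function.comp_assoc, Function.comp_def] using himp φ.symm _ _ _ h,
    himp φ ℓ v w⟩

lemma measurableSet_isCharged [Countable V] (hG : IsRegularTree G d) (v w : V) :
    MeasurableSet {ℓ : V → ℕ | IsCharged G C j L ℓ v w} := by
  have heq : {ℓ : V → ℕ | IsCharged G C j L ℓ v w} =
      {ℓ | ℓ v = 4} ∩ {ℓ | (stageSearch C j L).IsImprovable G ℓ v}ᶜ ∩ {ℓ | Reaches G L ℓ v w} ∩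
        ⋃ u, {ℓ | ℓ u = j + 5} ∩ {_ℓ | G.dist w u ≤ levelGap C j} := by
    ext ℓ
    simp only [Set.mem_inter_iff, Set.mem_iUnion, Set.mem_compl_iff, Set.mem_ofPred_eq]
    exact ⟨fun h => ⟨⟨⟨h.1, h.2⟩, h.3⟩, h.4⟩, fun h => ⟨h.1.1.1, h.1.1.2, h.1.2, h.2⟩⟩
  have hlabel (u : V) (a : ℕ) : MeasurableSet {ℓ : V → ℕ | ℓ u = a} :=
    measurableSet_eq_fun (measurable_pi_apply u) measurable_const
  rw [heq]
  exact (((hlabel v 4).inter (LocalSearch.measurableSet_isImprovable v).compl).inter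
    (measurableSet_reaches hG.isTree L v w)).inter
    (.iUnion fun u => (hlabel u _).inter (.const _))

theorem mul_measure_unimprovable_hole_le [Countable V] (hμ : IsSeparatingSeed G μ)
    (hG : IsRegularTree G 6) (hC : 112 ≤ C) (hL : 28 * j ≤ L + 1)
    (hg : IsValidFactor G (LevelCompat C) (j + 6) g) (o : V) :
    ((L + 1) / 2 : ℕ) * μ {x | g x o = 4 ∧ ¬ (stageSearch C j L).IsImprovable G (g x) o} ≤
      7 ^ levelGap C j * μ {x | g x o = j + 5} := by
  classical
  have hnear := hμ.measure_exists_dist_le hG hg.measurable hg.equivariant (· = j + 5) o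
    (levelGap C j)
  rw [show ((6 : ℕ) + 1 : ℝ≥0∞) = 7 by norm_num] at hnear
  refine le_trans ?_ hnear
  refine hμ.mul_measure_le_of_unique hG (E := fun x => IsCharged G C j L (g x)) (r := L)
    (fun u v => hg.measurable (measurableSet_isCharged hG u v))
    (fun φ x u v => ?_) (fun x u v hu hv => ?_) (fun x v hv => hv.isNearLevel) fun x hx => ?_
  · rw [hg.equivariant.map_comp_symm]
    exact propext (isCharged_comp_symm_iff hG φ)
  · exact hu.reaches.unique hG (hg.valid x) hu.eq_four hv.eq_four hu.not_isImprovable hv.reaches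
  · refine (half_le_card_reaches hG hC hL (hg.valid x) hx.1 hx.2).trans (Finset.card_le_card ?_)
    exact Finset.monotone_filter_right _ fun w _ hw => ⟨hx.1, hx.2, hw.1, hw.2⟩

lemma lintegral_weight_stageSearch (hf : IsValidFactor G (LevelCompat C) (j + 5) f) (o : V) :
    ∫⁻ x, (stageSearch C j L).weight (f x o) ∂μ = 2 * μ {x | f x o = 4} := by
  have hS : MeasurableSet {x | f x o = 4} := hf.measurable.eval (measurableSet_singleton 4)
  rw [← lintegral_indicator_one hS, ← lintegral_const_mul _ (measurable_one.indicator hS)]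
  congr 1 with x
  have hne : f x o ≠ j + 5 := ((hf.valid x).lt o).ne
  by_cases hx : f x o = 4 <;> simp [stageSearch, hx, hne]

lemma measure_newest_level_le (hg : Measurable g) (o : V) :
    μ {x | g x o = j + 5} ≤ ∫⁻ x, (stageSearch C j L).weight (g x o) ∂μ := by
  have hS : MeasurableSet {x | g x o = j + 5} := hg.eval (measurableSet_singleton _)
  rw [← lintegral_indicator_one hS]
  refine lintegral_mono fun x => ?_
  by_cases hx : g x o = j + 5 <;> simp [stageSearch, hx]

theorem exists_stage [Countable V] [IsFiniteMeasure μ] (hμ : IsSeparatingSeed G μ)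
    (hG : IsRegularTree G 6) (hC : 112 ≤ C) (hL : 28 * j ≤ L + 1)
    (hf : IsValidFactor G (LevelCompat C) (j + 5) f) (o : V) {η : ℝ≥0∞} (hη : η ≠ 0) :
    ∃ g, IsValidFactor G (LevelCompat C) (j + 6) g ∧
      μ {x | f x o ≠ g x o} ≤ (2 * L + 3 : ℕ) * (2 * μ {x | f x o = 4}) ∧
      ((L + 1) / 2 : ℕ) * μ {x | g x o = 4} ≤
        ((L + 1) / 2 : ℕ) * η + 7 ^ levelGap C j * (2 * μ {x | f x o = 4}) := by
  have hf' : IsValidFactor G (stageSearch C j L).compat (stageSearch C j L).alphabet f :=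
    ⟨hf.measurable, hf.equivariant,
      fun x => ⟨(hf.valid x).compat, fun v => ((hf.valid x).lt v).trans (Nat.lt_succ_self _)⟩⟩
  obtain ⟨g, hfg, hgη⟩ :=
    LocalSearch.exists_isImprovement_measure_isImprovable_le hμ hG hf' o hη
  have hg : IsValidFactor G (LevelCompat C) (j + 6) g := hfg.isValidFactor
  have hweight := lintegral_weight_stageSearch (L := L) (μ := μ) hf o
  refine ⟨g, hg, ?_, ?_⟩
  · exact hweight ▸ le_self_add.trans hfg.measure_ne_add_le
  have hred : μ {x | g x o = j + 5} ≤ 2 * μ {x | f x o = 4} :=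
    hweight ▸ (measure_newest_level_le hg.measurable o).trans hfg.weight_le
  have hsub : {x | g x o = 4} ⊆ {x | (stageSearch C j L).IsImprovable G (g x) o} ∪
      {x | g x o = 4 ∧ ¬ (stageSearch C j L).IsImprovable G (g x) o} := fun x hx => by
    by_cases hI : (stageSearch C j L).IsImprovable G (g x) o
    · exact .inl hI
    · exact .inr ⟨hx, hI⟩
  calc _ ≤ ((L + 1) / 2 : ℕ) * (η +
        μ {x | g x o = 4 ∧ ¬ (stageSearch C j L).IsImprovable G (g x) o}) := by
        gcongr
        exact (measure_mono hsub).trans ((measure_union_le _ _).trans (by gcongr))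
    _ ≤ _ := by
        rw [mul_add]
        exact add_le_add_right
          ((mul_measure_unimprovable_hole_le hμ hG hC hL hg o).trans (by gcongr)) _

lemma mul_succ_le_levelGap (C j : ℕ) : C * (j + 1) ≤ levelGap C j :=
  Nat.le_mul_of_pos_right _ (by omega)

theorem exists_stage_pow [Countable V] [IsFiniteMeasure μ] (hμ : IsSeparatingSeed G μ)
    (hG : IsRegularTree G 6) (hC : 112 ≤ C)
    (hf : IsValidFactor G (LevelCompat C) (j + 5) f) (o : V) (K : ℕ) {b : ℝ≥0∞} (hb : b ≠ 0)
    (hfb : μ {x | f x o = 4} ≤ 7 ^ K * b) :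
    ∃ g, IsValidFactor G (LevelCompat C) (j + 6) g ∧ μ {x | g x o = 4} ≤ b ∧
      μ {x | f x o ≠ g x o} ≤ 48 * 7 ^ (levelGap C j + K) * μ {x | f x o = 4} := by
  obtain ⟨M, hM⟩ : ∃ M, M = 7 ^ (levelGap C j + K) := ⟨_, rfl⟩
  have hM' : levelGap C j + K < M := hM ▸ Nat.lt_pow_self (by norm_num)
  obtain ⟨L, hL⟩ : ∃ L, L + 1 = 8 * M := ⟨8 * M - 1, by omega⟩
  have hlevel : 112 * (j + 1) ≤ levelGap C j :=
    (Nat.mul_le_mul_right _ hC).trans (mul_succ_le_levelGap C j)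
  obtain ⟨g, hg, hne, hhole⟩ :=
    exists_stage hμ hG hC (L := L) (by omega) hf o (ENNReal.half_pos hb).ne'
  have hhalf : (L + 1) / 2 = 4 * M := by omega
  have hM0 : (M : ℝ≥0∞) = 7 ^ levelGap C j * 7 ^ K := by rw [hM, pow_add]; push_cast; rfl
  refine ⟨g, hg, ?_, hne.trans ?_⟩
  · rw [hhalf] at hhole
    refine (ENNReal.mul_le_mul_iff_right (Nat.cast_ne_zero.mpr (by omega : 4 * M ≠ 0))
      (ENNReal.natCast_ne_top _)).mp ?_
    calc _ ≤ _ := hhole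
      _ ≤ (4 * M : ℕ) * (b / 2) + 7 ^ levelGap C j * (2 * (7 ^ K * (b / 2 + b / 2))) := by
          rw [ENNReal.add_halves]
          gcongr
      _ = (4 * M : ℕ) * (b / 2 + b / 2) := by push_cast; rw [hM0]; ring
      _ = (4 * M : ℕ) * b := by rw [ENNReal.add_halves]
  · rw [← mul_assoc, pow_add, ← hM0]
    refine mul_le_mul_left ?_ _
    exact_mod_cast (by omega : (2 * L + 3) * 2 ≤ 48 * M)

end Stage

/-! ### The limit of the stages -/

section Limit

variable {V Ω : Type*} [MeasurableSpace Ω] {G : SimpleGraph V} {μ : Measure (V → Ω)} {C : ℕ}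

/-- After stage `j` of the construction, the probability of a hole is at most `7⁻¹` to this
power. -/
def holeExponent (C j : ℕ) : ℕ := 4 * C * (j + 4) ^ 2

lemma holeExponent_mono (C : ℕ) : Monotone (holeExponent C) := fun j k h => by
  unfold holeExponent
  gcongr

lemma le_holeExponent (hC : 112 ≤ C) (j : ℕ) : j ≤ holeExponent C j := by
  have : 4 * 112 * (j + 4) ^ 2 ≤ holeExponent C j := by unfold holeExponent; gcongr
  nlinarith

lemma levelGap_add_le_holeExponent (hC : 112 ≤ C) (j : ℕ) :
    levelGap C (j + 1) + (holeExponent C (j + 1) - holeExponent C j) + j ≤ holeExponent C j := by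
  have h : holeExponent C (j + 1) = holeExponent C j + C * (8 * j + 36) := by
    unfold holeExponent
    ring
  rw [h, Nat.add_sub_cancel_left, levelGap, holeExponent]
  nlinarith [Nat.zero_le (C * j), Nat.zero_le (C * j ^ 2)]

lemma pow_mul_inv_pow_add {a : ℝ≥0∞} (h₀ : a ≠ 0) (h : a ≠ ∞) (m n : ℕ) :
    a ^ m * a⁻¹ ^ (m + n) = a⁻¹ ^ n := by
  rw [pow_add, ← mul_assoc, ← mul_pow, ENNReal.mul_inv_cancel h₀ h, one_pow, one_mul]

lemma isValidFactor_const_four (G : SimpleGraph V) (C : ℕ) :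
    IsValidFactor G (LevelCompat C) 5 fun (_ : V → Ω) _ => 4 where
  measurable := measurable_const
  equivariant _ _ _ := rfl
  valid _ := ⟨fun _ _ _ => ⟨by omega, by omega, by omega⟩, fun _ => by omega⟩

lemma exists_next_stage [Countable V] [IsFiniteMeasure μ] (hμ : IsSeparatingSeed G μ)
    (hG : IsRegularTree G 6) (hC : 112 ≤ C) (o : V) {j : ℕ} {f : (V → Ω) → V → ℕ}
    (hf : IsValidFactor G (LevelCompat C) (j + 6) f)
    (hfj : μ {x | f x o = 4} ≤ 7⁻¹ ^ holeExponent C j) :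
    ∃ g, (IsValidFactor G (LevelCompat C) (j + 1 + 6) g ∧
      μ {x | g x o = 4} ≤ 7⁻¹ ^ holeExponent C (j + 1)) ∧
      μ {x | f x o ≠ g x o} ≤ 48 * 7⁻¹ ^ j := by
  have hinv : (7 : ℝ≥0∞)⁻¹ ≤ 1 := ENNReal.inv_le_one.mpr (by norm_num)
  obtain ⟨K, hK⟩ := Nat.exists_eq_add_of_le (holeExponent_mono C j.le_succ)
  have hcost := levelGap_add_le_holeExponent hC j
  rw [hK, Nat.add_sub_cancel_left] at hcost
  obtain ⟨g, hg, hgb, hne⟩ := exists_stage_pow hμ hG hC (j := j + 1) hf o K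
    (b := 7⁻¹ ^ holeExponent C (j + 1)) (by simp)
    (by rwa [hK, add_comm, pow_mul_inv_pow_add (by simp) (by simp)])
  refine ⟨g, ⟨hg, hgb⟩, hne.trans ?_⟩
  calc 48 * 7 ^ (levelGap C (j + 1) + K) * μ {x | f x o = 4}
      ≤ 48 * (7 ^ (levelGap C (j + 1) + K) * 7⁻¹ ^ (levelGap C (j + 1) + K + j)) := by
        rw [mul_assoc]
        gcongr
        exact hfj.trans (pow_le_pow_right_of_le_one' hinv hcost)
    _ = 48 * 7⁻¹ ^ j := by rw [pow_mul_inv_pow_add (by simp) (by simp)]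

theorem exists_seq_isValidFactor [Countable V] [IsProbabilityMeasure μ]
    (hμ : IsSeparatingSeed G μ) (hG : IsRegularTree G 6) (hC : 112 ≤ C) (o : V) :
    ∃ F : ℕ → (V → Ω) → V → ℕ, (∀ j, IsValidFactor G (LevelCompat C) (j + 6) (F j)) ∧
      (∀ j, μ {x | F j x o = 4} ≤ 7⁻¹ ^ j) ∧
      ∀ j, μ {x | F j x o ≠ F (j + 1) x o} ≤ 48 * 7⁻¹ ^ j := by
  obtain ⟨f₀, hf₀, hf₀b, -⟩ := exists_stage_pow hμ hG hC (j := 0)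
    (isValidFactor_const_four G C) o (holeExponent C 0) (b := 7⁻¹ ^ holeExponent C 0) (by simp)
    (prob_le_one.trans_eq (by
      simpa using (pow_mul_inv_pow_add (a := 7) (by simp) (by simp) (holeExponent C 0) 0).symm))
  let S (j : ℕ) : Type _ := {f : (V → Ω) → V → ℕ //
    IsValidFactor G (LevelCompat C) (j + 6) f ∧ μ {x | f x o = 4} ≤ 7⁻¹ ^ holeExponent C j}
  have hnext (j : ℕ) (f : S j) : ∃ g : S (j + 1), μ {x | f.1 x o ≠ g.1 x o} ≤ 48 * 7⁻¹ ^ j := by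
    obtain ⟨g, hg, hne⟩ := exists_next_stage hμ hG hC o f.2.1 f.2.2
    exact ⟨⟨g, hg⟩, hne⟩
  choose next hnext using hnext
  let F (j : ℕ) : S j := Nat.rec ⟨f₀, hf₀, hf₀b⟩ next j
  refine ⟨fun j => (F j).1, fun j => (F j).2.1, fun j => (F j).2.2.trans ?_,
    fun j => hnext j (F j)⟩
  exact pow_le_pow_right_of_le_one' (ENNReal.inv_le_one.mpr (by norm_num)) (le_holeExponent hC j)

lemma exists_limit_of_tsum_ne_top [Countable V] {F : ℕ → (V → Ω) → V → ℕ}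
    (hF : ∀ n, Measurable (F n)) (hF' : ∀ n, Equivariant G (F n))
    (hsum : ∀ v, ∑' n, μ {x | F n x v ≠ F (n + 1) x v} ≠ ∞) :
    ∃ f : (V → Ω) → V → ℕ, Measurable f ∧ Equivariant G f ∧
      ∀ᵐ x ∂μ, ∀ v, ∀ᶠ n in Filter.atTop, F n x v = f x v := by
  refine ⟨fun x v => Filter.atTop.limUnder fun n => F n x v,
    measurable_pi_lambda _ fun v =>
      (StronglyMeasurable.limUnder fun n => (hF n).eval.stronglyMeasurable).measurable,
    fun φ x v => by simp only [fun n => hF' n φ x v], ae_all_iff.mpr fun v => ?_⟩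
  filter_upwards [ae_eventually_notMem (hsum v)] with x hx
  obtain ⟨N, hN⟩ := Filter.eventually_atTop.mp hx
  obtain ⟨a, ha⟩ := Filter.eventuallyConst_iff_exists_eventuallyEq.mp <|
    Filter.eventuallyConst_atTop_nat (f := fun n => F n x v) |>.mpr
      ⟨N, fun n hn => (not_not.mp (hN n hn)).symm⟩
  rwa [(tendsto_const_nhds.congr' ha.symm).limUnder_eq]

lemma tsum_const_mul_inv_pow_ne_top {a c : ℝ≥0∞} (ha : 1 < a) (hc : c ≠ ∞) :
    ∑' n : ℕ, c * a⁻¹ ^ n ≠ ∞ := by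
  rw [ENNReal.tsum_mul_left, ENNReal.tsum_geometric]
  refine ENNReal.mul_ne_top hc (ENNReal.inv_ne_top.mpr (tsub_pos_of_lt ?_).ne')
  exact ENNReal.inv_lt_one.mpr ha

theorem exists_levelCompat_ne_four [Countable V] [IsProbabilityMeasure μ]
    (hμ : IsSeparatingSeed G μ) (hG : IsRegularTree G 6) (hC : 112 ≤ C) :
    ∃ f : (V → Ω) → V → ℕ, Measurable f ∧ Equivariant G f ∧
      ∀ᵐ x ∂μ, (∀ u v, u ≠ v → LevelCompat C (G.dist u v) (f x u) (f x v)) ∧ ∀ v, f x v ≠ 4 := by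
  obtain ⟨o⟩ := hG.isTree.connected.nonempty
  obtain ⟨F, hF, hhole, hne⟩ := exists_seq_isValidFactor hμ hG hC o
  have hne' (v : V) : ∑' n, μ {x | F n x v ≠ F (n + 1) x v} ≠ ∞ := by
    refine ne_top_of_le_ne_top (tsum_const_mul_inv_pow_ne_top (a := 7) (by norm_num)
      (c := 48) (by simp)) (ENNReal.tsum_le_tsum fun n => ?_)
    refine (hμ.measure_eq hG (S := fun x u => F n x u ≠ F (n + 1) x u) (fun u => ?_)
      (fun φ x u => ?_) v o).trans_le (hne n)
    · exact (measurableSet_eq_fun (hF n).measurable.eval (hF (n + 1)).measurable.eval).compl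
    · simp only [(hF n).equivariant φ x u, (hF (n + 1)).equivariant φ x u]
  have hhole' (v : V) : ∑' n, μ {x | F n x v = 4} ≠ ∞ := by
    refine ne_top_of_le_ne_top (tsum_const_mul_inv_pow_ne_top (a := 7) (by norm_num)
      ENNReal.one_ne_top) (ENNReal.tsum_le_tsum fun n => ?_)
    rw [one_mul]
    exact (hμ.measure_label_eq hG (hF n).measurable (hF n).equivariant (· = 4) v o).trans_le
      (hhole n)
  obtain ⟨f, hf, hf', hlim⟩ := exists_limit_of_tsum_ne_top (fun n => (hF n).measurable)
    (fun n => (hF n).equivariant) hne'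
  have hfilled : ∀ᵐ x ∂μ, ∀ v, ∀ᶠ n in Filter.atTop, F n x v ≠ 4 :=
    ae_all_iff.mpr fun v => ae_eventually_notMem (hhole' v)
  refine ⟨f, hf, hf', ?_⟩
  filter_upwards [hlim, hfilled] with x hx hx4
  refine ⟨fun u v huv => ?_, fun v => ?_⟩
  · obtain ⟨n, hu, hv⟩ := ((hx u).and (hx v)).exists
    exact hu ▸ hv ▸ ((hF n).valid x).compat u v huv
  · obtain ⟨n, hv, hv4⟩ := ((hx v).and (hx4 v)).exists
    exact hv ▸ hv4

end Limit

/-! ### Density and clusters of red vertices -/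

section Density

variable {V Ω : Type*} [MeasurableSpace Ω] {G : SimpleGraph V} {μ : Measure (V → Ω)}
  [IsProbabilityMeasure μ] {d C : ℕ} {f : (V → Ω) → V → ℕ}

lemma IsSeparatingSeed.measure_label_le_inv (hμ : IsSeparatingSeed G μ) (hG : IsRegularTree G d)
    (hd : 2 ≤ d) (hf : Measurable f) (hf' : Equivariant G f) (P : ℕ → Prop) {n : ℕ}
    (hsep : ∀ᵐ x ∂μ, ∀ u v, u ≠ v → P (f x u) → P (f x v) → 2 * n ≤ G.dist u v) (o : V) :
    μ {x | P (f x o)} ≤ (n : ℝ≥0∞)⁻¹ := by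
  obtain _ | r := n
  · simp
  rw [ENNReal.le_inv_iff_mul_le, mul_comm]
  calc ((r + 1 : ℕ) : ℝ≥0∞) * μ {x | P (f x o)}
      ≤ (closedBall G o r).card * μ {x | P (f x o)} := by
        gcongr
        exact hG.lt_card_closedBall hd o r
    _ = ∑ v ∈ closedBall G o r, μ {x | P (f x v)} := by
        simp only [fun v => hμ.measure_label_eq hG hf hf' P v o, Finset.sum_const, nsmul_eq_mul]
    _ ≤ μ Set.univ := by
        refine sum_measure_le_measure_univ (fun v _ =>
          (hf.eval (a := v) (.of_discrete (s := {a | P a}))).nullMeasurableSet) ?_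
        intro u hu v hv huv
        refine measure_mono_null (t := {x | ¬ _}) (fun x hx h => ?_) hsep
        have hdist := h u v huv hx.1 hx.2
        have htri := hG.dist_triangle u o v
        rw [Finset.mem_coe, hG.mem_closedBall] at hu hv
        rw [G.dist_comm] at hu
        omega
    _ = 1 := measure_univ

lemma measure_red_le (hμ : IsSeparatingSeed G μ) (hG : IsRegularTree G d) (hd : 2 ≤ d)
    (hC : 0 < C) (hf : Measurable f) (hf' : Equivariant G f)
    (hfx : ∀ᵐ x ∂μ, (∀ u v, u ≠ v → LevelCompat (2 * C) (G.dist u v) (f x u) (f x v)) ∧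
      ∀ v, f x v ≠ 4) (o : V) : μ {x | 4 ≤ f x o} ≤ ENNReal.ofReal (1 / C) := by
  have hlevel (k : ℕ) : μ {x | f x o = k + 5} ≤
      ENNReal.ofReal (1 / C * (1 / (((k : ℝ) + 1) * (k + 2)))) := by
    refine (hμ.measure_label_le_inv hG hd hf hf' (· = k + 5) (n := C * (k + 1) * (k + 2)) ?_
      o).trans_eq ?_
    · filter_upwards [hfx] with x hx u v huv hu hv
      have h := (hx.1 u v huv).levelGap_le k hu hv
      simpa only [levelGap, mul_assoc] using h
    · rw [one_div_mul_one_div, one_div, ENNReal.ofReal_inv_of_pos (by positivity)]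
      congr 1
      rw [← ENNReal.ofReal_natCast]
      push_cast
      ring_nf
  calc μ {x | 4 ≤ f x o} ≤ μ (⋃ k, {x | f x o = k + 5}) := by
        refine measure_mono_ae ?_
        filter_upwards [hfx] with x hx (hx4 : 4 ≤ f x o)
        have := hx.2 o
        exact Set.mem_iUnion.mpr ⟨f x o - 5, by change f x o = _; omega⟩
    _ ≤ ∑' k, μ {x | f x o = k + 5} := measure_iUnion_le _
    _ ≤ ∑' k : ℕ, ENNReal.ofReal (1 / C * (1 / (((k : ℝ) + 1) * (k + 2)))) :=
        ENNReal.tsum_le_tsum hlevel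
    _ ≤ ENNReal.ofReal (1 / C) := by
        refine ENNReal.tsum_le_of_sum_range_le fun n => ?_
        rw [← ENNReal.ofReal_sum_of_nonneg fun k _ => by positivity, ← Finset.mul_sum,
          sum_range_one_div_succ_mul]
        gcongr
        exact mul_le_of_le_one_right (by positivity) (sub_le_self _ (by positivity))

end Density

lemma finite_supp_of_pairwise_four_le {V : Type*} {G : SimpleGraph V} {d : ℕ}
    (hG : IsRegularTree G d) {R : Set V} (hR : R.Pairwise fun u v => 4 ≤ G.dist u v)
    (c : (G.induce {v | v ∈ R ∨ ∃ u, G.Adj u v ∧ u ∈ R}).ConnectedComponent) : c.supp.Finite := by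
  have hnear (a : {v | v ∈ R ∨ ∃ u, G.Adj u v ∧ u ∈ R}) : ∃ r ∈ R, G.dist r a ≤ 1 := by
    obtain ⟨a, ha | ⟨u, hu, hr⟩⟩ := a
    · exact ⟨a, ha, by simp⟩
    · exact ⟨u, hr, (SimpleGraph.dist_eq_one_iff_adj.mpr hu).le⟩
  obtain ⟨a, rfl⟩ := c.exists_rep
  obtain ⟨r, hr, hra⟩ := hnear a
  have hball (b) (hb : (G.induce _).Reachable a b) : G.dist r b ≤ 1 := by
    obtain ⟨w⟩ := hb
    induction w with
    | nil => exact hra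
    | @cons a b _ hab _ ih =>
      refine ih ?_
      obtain ⟨r', hr', hr'b⟩ := hnear b
      have hab' : G.dist a b = 1 := SimpleGraph.dist_eq_one_iff_adj.mpr hab
      have h₁ := hG.dist_triangle r a b
      have h₂ := hG.dist_triangle r b r'
      rw [G.dist_comm] at hr'b
      by_cases hrr : r = r'
      · rwa [hrr, G.dist_comm]
      · have := hR hr hr' hrr
        omega
  refine ((closedBall G r 1).finite_toSet.preimage Subtype.val_injective.injOn).subset ?_
  intro b hb
  exact hG.mem_closedBall.mpr (hball b (SimpleGraph.ConnectedComponent.eq.mp hb).symm)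

/-- Forgets the levels of red. -/
def forgetLevel (a : ℕ) : Fin 5 := Fin.clamp a 4

lemma forgetLevel_eq_four_iff {a : ℕ} : forgetLevel a = 4 ↔ 4 ≤ a := by
  rw [forgetLevel, Fin.ext_iff, Fin.coe_clamp]
  exact min_eq_right_iff

lemma eq_of_forgetLevel_eq {a b : ℕ} (h : forgetLevel a = forgetLevel b)
    (ha : forgetLevel a ≠ 4) : a = b := by
  rw [ne_eq, forgetLevel_eq_four_iff] at ha
  rw [forgetLevel, forgetLevel, Fin.ext_iff, Fin.coe_clamp, Fin.coe_clamp] at h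
  omega

lemma isRegularTree_of_ncard_neighborSet {V : Type*} {G : SimpleGraph V} {d : ℕ} (hG : G.IsTree)
    (hd : d ≠ 0) (h : ∀ v, (G.neighborSet v).ncard = d) : IsRegularTree G d where
  isTree := hG
  encard_neighborSet v := by
    rw [← Set.Finite.cast_ncard_eq (Set.finite_of_ncard_ne_zero (h v ▸ hd)), h v]

/-- For every ε > 0, the 6-regular tree admits an fiid `Fin 5`-labelling (colors `0,1,2,3`
and "red" `4`) such that (1) each vertex is red with probability less than ε, (2) almost
surely each connected component of the subgraph induced on the 1-ball around the red set is
finite, and (3) almost surely the labelling is proper at every non-red vertex. -/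
theorem fiid_red_labelling_of_T6_with_finite_red_components
    (V : Type) [Countable V] [Infinite V]
    (G : SimpleGraph V) (hconn : G.Connected) (hacyc : G.IsAcyclic)
    (hreg : ∀ v : V, (G.neighborSet v).ncard = 6)
    (μ : Measure (V → ℝ)) [IsProbabilityMeasure μ]
    (hμ : ∀ s : Finset V,
      Measure.map (fun (x : V → ℝ) (v : s) => x v) μ
        = Measure.pi (fun _ : s => volume.restrict (Set.Icc (0:ℝ) 1)))
    (ε : ℝ) (hε : 0 < ε) :
    ∃ f : (V → ℝ) → (V → Fin 5),
      Measurable f ∧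
      (∀ (φ : G ≃g G) (x : V → ℝ) (v : V),
        f (fun u => x (φ.symm u)) v = f x (φ.symm v)) ∧
      (∀ v : V, μ {x | f x v = 4} < ENNReal.ofReal ε) ∧
      (∀ᵐ x ∂μ,
        ∀ c : (G.induce {v : V | f x v = 4 ∨ ∃ u, G.Adj u v ∧ f x u = 4}).ConnectedComponent,
          c.supp.Finite) ∧
      (∀ᵐ x ∂μ, ∀ u v : V, G.Adj u v → f x v ≠ 4 → f x u ≠ f x v) := by
  have hG : IsRegularTree G 6 := isRegularTree_of_ncard_neighborSet ⟨hconn, hacyc⟩ (by simp) hreg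
  have hseed := isSeparatingSeed_of_map_eq_pi G hμ
  obtain ⟨C, hCε, hC⟩ := ((tendsto_one_div_atTop_nhds_zero_nat.eventually_lt_const hε).and
    (Filter.eventually_ge_atTop 112)).exists
  obtain ⟨g, hg, hg', hgx⟩ := exists_levelCompat_ne_four (C := 2 * C) hseed hG (by omega)
  refine ⟨fun x v => forgetLevel (g x v), by fun_prop, fun φ x v => ?_, fun v => ?_, ?_, ?_⟩
  · exact congrArg (fun ℓ => forgetLevel (ℓ v)) (hg'.map_comp_symm φ x)
  · simp only [forgetLevel_eq_four_iff]
    exact (measure_red_le hseed hG (by simp) (by omega) hg hg' hgx v).trans_lt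
      ((ENNReal.ofReal_lt_ofReal_iff hε).mpr hCε)
  · filter_upwards [hgx] with x ⟨hx, hx4⟩
    refine finite_supp_of_pairwise_four_le hG (R := {v | forgetLevel (g x v) = 4}) ?_
    intro u hu v hv huv
    have hu4 := (forgetLevel_eq_four_iff.mp hu).lt_of_ne' (hx4 u)
    have hv4 := (forgetLevel_eq_four_iff.mp hv).lt_of_ne' (hx4 v)
    exact (hx u v huv).four_le hu4 hv4
  · filter_upwards [hgx] with x ⟨hx, _⟩ u v huv hv huv'
    have hgv : g x v < 4 := not_le.mp (mt forgetLevel_eq_four_iff.mpr hv)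
    exact (hx v u huv.ne').color_ne (SimpleGraph.dist_eq_one_iff_adj.mpr huv.symm) hgv
      (eq_of_forgetLevel_eq huv'.symm hv)
end

section
/- There exist R ≥ 0 and a function σ : ℝ → (ℕ × ℕ → ℝ) with σ(0)(6,4) = 1 and σ(0)(t) = 0 for every t ≠ (6,4), such that for every x ∈ [0, R] and every t ∈ T the function x ↦ σ(x)(t) has derivative F_t(σ(x)) at x, and moreover: g(σ(x)) < 0.99999 for every x ∈ [0, R], and Σ_{(d,c) ∈ T} (d − 1)·q_{(d,c)}(σ(R)) < 0.99999. (Numerical proposition for the case (r, p) = (6, 4): the solution of the greedy-coloring ODE stays subcritical until the branching process describing components of the remainder becomes subcritical.) -/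
open Finset

/-- The set of possible types when `p`-coloring the `r`-regular tree:
pairs `(d, c)` with `d ≤ r` uncolored neighbours and `2 ≤ c ≤ p` available colors. -/
def typeSet (r p : ℕ) : Finset (ℕ × ℕ) := Finset.range (r + 1) ×ˢ Finset.Icc 2 p

/-- `q t z`: the normalized degree-biased probability of a type `t`. -/
noncomputable def q (r p : ℕ) (t : ℕ × ℕ) (z : ℕ × ℕ → ℝ) : ℝ :=
  if t ∈ typeSet r p then
    (t.1 : ℝ) * z t / ∑ s ∈ typeSet r p, (s.1 : ℝ) * z s
  else 0

/-- `g z`: the expected growth rate of cascades. -/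
noncomputable def g (r p : ℕ) (z : ℕ × ℕ → ℝ) : ℝ :=
  (2 / (p : ℝ)) * ∑ d ∈ Finset.range (r + 1), ((d : ℝ) - 1) * q r p (d, 2) z

/-- `ΔB t z`: the expected number of vertices of type `t` created along one branch of a
cascade. -/
noncomputable def ΔB (r p : ℕ) (t : ℕ × ℕ) (z : ℕ × ℕ → ℝ) : ℝ :=
  (1 / (1 - g r p z)) *
    (-(q r p t z) + (((t.2 : ℝ) + 1) / (p : ℝ)) * q r p (t.1 + 1, t.2 + 1) z
      + (((p : ℝ) - (t.2 : ℝ)) / (p : ℝ)) * q r p (t.1 + 1, t.2) z)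

/-- `Δ s t z`: the expected change in the number of vertices of type `t` caused by
activating a vertex of type `s`. -/
noncomputable def Δ (r p : ℕ) (s t : ℕ × ℕ) (z : ℕ × ℕ → ℝ) : ℝ :=
  -(if s = t then 1 else 0) + (s.1 : ℝ) * ΔB r p t z

/-- The tuning parameters `p_{(d,c)}`. -/
noncomputable def tune (s : ℕ × ℕ) : ℝ :=
  if s.1 = 1 then (2 : ℝ) ^ (-10 : ℤ) else (2 : ℝ) ^ ((2 : ℤ) - 2 * (s.1 : ℤ))

/-- The vector field of the greedy-coloring ODE, component `t`. -/
noncomputable def Fvec (r p : ℕ) (t : ℕ × ℕ) (z : ℕ × ℕ → ℝ) : ℝ :=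
  ∑ s ∈ typeSet r p, tune s * z s * Δ r p s t z

/-!
Color the neighbors of a vertex one at a time: if each of them receives an independent uniform
color, the law of the number of available colors after `k` of them is `availLaw p k`. The equations
preserve the ansatz that a vertex with `d` uncolored neighbors has `c` available colors with
probability `availLaw p (r - d) c`, because the activation rates depend on `d` only. Under it the
system collapses to a pure-death chain on `d = r, …, 0`, driven at the state-dependent speed
`branchRate / criticalGap`.

This speed is singular where `g = 1`. With the denominator replaced by
`max (criticalGap, degreeMass / 1000)` the field is Lipschitz on the cube `[0, 1] ^ (r + 1)`, also
at the origin, so that solutions exist for all times. For `(r, p) = (6, 4)` the replacement is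
harmless: a first linear barrier, `curvature`, keeps state `3` from being too empty, and thanks to
it a second one keeps `criticalGap` above `degreeMass / 1000`, that is, `g ≤ 1 - 1 / 1000`. Finally,
as the speed is bounded below, the weighted tail `∑ d ≥ 2, 2 ^ d * y d` becomes negligible compared
with `y 1`, whose vertices contribute nothing to the growth of components.
-/

open Function
open scoped NNReal Nat

section Comparison

variable {f f' : ℝ → ℝ} {a b : ℝ}

theorem nonneg_of_deriv_nonneg_of_neg (hf : ∀ x ∈ Set.Icc a b, HasDerivAt f (f' x) x)
    (ha : 0 ≤ f a) (hf' : ∀ x ∈ Set.Icc a b, f x < 0 → 0 ≤ f' x) : ∀ x ∈ Set.Icc a b, 0 ≤ f x := by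
  intro x hx
  refine le_of_forall_pos_le_add fun ε hε => ?_
  have hx0 : 0 < 1 + (x - a) := by linarith [hx.1]
  -- The strict barrier `-ε' * (1 + (y - a))` cannot be reached from above.
  obtain ⟨ε', hε', hεε'⟩ : ∃ ε' > 0, ε' * (1 + (x - a)) = ε :=
    ⟨ε / (1 + (x - a)), by positivity, div_mul_cancel₀ _ hx0.ne'⟩
  have hbound := image_le_of_deriv_right_lt_deriv_boundary (f := fun y => -f y)
    (f' := fun y => -f' y) (B := fun y => ε' * (1 + (y - a))) (B' := fun _ => ε')
    (fun y hy => (hf y hy).continuousAt.neg.continuousWithinAt)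
    (fun y hy => (hf y (Set.Ico_subset_Icc_self hy)).neg.hasDerivWithinAt)
    (by simp only [sub_self]; linarith)
    (fun y => by simpa using (((hasDerivAt_id y).sub_const a).const_add 1).const_mul ε')
    (fun y hy hyε => by
      have hpos : 0 < ε' * (1 + (y - a)) := mul_pos hε' (by linarith [hy.1])
      linarith [hf' y (Set.Ico_subset_Icc_self hy) (by linarith)]) hx
  linarith

theorem exp_mul_le_of_deriv_le {p p' : ℝ → ℝ} {Λ : ℝ} (hΛ : 0 ≤ Λ)
    (hf : ∀ x ∈ Set.Icc 0 b, HasDerivAt f (f' x) x) (hp : ∀ x, HasDerivAt p (p' x) x)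
    (h0 : p 0 ≤ f 0) (hle : ∀ x ∈ Set.Icc 0 b, Real.exp (-Λ * x) * p' x - Λ * f x ≤ f' x) :
    ∀ x ∈ Set.Icc 0 b, Real.exp (-Λ * x) * p x ≤ f x := by
  have hexp (x : ℝ) : HasDerivAt (fun x => Real.exp (-Λ * x)) (Real.exp (-Λ * x) * -Λ) x := by
    simpa using ((hasDerivAt_id x).const_mul (-Λ)).exp
  have hdiff := nonneg_of_deriv_nonneg_of_neg
    (fun x hx => (hf x hx).sub ((hexp x).mul (hp x))) (by simpa using h0) fun x hx hneg => ?_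
  · exact fun x hx => sub_nonneg.1 (hdiff x hx)
  · have : Λ * f x ≤ Λ * (Real.exp (-Λ * x) * p x) :=
      mul_le_mul_of_nonneg_left (sub_neg.1 hneg).le hΛ
    linarith [hle x hx]

end Comparison

theorem exists_forall_hasDerivAt_of_lipschitzWith {E : Type*} [NormedAddCommGroup E]
    [NormedSpace ℝ E] [CompleteSpace E] {f : E → E} {K M : ℝ≥0} (hf : LipschitzWith K f)
    (hM : ∀ y, ‖f y‖ ≤ M) (y₀ : E) {T : ℝ} (hT : 0 ≤ T) :
    ∃ y : ℝ → E, y 0 = y₀ ∧ ∀ x ∈ Set.Icc 0 T, HasDerivAt y (f (y x)) x := by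
  have hPL : IsPicardLindelof (fun _ => f) (⟨0, by constructor <;> linarith⟩ : Set.Icc (-1) (T + 1))
      y₀ (M * (T + 1).toNNReal) 0 M K := by
    refine .of_time_independent (fun y _ => hM y) hf.lipschitzOnWith ?_
    simp [hT]
  obtain ⟨y, hy₀, hy⟩ := hPL.exists_eq_forall_mem_Icc_hasDerivWithinAt₀
  refine ⟨y, hy₀, fun x hx => (hy x ⟨?_, ?_⟩).hasDerivAt (Icc_mem_nhds ?_ ?_)⟩ <;>
    linarith [hx.1, hx.2]

/- Clamping all coordinates to `[0, 1]` makes the field globally Lipschitz and bounded; the solution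
of the clamped equation never leaves the cube, where clamping does nothing. -/
theorem exists_forall_mem_Icc_hasDerivAt {ι : Type*} [Fintype ι] {V : (ι → ℝ) → ι → ℝ} {K : ℝ≥0}
    (hV : LipschitzOnWith K V (Set.Icc 0 1)) (hpos : ∀ z ∈ Set.Icc 0 1, ∀ i, z i = 0 → 0 ≤ V z i)
    (hsum : ∀ z ∈ Set.Icc 0 1, ∑ i, V z i ≤ 0) {y₀ : ι → ℝ} (hy₀ : 0 ≤ y₀) (hy₀_sum : ∑ i, y₀ i ≤ 1)
    {T : ℝ} (hT : 0 ≤ T) :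
    ∃ y : ℝ → ι → ℝ, y 0 = y₀ ∧
      ∀ x ∈ Set.Icc 0 T, y x ∈ Set.Icc 0 1 ∧ HasDerivAt y (V (y x)) x := by
  set clamp : (ι → ℝ) → ι → ℝ := fun z i => Set.projIcc (0 : ℝ) 1 zero_le_one (z i)
  have clamp_mem (z) : clamp z ∈ Set.Icc 0 1 := ⟨fun i => (Set.projIcc 0 1 _ (z i)).2.1,
    fun i => (Set.projIcc 0 1 _ (z i)).2.2⟩
  have clamp_eq {z} (hz : z ∈ Set.Icc 0 1) : clamp z = z :=
    funext fun i => congrArg Subtype.val (Set.projIcc_of_mem zero_le_one ⟨hz.1 i, hz.2 i⟩)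
  have clamp_lip : LipschitzWith 1 clamp := LipschitzWith.of_dist_le_mul fun z w =>
    (dist_pi_le_iff (by positivity)).2 fun i =>
      ((LipschitzWith.projIcc zero_le_one).dist_le_mul (z i) (w i)).trans
        (by gcongr; exact dist_le_pi_dist z w i)
  obtain ⟨M, hM⟩ := isCompact_Icc.exists_bound_of_continuousOn hV.continuousOn
  obtain ⟨y, hy0, hy⟩ := exists_forall_hasDerivAt_of_lipschitzWith (f := V ∘ clamp)
    (lipschitzOnWith_univ.1 (hV.comp clamp_lip.lipschitzOnWith fun z _ => clamp_mem z))
    (fun z => (hM _ (clamp_mem z)).trans (Real.le_coe_toNNReal M)) y₀ hT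
  have hyi (i : ι) : ∀ x ∈ Set.Icc 0 T, HasDerivAt (fun x => y x i) (V (clamp (y x)) i) x :=
    fun x hx => hasDerivAt_pi.1 (hy x hx) i
  have hnonneg (i : ι) : ∀ x ∈ Set.Icc 0 T, 0 ≤ y x i :=
    nonneg_of_deriv_nonneg_of_neg (hyi i) (hy0 ▸ hy₀ i) fun x _ hneg =>
      hpos _ (clamp_mem _) i <| congrArg Subtype.val (Set.projIcc_of_le_left zero_le_one hneg.le)
  have hmass : ∀ x ∈ Set.Icc 0 T, 0 ≤ 1 - ∑ i, y x i :=
    nonneg_of_deriv_nonneg_of_neg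
      (fun x hx => (HasDerivAt.fun_sum fun i _ => hyi i x hx).const_sub 1)
      (by simpa [hy0] using hy₀_sum)
      fun x _ _ => neg_nonneg.2 (hsum _ (clamp_mem _))
  have hmem : ∀ x ∈ Set.Icc 0 T, y x ∈ Set.Icc 0 1 := fun x hx => ⟨fun i => hnonneg i x hx, fun i =>
    (Finset.single_le_sum (fun j _ => hnonneg j x hx) (Finset.mem_univ i)).trans
      (sub_nonneg.1 (hmass x hx))⟩
  refine ⟨y, hy0, fun x hx => ⟨hmem x hx, ?_⟩⟩
  simpa only [comp_apply, clamp_eq (hmem x hx)] using hy x hx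

section Lipschitz

theorem abs_div_le_of_abs_le_mul {a m C : ℝ} (hC : 0 ≤ C) (h : |a| ≤ C * m) : |a / m| ≤ C := by
  rw [abs_div]
  exact div_le_of_le_mul₀ (abs_nonneg m) hC (h.trans (by gcongr; exact le_abs_self m))

theorem div_nonneg_of_le_mul {a m C : ℝ} (hC : 0 ≤ C) (ha : 0 ≤ a) (h : a ≤ C * m) :
    0 ≤ a / m := by
  rcases le_total 0 m with hm | hm
  · exact div_nonneg ha hm
  · simp [le_antisymm (h.trans (mul_nonpos_of_nonneg_of_nonpos hC hm)) ha]

theorem div_mul_cancel_of_abs_le_mul {a m C : ℝ} (h : |a| ≤ C * m) : a / m * m = a :=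
  div_mul_cancel_of_imp fun hm => abs_nonpos_iff.1 (by simpa [hm] using h)

theorem lipschitzOnWith_div_mul {α : Type*} [PseudoMetricSpace α] {s : Set α} {a w m : α → ℝ}
    {Ka Kw Km C : ℝ≥0} (ha : LipschitzWith Ka a) (hw : LipschitzWith Kw w)
    (hm : LipschitzWith Km m) (ham : ∀ x ∈ s, |a x| ≤ C * m x) (hwm : ∀ x ∈ s, |w x| ≤ C * m x) :
    LipschitzOnWith (C * Kw + C * (Ka + C * Km)) (fun x => a x / m x * w x) s := by
  refine LipschitzOnWith.of_dist_le_mul fun x hx y hy => ?_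
  have hα := abs_div_le_of_abs_le_mul C.coe_nonneg (ham x hx)
  have hω := abs_div_le_of_abs_le_mul C.coe_nonneg (hwm y hy)
  have hsplit : a x / m x * w x - a y / m y * w y = a x / m x * (w x - w y) +
      w y / m y * ((a x - a y) - a x / m x * (m x - m y)) := by
    have hax := div_mul_cancel_of_abs_le_mul (ham x hx)
    have hwy := div_mul_cancel_of_abs_le_mul (hwm y hy)
    linear_combination w y / m y * hax - a x / m x * hwy
  calc dist (a x / m x * w x) (a y / m y * w y)
      ≤ |a x / m x| * |w x - w y| + |w y / m y| * (|a x - a y| + |a x / m x| * |m x - m y|) := by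
        rw [Real.dist_eq, hsplit]
        refine (abs_add_le _ _).trans ?_
        rw [abs_mul, abs_mul, ← abs_mul (a x / m x) (m x - m y)]
        gcongr
        exact abs_sub _ _
    _ ≤ C * (Kw * dist x y) + C * (Ka * dist x y + C * (Km * dist x y)) := by
        gcongr
        exacts [hw.dist_le_mul x y, ha.dist_le_mul x y, hm.dist_le_mul x y]
    _ = _ := by push_cast; ring

theorem exists_lipschitzWith_comp_extend {ι η : Type*} [Fintype ι] (ℓ : (η → ℝ) →ₗ[ℝ] ℝ)
    (e : ι → η) : ∃ K, LipschitzWith K fun z : ι → ℝ => ℓ (extend e z 0) :=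
  ⟨_, (ℓ ∘ₗ ExtendByZero.linearMap ℝ e).toContinuousLinearMap.lipschitz⟩

end Lipschitz

section Extend

variable {ι η : Type*} {e : ι → η}

theorem extend_comp_of_forall_eq_zero (he : Injective e) {w : η → ℝ}
    (hw : ∀ b ∉ Set.range e, w b = 0) : extend e (fun i => w (e i)) 0 = w := by
  ext b
  by_cases hb : b ∈ Set.range e
  · obtain ⟨i, rfl⟩ := hb
    exact he.extend_apply (fun i => w (e i)) 0 i
  · rw [extend_apply' _ _ _ hb, hw b hb, Pi.zero_apply]

theorem extend_mem_Icc_zero_one (he : Injective e) {z : ι → ℝ}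
    (hz : z ∈ Set.Icc 0 1) :
    (extend e z 0 : η → ℝ) ∈ Set.Icc 0 1 := by
  refine ⟨extend_nonneg hz.1 le_rfl, fun b => ?_⟩
  by_cases hb : b ∈ Set.range e
  · obtain ⟨i, rfl⟩ := hb
    exact (he.extend_apply z 0 i).trans_le (hz.2 i)
  · exact (extend_apply' z (0 : η → ℝ) b hb).trans_le zero_le_one

theorem hasDerivAt_extend (he : Injective e) {y : ℝ → ι → ℝ} {y' : ι → ℝ} {x : ℝ}
    (hy : HasDerivAt y y' x) : HasDerivAt (fun x => extend e (y x) 0) (extend e y' 0) x := by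
  refine hasDerivAt_pi.2 fun b => ?_
  by_cases hb : b ∈ Set.range e
  · obtain ⟨i, rfl⟩ := hb
    simpa only [he.extend_apply] using hasDerivAt_pi.1 hy i
  · simpa only [extend_apply' _ _ _ hb, Pi.zero_apply] using hasDerivAt_const x (0 : ℝ)

theorem extend_val_of_le {n : ℕ} (z : Fin n → ℝ) {d : ℕ} (hd : n ≤ d) :
    extend Fin.val z 0 d = 0 :=
  extend_apply' (f := Fin.val) z 0 d fun ⟨i, hi⟩ => (hi ▸ i.is_lt).not_ge hd

end Extend

section DeathChain

/-- The linear functional `y ↦ ∑ d ∈ s, c d * y d` on states of the death chain. -/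
noncomputable def weightedSum (s : Finset ℕ) (c : ℕ → ℝ) : (ℕ → ℝ) →ₗ[ℝ] ℝ :=
  ∑ d ∈ s, c d • LinearMap.proj d

theorem weightedSum_apply (s : Finset ℕ) (c y : ℕ → ℝ) :
    weightedSum s c y = ∑ d ∈ s, c d * y d := by
  simp [weightedSum]

theorem weightedSum_nonneg {s : Finset ℕ} {c y : ℕ → ℝ} (hc : ∀ d ∈ s, 0 ≤ c d) (hy : 0 ≤ y) :
    0 ≤ weightedSum s c y := by
  rw [weightedSum_apply]
  exact sum_nonneg fun d hd => mul_nonneg (hc d hd) (hy d)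

/-- The drift of a linear pure-death process: each individual in state `d` moves to state `d - 1`
at rate `d`. It describes how vertices lose their uncolored neighbors one at a time. -/
def deathDrift (y : ℕ → ℝ) (d : ℕ) : ℝ := (d + 1) * y (d + 1) - d * y d

/-- The vector field of the pure-death process run at speed `v`, with the mass in state `d` lost at
rate `a d`. -/
def deathField (a : ℕ → ℝ) (v : ℝ) (y : ℕ → ℝ) : ℕ → ℝ := v • deathDrift y - a * y

/-- `y` is the state on `[0, T]` of a pure-death chain that starts from one unit of mass in state
`r`, runs at the time-dependent speed `ρ`, and loses the mass in state `d` at rate `a d`. All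
states `d : ℕ` are present, those above `r` being empty. -/
structure IsDeathChain (r : ℕ) (a : ℕ → ℝ) (ρ : ℝ → ℝ) (T : ℝ) (y : ℝ → ℕ → ℝ) : Prop where
  initial : y 0 = Pi.single r 1
  eq_zero : ∀ x d, r < d → y x d = 0
  mem_Icc : ∀ x ∈ Set.Icc 0 T, y x ∈ Set.Icc 0 1
  hasDerivAt : ∀ x ∈ Set.Icc 0 T, HasDerivAt y (deathField a (ρ x) (y x)) x

theorem sum_deathDrift (y : ℕ → ℝ) (n : ℕ) :
    ∑ d ∈ range n, deathDrift y d = n * y n := by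
  simpa [deathDrift] using sum_range_sub (fun d => (d : ℝ) * y d) n

theorem deathField_nonneg_of_eq_zero {a y : ℕ → ℝ} {v : ℝ} (hv : 0 ≤ v) (hy : 0 ≤ y) {d : ℕ}
    (hd : y d = 0) : 0 ≤ deathField a v y d := by
  have hinflow := mul_nonneg hv (mul_nonneg d.cast_add_one_pos.le (hy (d + 1)))
  simpa [deathField, deathDrift, hd] using hinflow

theorem sum_deathField_nonpos {a y : ℕ → ℝ} (ha : 0 ≤ a) (hy : 0 ≤ y) {n : ℕ} (hn : y n = 0)
    (v : ℝ) : ∑ d ∈ range n, deathField a v y d ≤ 0 := by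
  simp only [deathField, Pi.sub_apply, Pi.smul_apply, smul_eq_mul, Pi.mul_apply, sum_sub_distrib,
    ← mul_sum, sum_deathDrift, hn, mul_zero, zero_sub, Left.neg_nonpos_iff]
  exact sum_nonneg fun d _ => mul_nonneg (ha d) (hy d)

theorem abs_deathDrift_le {y : ℕ → ℝ} (hy : 0 ≤ y) {d : ℕ} {B : ℝ} (h : d * y d ≤ B)
    (h' : (d + 1) * y (d + 1) ≤ B) : |deathDrift y d| ≤ B :=
  abs_sub_le_of_nonneg_of_le (mul_nonneg (by positivity) (hy _)) h'
    (mul_nonneg (by positivity) (hy _)) h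

theorem exists_lipschitzOnWith_of_forall_apply {α ι : Type*} [PseudoMetricSpace α] [Fintype ι]
    {f : α → ι → ℝ} {s : Set α} (h : ∀ i, ∃ K, LipschitzOnWith K (fun x => f x i) s) :
    ∃ K, LipschitzOnWith K f s := by
  choose K hK using h
  refine ⟨univ.sup K, LipschitzOnWith.of_dist_le_mul fun x hx y hy => ?_⟩
  refine (dist_pi_le_iff (by positivity)).2 fun i => ((hK i).dist_le_mul x hx y hy).trans ?_
  gcongr
  exact le_sup (mem_univ i)

/- The right-hand side is Lipschitz although the speed `A / m` is not: it is a product of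
`A / m` with functions that vanish where `m` does. -/
theorem exists_lipschitzOnWith_deathField {r : ℕ} (a : ℕ → ℝ) (A : (ℕ → ℝ) →ₗ[ℝ] ℝ)
    {m : (ℕ → ℝ) → ℝ} {Km C : ℝ≥0}
    (hm : LipschitzWith Km fun z : Fin (r + 1) → ℝ => m (extend Fin.val z 0))
    (hA : ∀ y, 0 ≤ y → |A y| ≤ C * m y) (hD : ∀ y, 0 ≤ y → ∀ d ≤ r, d * y d ≤ C * m y) :
    ∃ K, LipschitzOnWith K (fun (z : Fin (r + 1) → ℝ) (i : Fin (r + 1)) =>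
      deathField a (A (extend Fin.val z 0) / m (extend Fin.val z 0)) (extend Fin.val z 0) i)
      (Set.Icc 0 1) := by
  refine exists_lipschitzOnWith_of_forall_apply fun i => ?_
  obtain ⟨KA, hKA⟩ := exists_lipschitzWith_comp_extend A (Fin.val : Fin (r + 1) → ℕ)
  obtain ⟨Kw, hKw⟩ := exists_lipschitzWith_comp_extend
    (((i : ℝ) + 1) • LinearMap.proj (i + 1 : ℕ) - (i : ℝ) • LinearMap.proj (i : ℕ))
    (Fin.val : Fin (r + 1) → ℕ)
  obtain ⟨Ka, hKa⟩ := exists_lipschitzWith_comp_extend (a i • LinearMap.proj (i : ℕ))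
    (Fin.val : Fin (r + 1) → ℕ)
  have hext : ∀ z ∈ Set.Icc (0 : Fin (r + 1) → ℝ) 1, 0 ≤ extend Fin.val z 0 := fun z hz =>
    extend_nonneg hz.1 le_rfl
  have hdrift : ∀ z ∈ Set.Icc (0 : Fin (r + 1) → ℝ) 1,
      |deathDrift (extend Fin.val z 0) i| ≤ C * m (extend Fin.val z 0) := fun z hz => by
    refine abs_deathDrift_le (hext z hz) (hD _ (hext z hz) i i.is_le) ?_
    rcases i.is_le.lt_or_eq with hi | hi
    · exact mod_cast hD _ (hext z hz) (i + 1) hi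
    · rw [hi, extend_val_of_le z le_rfl, mul_zero]
      exact (abs_nonneg _).trans (hA _ (hext z hz))
  exact ⟨_, (lipschitzOnWith_div_mul hKA hKw hm (fun z hz => hA _ (hext z hz)) hdrift).sub
    hKa.lipschitzOnWith⟩

theorem exists_isDeathChain {r : ℕ} {a : ℕ → ℝ} (ha : 0 ≤ a) (A : (ℕ → ℝ) →ₗ[ℝ] ℝ)
    {m : (ℕ → ℝ) → ℝ} {Km C : ℝ≥0}
    (hm : LipschitzWith Km fun z : Fin (r + 1) → ℝ => m (extend Fin.val z 0))
    (hA : ∀ y, 0 ≤ y → 0 ≤ A y ∧ A y ≤ C * m y)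
    (hD : ∀ y, 0 ≤ y → ∀ d ≤ r, d * y d ≤ C * m y) {T : ℝ} (hT : 0 ≤ T) :
    ∃ y, IsDeathChain r a (fun x => A (y x) / m (y x)) T y := by
  obtain ⟨K, hK⟩ := exists_lipschitzOnWith_deathField a A hm
    (fun y hy => (abs_of_nonneg (hA y hy).1).trans_le (hA y hy).2) hD
  have hext {z : Fin (r + 1) → ℝ} (hz : z ∈ Set.Icc 0 1) : 0 ≤ extend Fin.val z 0 :=
    extend_nonneg hz.1 le_rfl
  have hspeed {y : ℕ → ℝ} (hy : 0 ≤ y) : 0 ≤ A y / m y :=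
    div_nonneg_of_le_mul C.coe_nonneg (hA y hy).1 (hA y hy).2
  have hinit : (0 : ℕ → ℝ) ≤ Pi.single r 1 := Pi.single_nonneg.2 zero_le_one
  obtain ⟨y, hy0, hy⟩ := exists_forall_mem_Icc_hasDerivAt hK
    (fun z hz i hi => deathField_nonneg_of_eq_zero (hspeed (hext hz)) (hext hz)
      (by rw [Fin.val_injective.extend_apply, hi]))
    (fun z hz => by
      rw [Fin.sum_univ_eq_sum_range (deathField a _ (extend Fin.val z 0))]
      exact sum_deathField_nonpos ha (hext hz) (extend_val_of_le z le_rfl) _)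
    (y₀ := fun i => (Pi.single r 1 : ℕ → ℝ) i) (fun i => hinit i)
    (by
      rw [Fin.sum_univ_eq_sum_range (Pi.single r 1 : ℕ → ℝ), sum_pi_single']
      simp) hT
  have hlt {d : ℕ} (hd : d ∉ Set.range (Fin.val : Fin (r + 1) → ℕ)) : r < d := by
    simpa [Fin.range_val] using hd
  refine ⟨fun x => extend Fin.val (y x) 0, ?_, fun x d hd => extend_val_of_le _ hd,
    fun x hx => extend_mem_Icc_zero_one Fin.val_injective (hy x hx).1, fun x hx => ?_⟩
  · rw [hy0]
    exact extend_comp_of_forall_eq_zero Fin.val_injective fun d hd =>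
      Pi.single_eq_of_ne (hlt hd).ne' 1
  · convert hasDerivAt_extend Fin.val_injective (hy x hx).2 using 1
    refine (extend_comp_of_forall_eq_zero Fin.val_injective fun d hd => ?_).symm
    have hd : r + 1 ≤ d := hlt hd
    simp [deathField, deathDrift, extend_val_of_le _ hd, extend_val_of_le _ (hd.trans d.le_succ)]

namespace IsDeathChain

variable {r : ℕ} {a : ℕ → ℝ} {ρ : ℝ → ℝ} {T : ℝ} {y : ℝ → ℕ → ℝ}

theorem nonneg (hy : IsDeathChain r a ρ T y) {x : ℝ} (hx : x ∈ Set.Icc 0 T) : 0 ≤ y x :=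
  (hy.mem_Icc x hx).1

theorem hasDerivAt_apply (hy : IsDeathChain r a ρ T y) {x : ℝ} (hx : x ∈ Set.Icc 0 T) (d : ℕ) :
    HasDerivAt (fun x => y x d) (deathField a (ρ x) (y x) d) x :=
  hasDerivAt_pi.1 (hy.hasDerivAt x hx) d

theorem hasDerivAt_weightedSum (hy : IsDeathChain r a ρ T y) {x : ℝ} (hx : x ∈ Set.Icc 0 T)
    (s : Finset ℕ) (c : ℕ → ℝ) :
    HasDerivAt (fun x => weightedSum s c (y x)) (weightedSum s c (deathField a (ρ x) (y x))) x := by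
  simp only [weightedSum_apply]
  exact HasDerivAt.fun_sum fun d _ => (hy.hasDerivAt_apply hx d).const_mul (c d)

/- The mass in state `r - k` is at least that of a Poisson process of rate `κ` after `k` jumps, with
all the losses bounded by `Λ`. -/
theorem exp_mul_pow_div_factorial_le (hy : IsDeathChain r a ρ T y) {Λ κ : ℝ} (hκ : 0 ≤ κ)
    (hκρ : ∀ x ∈ Set.Icc 0 T, κ ≤ ρ x) (hΛ : 0 ≤ Λ)
    (hrate : ∀ x ∈ Set.Icc 0 T, ∀ d ≤ r, a d + d * ρ x ≤ Λ) {k d : ℕ} (hdk : d + k = r) :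
    ∀ x ∈ Set.Icc 0 T, Real.exp (-Λ * x) * ((κ * x) ^ k / k !) ≤ y x d := by
  have hloss {x} (hx : x ∈ Set.Icc 0 T) {d : ℕ} (hd : d ≤ r) :
      κ * y x (d + 1) - Λ * y x d ≤ deathField a (ρ x) (y x) d := by
    have hin : κ * y x (d + 1) ≤ ρ x * ((d + 1) * y x (d + 1)) := by
      have hy1 := hy.nonneg hx (d + 1)
      have : y x (d + 1) ≤ (d + 1) * y x (d + 1) := le_mul_of_one_le_left hy1 (by simp)
      exact mul_le_mul (hκρ x hx) this hy1 (hκ.trans (hκρ x hx))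
    have hout := mul_le_mul_of_nonneg_right (hrate x hx d hd) (hy.nonneg hx d)
    simp only [deathField, deathDrift, Pi.sub_apply, Pi.smul_apply, smul_eq_mul, Pi.mul_apply]
    linarith
  induction k generalizing d with
  | zero =>
    refine exp_mul_le_of_deriv_le (p := fun x => (κ * x) ^ 0 / (0 : ℕ) !) (p' := 0) hΛ
      (fun x hx => hy.hasDerivAt_apply hx d) (by simp [hasDerivAt_const]) ?_ fun x hx => ?_
    · simp [hy.initial, ← hdk]
    · have := mul_nonneg hκ (hy.nonneg hx (d + 1))
      simpa using (by linarith [hloss hx (d := d) (by omega)] :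
        - (Λ * y x d) ≤ deathField a (ρ x) (y x) d)
  | succ k ih =>
    refine exp_mul_le_of_deriv_le (p := fun x => (κ * x) ^ (k + 1) / (k + 1) !)
      (p' := fun x => κ * ((κ * x) ^ k / k !)) hΛ
      (fun x hx => hy.hasDerivAt_apply hx d) (fun x => ?_) ?_ fun x hx => ?_
    · convert! (((hasDerivAt_id x).const_mul κ).pow (k + 1)).div_const ((k + 1)! : ℝ) using 1
      simp only [id, Nat.factorial_succ]
      push_cast
      field_simp
    · simp [hy.initial, show d ≠ r by omega]
    · have := mul_le_mul_of_nonneg_left (ih (d := d + 1) (by omega) x hx) hκ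
      linarith [hloss hx (d := d) (by omega)]

theorem pos_last (hy : IsDeathChain r a ρ T y) {Λ : ℝ} (hρ : ∀ x ∈ Set.Icc 0 T, 0 ≤ ρ x)
    (hΛ : 0 ≤ Λ) (hrate : ∀ x ∈ Set.Icc 0 T, ∀ d ≤ r, a d + d * ρ x ≤ Λ) {x : ℝ}
    (hx : x ∈ Set.Icc 0 T) : 0 < y x r := by
  have := hy.exp_mul_pow_div_factorial_le le_rfl hρ hΛ hrate (add_zero r) x hx
  simp only [pow_zero, Nat.factorial_zero, Nat.cast_one, div_one, mul_one] at this
  exact (Real.exp_pos _).trans_le this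

end IsDeathChain

theorem weightedSum_two_pow_deathDrift_le {y : ℕ → ℝ} (hy : 0 ≤ y) {n : ℕ} (hn : 2 ≤ n) :
    weightedSum (Icc 2 n) (2 ^ ·) (deathDrift y) ≤
      -(3 / 2) * weightedSum (Icc 2 n) (2 ^ ·) y + 2 ^ n * ((n + 1) * y (n + 1)) := by
  simp only [weightedSum_apply, deathDrift]
  induction n, hn using Nat.le_induction with
  | base =>
    simp only [Icc_self, sum_singleton, Nat.cast_ofNat]
    have : 0 ≤ y 2 := hy 2
    linarith
  | succ n hn ih =>
    have hn' : (2 : ℝ) ≤ n := mod_cast hn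
    have hflux : 0 ≤ ((n : ℝ) - 2) * (2 ^ n * y (n + 1)) :=
      mul_nonneg (by linarith) (mul_nonneg (by positivity) (hy _))
    rw [sum_Icc_succ_top (by omega), sum_Icc_succ_top (by omega)]
    push_cast
    rw [pow_succ]
    linarith

namespace IsDeathChain

variable {r : ℕ} {a : ℕ → ℝ} {ρ : ℝ → ℝ} {T : ℝ} {y : ℝ → ℕ → ℝ}

theorem weightedSum_two_pow_deathField_le (hy : IsDeathChain r a ρ T y) (hr : 2 ≤ r)
    (ha : ∀ d ∈ Icc 2 r, a 1 ≤ a d) {x : ℝ} (hx : x ∈ Set.Icc 0 T) (hρ : 0 ≤ ρ x) :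
    weightedSum (Icc 2 r) (2 ^ ·) (deathField a (ρ x) (y x)) ≤
      -(3 / 2 * ρ x + a 1) * weightedSum (Icc 2 r) (2 ^ ·) (y x) := by
  have hdrift := weightedSum_two_pow_deathDrift_le (hy.nonneg hx) hr
  rw [hy.eq_zero x (r + 1) r.lt_succ_self, mul_zero, mul_zero, add_zero] at hdrift
  have hloss : a 1 * weightedSum (Icc 2 r) (2 ^ ·) (y x) ≤
      weightedSum (Icc 2 r) (2 ^ ·) (a * y x) := by
    simp only [weightedSum_apply, Pi.mul_apply, mul_sum]
    refine sum_le_sum fun d hd => ?_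
    rw [mul_left_comm]
    exact mul_le_mul_of_nonneg_left (mul_le_mul_of_nonneg_right (ha d hd) (hy.nonneg hx d))
      (by positivity)
  rw [deathField, map_sub, map_smul, smul_eq_mul]
  linarith [mul_le_mul_of_nonneg_left hdrift hρ]

/- The tail decays at rate at least `3 / 2 * ρ + a 1`, and `y 1` at rate at most `ρ + a 1`. -/
theorem weightedSum_two_pow_le (hy : IsDeathChain r a ρ T y) (hr : 2 ≤ r) (ha₁ : 0 ≤ a 1)
    (ha : ∀ d ∈ Icc 2 r, a 1 ≤ a d) {κ C x₀ : ℝ} (hκ : 0 ≤ κ) (hκρ : ∀ x ∈ Set.Icc 0 T, κ ≤ ρ x)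
    (hC : 0 ≤ C) (hx₀ : 0 ≤ x₀) (h₀ : weightedSum (Icc 2 r) (2 ^ ·) (y x₀) ≤ C * y x₀ 1) :
    ∀ x ∈ Set.Icc x₀ T, weightedSum (Icc 2 r) (2 ^ ·) (y x) ≤
      C * Real.exp (-(κ / 2) * (x - x₀)) * y x 1 := by
  have hsub {x} (hx : x ∈ Set.Icc x₀ T) : x ∈ Set.Icc 0 T := ⟨hx₀.trans hx.1, hx.2⟩
  have hexp (x : ℝ) : HasDerivAt (fun x => C * Real.exp (-(κ / 2) * (x - x₀)))
      (C * (Real.exp (-(κ / 2) * (x - x₀)) * -(κ / 2))) x := by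
    simpa using ((((hasDerivAt_id x).sub_const x₀).const_mul (-(κ / 2))).exp).const_mul C
  have hdiff := nonneg_of_deriv_nonneg_of_neg (fun x hx =>
    ((hexp x).mul (hy.hasDerivAt_apply (hsub hx) 1)).sub
      (hy.hasDerivAt_weightedSum (hsub hx) (Icc 2 r) (2 ^ ·))) (by simpa using h₀)
    fun x hx hneg => ?_
  · exact fun x hx => sub_nonneg.1 (hdiff x hx)
  have hρκ := hκρ x (hsub hx)
  have hρ : 0 ≤ ρ x := hκ.trans hρκ
  have htail := hy.weightedSum_two_pow_deathField_le hr ha (hsub hx) hρ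
  set W := weightedSum (Icc 2 r) (2 ^ ·) (y x)
  set E := C * Real.exp (-(κ / 2) * (x - x₀)) with hE
  have hE0 : 0 ≤ E := by positivity
  have hEW : (3 / 2 * ρ x + a 1) * (E * y x 1) ≤ (3 / 2 * ρ x + a 1) * W :=
    mul_le_mul_of_nonneg_left (sub_neg.1 hneg).le (by positivity)
  have hslack : 0 ≤ (ρ x - κ) * (E * y x 1) :=
    mul_nonneg (sub_nonneg.2 hρκ) (mul_nonneg hE0 (hy.nonneg (hsub hx) 1))
  have hinflow : 0 ≤ E * ρ x * y x 2 :=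
    mul_nonneg (mul_nonneg hE0 hρ) (hy.nonneg (hsub hx) 2)
  simp only [deathField, deathDrift, Pi.sub_apply, Pi.smul_apply, smul_eq_mul, Pi.mul_apply,
    Nat.cast_one, one_mul, one_add_one_eq_two] at htail ⊢
  rw [← mul_assoc C, ← hE]
  linarith

theorem weightedSum_le_sum (hy : IsDeathChain r a ρ T y) {x : ℝ} (hx : x ∈ Set.Icc 0 T)
    {s : Finset ℕ} {c : ℕ → ℝ} (hc : ∀ d ∈ s, 0 ≤ c d) : weightedSum s c (y x) ≤ ∑ d ∈ s, c d := by
  rw [weightedSum_apply]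
  exact sum_le_sum fun d hd => mul_le_of_le_one_right (hc d hd) ((hy.mem_Icc x hx).2 d)

end IsDeathChain

theorem exists_forall_weightedSum_two_pow_le {r : ℕ} (hr : 2 ≤ r) {a : ℕ → ℝ} (ha₁ : 0 ≤ a 1)
    (ha : ∀ d ∈ Icc 2 r, a 1 ≤ a d) {κ Λ ε : ℝ} (hκ : 0 < κ) (hΛ : 0 ≤ Λ) (hε : 0 < ε) :
    ∃ T, 0 ≤ T ∧ ∀ ρ y, IsDeathChain r a ρ T y → (∀ x ∈ Set.Icc 0 T, κ ≤ ρ x) →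
      (∀ x ∈ Set.Icc 0 T, ∀ d ≤ r, a d + d * ρ x ≤ Λ) →
      weightedSum (Icc 2 r) (2 ^ ·) (y T) ≤ ε * y T 1 := by
  set m := Real.exp (-Λ * 1) * ((κ * 1) ^ (r - 1) / (r - 1)!)
  have hm : 0 < m := by positivity
  set C := (∑ d ∈ Icc 2 r, (2 : ℝ) ^ d) / m
  have hC : 0 ≤ C := by positivity
  have hT : 1 ≤ 1 + 2 / κ * (C / ε) := le_add_of_nonneg_right (by positivity)
  refine ⟨_, zero_le_one.trans hT, fun ρ y hy hκρ hrate => ?_⟩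
  have h1 : (1 : ℝ) ∈ Set.Icc 0 (1 + 2 / κ * (C / ε)) := ⟨zero_le_one, hT⟩
  have hstart : weightedSum (Icc 2 r) (2 ^ ·) (y 1) ≤ C * y 1 1 :=
    calc weightedSum (Icc 2 r) (2 ^ ·) (y 1)
        ≤ ∑ d ∈ Icc 2 r, (2 : ℝ) ^ d := hy.weightedSum_le_sum h1 fun d _ => by positivity
      _ = C * m := (div_mul_cancel₀ _ hm.ne').symm
      _ ≤ C * y 1 1 := by
        gcongr
        exact hy.exp_mul_pow_div_factorial_le hκ.le hκρ hΛ hrate (by omega) 1 h1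
  have hdecay : C * Real.exp (-(κ / 2) * (2 / κ * (C / ε))) ≤ ε := by
    have hexponent : -(κ / 2) * (2 / κ * (C / ε)) = -(C / ε) := by field_simp
    rw [hexponent, Real.exp_neg, ← div_eq_mul_inv, div_le_iff₀ (Real.exp_pos _), ← div_le_iff₀' hε]
    linarith [Real.add_one_le_exp (C / ε)]
  refine (hy.weightedSum_two_pow_le hr ha₁ ha hκ.le hκρ hC zero_le_one hstart _ ⟨hT, le_rfl⟩).trans
    (mul_le_mul_of_nonneg_right ?_ (hy.nonneg ⟨zero_le_one.trans hT, le_rfl⟩ 1))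
  rwa [add_sub_cancel_left]

end DeathChain

section TuneRate

/-- The tuning parameter of a type with `d` uncolored neighbors, which does not depend on the number
of available colors. -/
noncomputable def tuneRate (d : ℕ) : ℝ := tune (d, 0)

theorem tuneRate_of_ne_one {d : ℕ} (hd : d ≠ 1) : tuneRate d = 4 / 4 ^ d := by
  rw [tuneRate, tune, if_neg hd, zpow_sub₀ two_ne_zero, zpow_mul]
  norm_num

theorem tuneRate_one : tuneRate 1 = 1 / 1024 := by
  norm_num [tuneRate, tune]

theorem tuneRate_nonneg : 0 ≤ tuneRate := fun d => by
  rcases eq_or_ne d 1 with rfl | hd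
  · norm_num [tuneRate_one]
  · rw [tuneRate_of_ne_one hd]
    positivity

theorem tuneRate_le (d : ℕ) : tuneRate d ≤ 4 := by
  rcases eq_or_ne d 1 with rfl | hd
  · norm_num [tuneRate_one]
  · rw [tuneRate_of_ne_one hd]
    exact div_le_self zero_le_four (one_le_pow₀ (by norm_num))

theorem tuneRate_le_of_pos {d : ℕ} (hd : 0 < d) : tuneRate d ≤ 1 / 4 := by
  rcases eq_or_ne d 1 with rfl | hd1
  · norm_num [tuneRate_one]
  · rw [tuneRate_of_ne_one hd1, div_le_iff₀ (by positivity)]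
    have : (4 : ℝ) ^ 2 ≤ 4 ^ d := pow_le_pow_right₀ (by norm_num) (by omega)
    linarith

theorem le_tuneRate {d : ℕ} (hd : d ≤ 6) : 1 / 1024 ≤ tuneRate d := by
  rcases eq_or_ne d 1 with rfl | hd1
  · rw [tuneRate_one]
  · rw [tuneRate_of_ne_one hd1, le_div_iff₀ (by positivity)]
    have : (4 : ℝ) ^ d ≤ 4 ^ 6 := pow_le_pow_right₀ (by norm_num) hd
    linarith

end TuneRate

section Lift

/-- The law of the number `c` of colors out of `p` still available at a vertex after `k` of its
neighbors have received independent uniform colors. -/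
noncomputable def availLaw (p : ℕ) : ℕ → ℕ → ℝ
  | 0, c => if c = p then 1 else 0
  | k + 1, c => ((c + 1) / p) * availLaw p k (c + 1) + ((p - c) / p) * availLaw p k c

/-- The probability that at least two colors are still available after `k` neighbors have been
colored. -/
noncomputable def liveProb (p k : ℕ) : ℝ := ∑ c ∈ Icc 2 p, availLaw p k c

/-- The state of the greedy-coloring ODE in which a proportion `y d` of the vertices has `d`
uncolored neighbors, with available colors distributed as if the other `r - d` neighbors had been
colored independently and uniformly. -/
noncomputable def liftState (r p : ℕ) (y : ℕ → ℝ) (t : ℕ × ℕ) : ℝ :=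
  availLaw p (r - t.1) t.2 * y t.1

/-- The normalization of `q` at `liftState r p y`. -/
noncomputable def degreeMass (r p : ℕ) : (ℕ → ℝ) →ₗ[ℝ] ℝ :=
  weightedSum (range (r + 1)) fun d => d * liveProb p (r - d)

/-- The total rate at which activated vertices create cascade branches at `liftState r p y`. -/
noncomputable def branchRate (r p : ℕ) : (ℕ → ℝ) →ₗ[ℝ] ℝ :=
  weightedSum (range (r + 1)) fun d => tuneRate d * d * liveProb p (r - d)

/-- `1 - g` multiplied by the normalization of `q`, so that cascades are subcritical where this
functional is positive. -/
noncomputable def criticalGap (r p : ℕ) : (ℕ → ℝ) →ₗ[ℝ] ℝ :=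
  weightedSum (range (r + 1)) fun d =>
    d * liveProb p (r - d) - 2 / p * ((d - 1) * d * availLaw p (r - d) 2)

/-- The growth rate of the components of the remainder multiplied by the normalization of `q`. -/
noncomputable def componentGrowth (r p : ℕ) : (ℕ → ℝ) →ₗ[ℝ] ℝ :=
  weightedSum (range (r + 1)) fun d => (d - 1) * d * liveProb p (r - d)

theorem availLaw_of_lt {p k c : ℕ} (hc : p < c) : availLaw p k c = 0 := by
  induction k generalizing c with
  | zero => simp [availLaw, hc.ne']
  | succ k ih => simp [availLaw, ih hc, ih (hc.trans c.lt_succ_self)]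

theorem availLaw_nonneg (p k c : ℕ) : 0 ≤ availLaw p k c := by
  induction k generalizing c with
  | zero => unfold availLaw; positivity
  | succ k ih =>
    rcases le_or_gt c p with hc | hc
    · have : (0 : ℝ) ≤ p - c := sub_nonneg.2 (mod_cast hc)
      exact add_nonneg (mul_nonneg (by positivity) (ih _)) (mul_nonneg (by positivity) (ih _))
    · exact (availLaw_of_lt hc).ge

theorem liveProb_nonneg (p k : ℕ) : 0 ≤ liveProb p k :=
  sum_nonneg fun c _ => availLaw_nonneg p k c

variable {r p : ℕ} {y : ℕ → ℝ}

theorem degreeMass_nonneg (hy : 0 ≤ y) : 0 ≤ degreeMass r p y :=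
  weightedSum_nonneg (fun d _ => mul_nonneg d.cast_nonneg (liveProb_nonneg p _)) hy

theorem branchRate_eq_degreeMass (r p : ℕ) (y : ℕ → ℝ) :
    branchRate r p y = degreeMass r p (tuneRate * y) := by
  simp only [branchRate, degreeMass, weightedSum_apply, Pi.mul_apply]
  exact sum_congr rfl fun d _ => by ring

theorem degreeMass_mono {y' : ℕ → ℝ} (h : ∀ d ≤ r, d * y d ≤ d * y' d) :
    degreeMass r p y ≤ degreeMass r p y' := by
  simp only [degreeMass, weightedSum_apply]
  refine sum_le_sum fun d hd => ?_
  linarith [mul_le_mul_of_nonneg_left (h d (mem_range_succ_iff.1 hd)) (liveProb_nonneg p (r - d))]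

theorem branchRate_nonneg (hy : 0 ≤ y) : 0 ≤ branchRate r p y := by
  rw [branchRate_eq_degreeMass]
  exact degreeMass_nonneg (mul_nonneg tuneRate_nonneg hy)

theorem branchRate_le_mul_degreeMass (hy : 0 ≤ y) :
    branchRate r p y ≤ 1 / 4 * degreeMass r p y := by
  rw [branchRate_eq_degreeMass, ← smul_eq_mul (1 / 4 : ℝ), ← map_smul]
  refine degreeMass_mono fun d _ => ?_
  rcases d.eq_zero_or_pos with rfl | hd
  · simp
  · exact mul_le_mul_of_nonneg_left (mul_le_mul_of_nonneg_right (tuneRate_le_of_pos hd) (hy d))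
      d.cast_nonneg

theorem mul_degreeMass_le_branchRate (hr : r ≤ 6) (hy : 0 ≤ y) :
    1 / 1024 * degreeMass r p y ≤ branchRate r p y := by
  rw [branchRate_eq_degreeMass, ← smul_eq_mul, ← map_smul]
  exact degreeMass_mono fun d hd => mul_le_mul_of_nonneg_left
    (mul_le_mul_of_nonneg_right (le_tuneRate (hd.trans hr)) (hy d)) d.cast_nonneg

theorem criticalGap_le_degreeMass (hy : 0 ≤ y) : criticalGap r p y ≤ degreeMass r p y := by
  simp only [criticalGap, degreeMass, weightedSum_apply]
  refine sum_le_sum fun d _ => mul_le_mul_of_nonneg_right (sub_le_self _ ?_) (hy d)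
  have hd : (0 : ℝ) ≤ (d - 1) * d := by
    rcases d.eq_zero_or_pos with rfl | hd
    · simp
    · exact mul_nonneg (sub_nonneg.2 (mod_cast hd)) d.cast_nonneg
  have := availLaw_nonneg p (r - d) 2
  positivity

theorem liftState_single (t : ℕ × ℕ) :
    liftState r p (Pi.single r 1) t = if t = (r, p) then 1 else 0 := by
  rcases t with ⟨d, c⟩
  rcases eq_or_ne d r with rfl | hd
  · simp [liftState, availLaw]
  · simp [liftState, hd]

theorem sum_typeSet_mul_liftState (w : ℕ → ℝ) :
    ∑ t ∈ typeSet r p, w t.1 * liftState r p y t =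
      weightedSum (range (r + 1)) (fun d => w d * liveProb p (r - d)) y := by
  simp only [typeSet, sum_product, weightedSum_apply, liftState, liveProb, mul_sum, sum_mul,
    mul_assoc]

theorem q_liftState (hy : ∀ d, r < d → y d = 0) {d c : ℕ} (hc : 2 ≤ c) :
    q r p (d, c) (liftState r p y) = availLaw p (r - d) c * (d * y d) / degreeMass r p y := by
  rw [q, sum_typeSet_mul_liftState fun d => d, degreeMass, liftState]
  split_ifs with h
  · ring
  · simp only [typeSet, mem_product, mem_range, mem_Icc, not_and_or, not_le, not_lt] at h
    rcases h with h | h | h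
    · simp [hy d h]
    · omega
    · simp [availLaw_of_lt h]

theorem one_sub_g_liftState (hy : ∀ d, r < d → y d = 0) (hD : degreeMass r p y ≠ 0) :
    1 - g r p (liftState r p y) = criticalGap r p y / degreeMass r p y := by
  have hgap : criticalGap r p y = degreeMass r p y -
      2 / p * ∑ d ∈ range (r + 1), ((d : ℝ) - 1) * (availLaw p (r - d) 2 * (d * y d)) := by
    simp only [criticalGap, degreeMass, weightedSum_apply, mul_sum, ← sum_sub_distrib]
    exact sum_congr rfl fun d _ => by ring
  rw [hgap, sub_div, div_self hD, g, mul_div_assoc, sum_div]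
  simp only [q_liftState hy le_rfl, mul_div_assoc]

theorem sum_typeSet_mul_q_liftState :
    ∑ t ∈ typeSet r p, ((t.1 : ℝ) - 1) * q r p t (liftState r p y) =
      componentGrowth r p y / degreeMass r p y := by
  rw [componentGrowth, degreeMass, ← sum_typeSet_mul_liftState fun d => ((d : ℝ) - 1) * d,
    ← sum_typeSet_mul_liftState fun d => d, sum_div]
  refine sum_congr rfl fun t ht => ?_
  rw [q, if_pos ht]
  ring

/- An uncolored neighbor lost by a type with `d + 1` of them hits one of the available colors
exactly as in the recursion that defines `availLaw`. -/
theorem ΔB_liftState (hy : ∀ d, r < d → y d = 0) (hD : degreeMass r p y ≠ 0) {d c : ℕ}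
    (hd : d ≤ r) (hc : 2 ≤ c) :
    ΔB r p (d, c) (liftState r p y) =
      availLaw p (r - d) c * deathDrift y d / criticalGap r p y := by
  have hinflow : (c + 1) / p * availLaw p (r - (d + 1)) (c + 1) * y (d + 1) +
      (p - c) / p * availLaw p (r - (d + 1)) c * y (d + 1) =
        availLaw p (r - d) c * y (d + 1) := by
    rcases hd.lt_or_eq with hd | rfl
    · rw [show r - d = r - (d + 1) + 1 by omega, availLaw]
      ring
    · simp [hy (d + 1) d.lt_succ_self]
  rw [ΔB, one_sub_g_liftState hy hD, q_liftState hy hc, q_liftState hy (by omega),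
    q_liftState hy hc, deathDrift, one_div_div]
  push_cast
  rw [div_mul_eq_mul_div]
  congr 1
  field_simp
  linear_combination (d + 1 : ℝ) * hinflow

theorem Fvec_liftState (hy : ∀ d, r < d → y d = 0) (hD : degreeMass r p y ≠ 0) {d c : ℕ}
    (ht : (d, c) ∈ typeSet r p) :
    Fvec r p (d, c) (liftState r p y) = availLaw p (r - d) c *
      deathField tuneRate (branchRate r p y / criticalGap r p y) y d := by
  have hdc : d < r + 1 ∧ 2 ≤ c ∧ c ≤ p := by simpa [typeSet] using ht
  have hbranch : ∑ s ∈ typeSet r p, tune s * liftState r p y s * s.1 = branchRate r p y := by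
    rw [branchRate, ← sum_typeSet_mul_liftState fun d => tuneRate d * d]
    exact sum_congr rfl fun s _ => mul_right_comm _ _ _
  simp only [Fvec, Δ, mul_add, sum_add_distrib, mul_neg, mul_ite, mul_one, mul_zero, ← mul_assoc,
    ← sum_mul, sum_neg_distrib, sum_ite_eq', if_pos ht, hbranch,
    ΔB_liftState hy hD (Nat.lt_succ_iff.1 hdc.1) hdc.2.1]
  simp only [deathField, Pi.sub_apply, Pi.smul_apply, smul_eq_mul, Pi.mul_apply, liftState]
  have htune : tune (d, c) = tuneRate d := rfl
  rw [htune]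
  ring

end Lift

section SixFour

variable {y : ℕ → ℝ}

theorem degreeMass_six_four : degreeMass 6 4 y =
    23 / 128 * y 1 + 11 / 16 * y 2 + 15 / 8 * y 3 + 4 * y 4 + 5 * y 5 + 6 * y 6 := by
  simp only [degreeMass, weightedSum_apply, sum_range_succ, range_zero, sum_empty, liveProb,
    show Icc 2 4 = ({2, 3, 4} : Finset ℕ) from rfl]
  norm_num [availLaw]

theorem criticalGap_six_four : criticalGap 6 4 y =
    23 / 128 * y 1 + 23 / 64 * y 2 + 3 / 16 * y 3 - 1 / 2 * y 4 + 5 * y 5 + 6 * y 6 := by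
  simp only [criticalGap, weightedSum_apply, sum_range_succ, range_zero, sum_empty, liveProb,
    show Icc 2 4 = ({2, 3, 4} : Finset ℕ) from rfl]
  norm_num [availLaw]
  ring

theorem componentGrowth_six_four : componentGrowth 6 4 y =
    11 / 16 * y 2 + 15 / 4 * y 3 + 12 * y 4 + 20 * y 5 + 30 * y 6 := by
  simp only [componentGrowth, weightedSum_apply, sum_range_succ, range_zero, sum_empty, liveProb,
    show Icc 2 4 = ({2, 3, 4} : Finset ℕ) from rfl]
  norm_num [availLaw]

/-- A positive substitute for `criticalGap 6 4`, with which it agrees as long as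
`g ≤ 1 - 1 / 1000`. -/
noncomputable def safeGap (y : ℕ → ℝ) : ℝ := max (criticalGap 6 4 y) (degreeMass 6 4 y / 1000)

/-- The speed of the death chain that drives the solution for `(r, p) = (6, 4)`. -/
noncomputable def greedySpeed (y : ℕ → ℝ) : ℝ := branchRate 6 4 y / safeGap y

theorem exists_lipschitzWith_safeGap_extend :
    ∃ K, LipschitzWith K fun z : Fin 7 → ℝ => safeGap (extend Fin.val z 0) := by
  obtain ⟨K₁, h₁⟩ := exists_lipschitzWith_comp_extend (criticalGap 6 4) (Fin.val : Fin 7 → ℕ)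
  obtain ⟨K₂, h₂⟩ := exists_lipschitzWith_comp_extend ((1000 : ℝ)⁻¹ • degreeMass 6 4)
    (Fin.val : Fin 7 → ℕ)
  have hmax := h₁.max h₂
  simp only [LinearMap.smul_apply, smul_eq_mul, inv_mul_eq_div] at hmax
  exact ⟨_, hmax⟩

theorem mul_apply_le_mul_degreeMass (hy : 0 ≤ y) {d : ℕ} (hd : d ≤ 6) :
    d * y d ≤ 6 * degreeMass 6 4 y := by
  have hy' (d : ℕ) : 0 ≤ y d := hy d
  rw [degreeMass_six_four]
  interval_cases d <;> push_cast <;>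
    linarith [hy' 1, hy' 2, hy' 3, hy' 4, hy' 5, hy' 6]

theorem degreeMass_le_mul_safeGap (y : ℕ → ℝ) : degreeMass 6 4 y ≤ 1000 * safeGap y :=
  (div_le_iff₀' (by norm_num)).1 (le_max_right _ _)

theorem safeGap_nonneg (hy : 0 ≤ y) : 0 ≤ safeGap y :=
  le_max_of_le_right (div_nonneg (degreeMass_nonneg hy) (by norm_num))

theorem safeGap_le_degreeMass (hy : 0 ≤ y) : safeGap y ≤ degreeMass 6 4 y :=
  max_le (criticalGap_le_degreeMass hy) (div_le_self (degreeMass_nonneg hy) (by norm_num))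

theorem greedySpeed_nonneg (hy : 0 ≤ y) : 0 ≤ greedySpeed y :=
  div_nonneg (branchRate_nonneg hy) (safeGap_nonneg hy)

theorem greedySpeed_le (hy : 0 ≤ y) : greedySpeed y ≤ 250 :=
  div_le_of_le_mul₀ (safeGap_nonneg hy) (by norm_num)
    (by linarith [branchRate_le_mul_degreeMass (r := 6) (p := 4) hy, degreeMass_le_mul_safeGap y])

theorem le_greedySpeed (hy : 0 ≤ y) (hD : 0 < degreeMass 6 4 y) : 1 / 1024 ≤ greedySpeed y := by
  have hm : 0 < safeGap y := by linarith [degreeMass_le_mul_safeGap y]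
  rw [greedySpeed, le_div_iff₀ hm]
  linarith [mul_degreeMass_le_branchRate (p := 4) le_rfl hy, safeGap_le_degreeMass hy]

theorem tuneRate_add_mul_greedySpeed_le (hy : 0 ≤ y) {d : ℕ} (hd : d ≤ 6) :
    tuneRate d + d * greedySpeed y ≤ 1504 := by
  have : d * greedySpeed y ≤ 6 * 250 :=
    mul_le_mul (mod_cast hd) (greedySpeed_le hy) (greedySpeed_nonneg hy) (by norm_num)
  linarith [tuneRate_le d]

/-- The death chain that drives the solution for `(r, p) = (6, 4)` on `[0, T]`. -/
abbrev IsGreedyChain (T : ℝ) (y : ℝ → ℕ → ℝ) : Prop :=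
  IsDeathChain 6 tuneRate (fun x => greedySpeed (y x)) T y

theorem exists_isGreedyChain {T : ℝ} (hT : 0 ≤ T) : ∃ y, IsGreedyChain T y := by
  obtain ⟨_, hLip⟩ := exists_lipschitzWith_safeGap_extend
  refine exists_isDeathChain (C := 6000) tuneRate_nonneg (branchRate 6 4) hLip
    (fun y hy => ⟨branchRate_nonneg hy, ?_⟩) (fun y hy d hd => ?_) hT
  · have hrate : branchRate 6 4 y ≤ _ := branchRate_le_mul_degreeMass hy
    norm_num
    linarith [degreeMass_le_mul_safeGap y, safeGap_nonneg hy]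
  · norm_num
    linarith [mul_apply_le_mul_degreeMass hy hd, degreeMass_le_mul_safeGap y]

/-- A linear functional whose nonnegativity says that state `3` is not too empty relative to state
`4`. The coefficients are chosen so that it cannot become negative, while its nonnegativity implies
the inequality `degreeMass_div_le_gapExcess_deathDrift`. -/
noncomputable def curvature (y : ℕ → ℝ) : ℝ := y 3 - 1 / 20 * y 4 + 1 / 4 * y 5

theorem curvature_deathField_nonneg (hy : 0 ≤ y) {v : ℝ} (hv : 1 / 1024 ≤ v)
    (hneg : curvature y < 0) : 0 ≤ curvature (deathField tuneRate v y) := by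
  have hy' (d : ℕ) : 0 ≤ y d := hy d
  simp only [curvature, deathField, deathDrift, Pi.sub_apply, Pi.smul_apply, Pi.mul_apply,
    smul_eq_mul, tuneRate_of_ne_one (show 3 ≠ 1 by decide),
    tuneRate_of_ne_one (show 4 ≠ 1 by decide), tuneRate_of_ne_one (show 5 ≠ 1 by decide)] at hneg ⊢
  norm_num
  have hdrift : 39 / 10 * y 4 ≤ 4 * y 4 - 3 * y 3 - 1 / 20 * (5 * y 5 - 4 * y 4) +
      1 / 4 * (6 * y 6 - 5 * y 5) := by linarith [hy' 3, hy' 5, hy' 6]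
  have hspeed := (mul_le_mul_of_nonneg_right hv (by linarith [hy' 4])).trans
    (mul_le_mul_of_nonneg_left hdrift (by linarith))
  linarith [hy' 3, hy' 4, hy' 5]

/-- The amount by which `criticalGap` exceeds the threshold in `safeGap`. -/
noncomputable def gapExcess : (ℕ → ℝ) →ₗ[ℝ] ℝ := criticalGap 6 4 - (1000 : ℝ)⁻¹ • degreeMass 6 4

theorem gapExcess_apply (y : ℕ → ℝ) :
    gapExcess y = criticalGap 6 4 y - degreeMass 6 4 y / 1000 := by
  simp [gapExcess, inv_mul_eq_div]

theorem degreeMass_div_le_gapExcess_deathDrift (hy : 0 ≤ y) (hcurv : 0 ≤ curvature y)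
    (hneg : gapExcess y < 0) : degreeMass 6 4 y / 1000 ≤ gapExcess (deathDrift y) := by
  have hy' (d : ℕ) : 0 ≤ y d := hy d
  simp only [curvature, gapExcess_apply, criticalGap_six_four, degreeMass_six_four, deathDrift]
    at hcurv hneg ⊢
  norm_num
  linarith [hy' 1, hy' 2, hy' 3, hy' 4, hy' 5, hy' 6, hy' 7]

theorem gapExcess_tuneRate_mul_le_branchRate (hy : 0 ≤ y) :
    gapExcess (tuneRate * y) ≤ branchRate 6 4 y := by
  have hty := mul_nonneg tuneRate_nonneg hy
  have hgap : criticalGap 6 4 (tuneRate * y) ≤ _ := criticalGap_le_degreeMass hty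
  have hmass : 0 ≤ degreeMass 6 4 (tuneRate * y) := degreeMass_nonneg hty
  rw [gapExcess_apply, branchRate_eq_degreeMass]
  linarith

/- Below the threshold `greedySpeed y * (degreeMass 6 4 y / 1000) = branchRate 6 4 y`, so that the
drift compensates the losses. -/
theorem gapExcess_deathField_nonneg (hy : 0 ≤ y) (hD : 0 < degreeMass 6 4 y)
    (hcurv : 0 ≤ curvature y) (hneg : gapExcess y < 0) :
    0 ≤ gapExcess (deathField tuneRate (greedySpeed y) y) := by
  have hgap : safeGap y = degreeMass 6 4 y / 1000 :=
    max_eq_right (sub_neg.1 (gapExcess_apply y ▸ hneg)).le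
  have hspeed : greedySpeed y * (degreeMass 6 4 y / 1000) = branchRate 6 4 y := by
    rw [greedySpeed, hgap]
    exact div_mul_cancel₀ _ (by positivity)
  have hdrift := mul_le_mul_of_nonneg_left (degreeMass_div_le_gapExcess_deathDrift hy hcurv hneg)
    (greedySpeed_nonneg hy)
  rw [deathField, map_sub, map_smul, smul_eq_mul]
  linarith [gapExcess_tuneRate_mul_le_branchRate hy]

theorem componentGrowth_lt (hy : 0 ≤ y) (hy₆ : 0 < y 6)
    (htail : weightedSum (Icc 2 6) (2 ^ ·) y ≤ 1 / 10 * y 1) :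
    componentGrowth 6 4 y < 0.99999 * degreeMass 6 4 y := by
  have hy' (d : ℕ) : 0 ≤ y d := hy d
  rw [weightedSum_apply, show Icc 2 6 = ({2, 3, 4, 5, 6} : Finset ℕ) from rfl] at htail
  norm_num at htail
  rw [componentGrowth_six_four, degreeMass_six_four]
  norm_num
  linarith [hy' 1, hy' 2, hy' 3, hy' 4, hy' 5]

namespace IsGreedyChain

variable {T : ℝ} {y : ℝ → ℕ → ℝ}

theorem apply_six_pos (hy : IsGreedyChain T y) {x : ℝ}
    (hx : x ∈ Set.Icc 0 T) : 0 < y x 6 :=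
  hy.pos_last (fun _ hx => greedySpeed_nonneg (hy.nonneg hx)) (by norm_num)
    (fun _ hx _ hd => tuneRate_add_mul_greedySpeed_le (hy.nonneg hx) hd) hx

theorem degreeMass_pos (hy : IsGreedyChain T y) {x : ℝ}
    (hx : x ∈ Set.Icc 0 T) : 0 < degreeMass 6 4 (y x) := by
  have := mul_apply_le_mul_degreeMass (hy.nonneg hx) le_rfl
  push_cast at this
  linarith [hy.apply_six_pos hx]

theorem curvature_nonneg (hy : IsGreedyChain T y) :
    ∀ x ∈ Set.Icc 0 T, 0 ≤ curvature (y x) :=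
  nonneg_of_deriv_nonneg_of_neg (fun x hx =>
      ((hy.hasDerivAt_apply hx 3).sub ((hy.hasDerivAt_apply hx 4).const_mul _)).add
        ((hy.hasDerivAt_apply hx 5).const_mul _))
    (by simp [curvature, hy.initial])
    fun x hx hneg => curvature_deathField_nonneg (hy.nonneg hx)
      (le_greedySpeed (hy.nonneg hx) (hy.degreeMass_pos hx)) hneg

theorem gapExcess_nonneg (hy : IsGreedyChain T y) :
    ∀ x ∈ Set.Icc 0 T, 0 ≤ gapExcess (y x) :=
  nonneg_of_deriv_nonneg_of_neg
    (f' := fun x => gapExcess (deathField tuneRate (greedySpeed (y x)) (y x)))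
    (fun x hx => by
      simp only [gapExcess_apply]
      exact (hy.hasDerivAt_weightedSum hx _ _).sub
        ((hy.hasDerivAt_weightedSum hx _ _).div_const 1000))
    (by norm_num [gapExcess_apply, criticalGap_six_four, degreeMass_six_four, hy.initial])
    fun x hx hneg => gapExcess_deathField_nonneg (hy.nonneg hx) (hy.degreeMass_pos hx)
      (hy.curvature_nonneg x hx) hneg

theorem greedySpeed_eq (hy : IsGreedyChain T y) {x : ℝ}
    (hx : x ∈ Set.Icc 0 T) :
    greedySpeed (y x) = branchRate 6 4 (y x) / criticalGap 6 4 (y x) := by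
  have h := hy.gapExcess_nonneg x hx
  rw [gapExcess_apply, sub_nonneg] at h
  rw [greedySpeed, safeGap, max_eq_left h]

theorem hasDerivAt_liftState (hy : IsGreedyChain T y) {x : ℝ}
    (hx : x ∈ Set.Icc 0 T) {t : ℕ × ℕ} (ht : t ∈ typeSet 6 4) :
    HasDerivAt (fun x => liftState 6 4 (y x) t) (Fvec 6 4 t (liftState 6 4 (y x))) x := by
  rw [Fvec_liftState (hy.eq_zero x) (hy.degreeMass_pos hx).ne' ht, ← hy.greedySpeed_eq hx]
  exact (hy.hasDerivAt_apply hx t.1).const_mul _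

theorem g_liftState_le (hy : IsGreedyChain T y) {x : ℝ}
    (hx : x ∈ Set.Icc 0 T) : g 6 4 (liftState 6 4 (y x)) ≤ 1 - 1 / 1000 := by
  have hD := hy.degreeMass_pos hx
  have h := hy.gapExcess_nonneg x hx
  rw [gapExcess_apply, sub_nonneg] at h
  have hg : 1 / 1000 ≤ 1 - g 6 4 (liftState 6 4 (y x)) := by
    rw [one_sub_g_liftState (hy.eq_zero x) hD.ne', le_div_iff₀ hD]
    linarith
  linarith

end IsGreedyChain

theorem exists_isGreedyChain_componentGrowth_lt :
    ∃ T y, 0 ≤ T ∧ IsGreedyChain T y ∧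
      componentGrowth 6 4 (y T) < 0.99999 * degreeMass 6 4 (y T) := by
  obtain ⟨T, hT, htail⟩ := exists_forall_weightedSum_two_pow_le (r := 6) (a := tuneRate)
    (κ := 1 / 1024) (Λ := 1504) (ε := 1 / 10) (by norm_num) (tuneRate_nonneg 1)
    (fun d hd => tuneRate_one.trans_le (le_tuneRate (mem_Icc.1 hd).2)) (by norm_num) (by norm_num)
    (by norm_num)
  obtain ⟨y, hy⟩ := exists_isGreedyChain hT
  have hTT : T ∈ Set.Icc 0 T := ⟨hT, le_rfl⟩
  refine ⟨T, y, hT, hy, componentGrowth_lt (hy.nonneg hTT) (hy.apply_six_pos hTT) ?_⟩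
  exact htail _ y hy
    (fun x hx => le_greedySpeed (hy.nonneg hx) (hy.degreeMass_pos hx))
    fun x hx d hd => tuneRate_add_mul_greedySpeed_le (hy.nonneg hx) hd

end SixFour

/-- **Numerical computation** for `(r, p) = (6, 4)`: the solution of the greedy-coloring
ODE started from the pure type `(6, 4)` stays subcritical (`g < 0.99999`) up to a time
`R` at which the branching process describing components of the remainder graph is also
subcritical. -/
theorem numerical_computation_T6 :
    ∃ (R : ℝ) (σ : ℝ → ℕ × ℕ → ℝ), 0 ≤ R ∧
      σ 0 (6, 4) = 1 ∧
      (∀ t : ℕ × ℕ, t ≠ (6, 4) → σ 0 t = 0) ∧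
      (∀ x ∈ Set.Icc (0 : ℝ) R, ∀ t ∈ typeSet 6 4,
        HasDerivAt (fun y => σ y t) (Fvec 6 4 t (σ x)) x) ∧
      (∀ x ∈ Set.Icc (0 : ℝ) R, g 6 4 (σ x) < 0.99999) ∧
      (∑ t ∈ typeSet 6 4, ((t.1 : ℝ) - 1) * q 6 4 t (σ R)) < 0.99999 := by
  obtain ⟨T, y, hT, hy, hgrowth⟩ := exists_isGreedyChain_componentGrowth_lt
  refine ⟨T, fun x => liftState 6 4 (y x), hT, ?_, fun t ht => ?_,
    fun x hx t ht => hy.hasDerivAt_liftState hx ht,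
    fun x hx => (hy.g_liftState_le hx).trans_lt (by norm_num), ?_⟩
  · simp [hy.initial, liftState_single]
  · simp [hy.initial, liftState_single, ht]
  · rw [sum_typeSet_mul_q_liftState, div_lt_iff₀ (hy.degreeMass_pos ⟨hT, le_rfl⟩)]
    exact hgrowth
end
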